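/- arXiv:1007.1575 — 2 statements merged into one kernel-verified Lean document; each statement's English description precedes it below -/
import Mathlib

section
/- Let I ⊂ ℝ be an interval containing 0 and let t ↦ B_t be a C¹-smooth (in operator norm) path of bounded self-adjoint operators on H. Assume that for each t ∈ I there are nonempty closed sets ω_t, Ω_t ⊂ ℝ with spectrum(B_t) = ω_t ∪ Ω_t and dist(ω_t, Ω_t) > 0, that the families {ω_t}_{t∈I} and {Ω_t}_{t∈I} are upper semicontinuous on I, and that for each t ∈ I, P_t is the spectral projection of B_t associated with ω_t. Then for all t ∈ I with t ≥ 0: arcsin(‖P_t − P_0‖) ≤ (π/2) ∫_0^t ‖B'_τ‖ / dist(ω_τ, Ω_τ) dτ. -/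
open ContinuousLinearMap

/-- The spectral projection of a bounded self-adjoint operator `B` associated with a part `ω`
of its spectrum that is separated from the rest: it is obtained by applying the continuous
functional calculus to the indicator function of `ω`. It is the unique orthogonal projection
commuting with `B` such that the spectrum of the restriction of `B` to its range is contained
in `ω` and the spectrum of the restriction of `B` to its kernel is contained in the complement
part. -/
noncomputable def spectralProj {H : Type*} [NormedAddCommGroup H] [InnerProductSpace ℂ H]
    [CompleteSpace H] (B : H →L[ℂ] H) (ω : Set ℝ) : H →L[ℂ] H :=
  cfc (Set.indicator ω (fun _ => (1:ℝ))) B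

/-- The distance `dist(s,t) = inf{|x − y| : x ∈ s, y ∈ t}` between two sets of reals. -/
noncomputable def setDist (s t : Set ℝ) : ℝ :=
  sInf (Set.image2 dist s t)

/-- A family of sets `{ω_t}_{t ∈ I}` is upper semicontinuous on `I` if for every `t ∈ I` and
`ε > 0` there is `δ > 0` such that `sup_{λ ∈ ω_s} dist(λ, ω_t) < ε` (i.e. `ω_s` is contained
in the open `ε`-neighborhood of `ω_t`) whenever `s ∈ I` and `|s − t| < δ`. -/
def UpperSemicontinuousFamilyOn (ω : ℝ → Set ℝ) (I : Set ℝ) : Prop :=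
  ∀ t ∈ I, ∀ ε > (0:ℝ), ∃ δ > (0:ℝ), ∀ s ∈ I, |s - t| < δ →
    ω s ⊆ Metric.thickening ε (ω t)


section
open MeasureTheory Set Filter Topology

lemma aux_exp_cos_integrable (x a : ℝ) (hx : 0 < x) :
    IntegrableOn (fun t : ℝ => Real.exp (-x * t) * Real.cos (a * t)) (Ioi 0) := by
  refine Integrable.mono' (exp_neg_integrableOn_Ioi 0 hx) ?_ ?_
  · exact (by fun_prop : Continuous (fun t : ℝ => Real.exp (-x * t) * Real.cos (a * t))).aestronglyMeasurable
  · refine Eventually.of_forall fun t => ?_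
    rw [Real.norm_eq_abs, abs_mul, abs_of_pos (Real.exp_pos _)]
    exact mul_le_of_le_one_right (Real.exp_pos _).le (Real.abs_cos_le_one _)

lemma aux_tendsto (x : ℝ) (hx : 0 < x) (f : ℝ → ℝ) (C : ℝ) (hf : ∀ t, |f t| ≤ C) :
    Tendsto (fun t : ℝ => Real.exp (-x * t) * f t) atTop (𝓝 0) := by
  have h1 : Tendsto (fun t : ℝ => Real.exp (-x * t) * C) atTop (𝓝 0) := by
    have : Tendsto (fun t : ℝ => Real.exp (-x * t)) atTop (𝓝 0) := by
      apply Real.tendsto_exp_atBot.comp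
      exact tendsto_id.const_mul_atTop_of_neg (by linarith)
    simpa using this.mul_const C
  refine squeeze_zero_norm (fun t => ?_) h1
  rw [Real.norm_eq_abs, abs_mul, abs_of_pos (Real.exp_pos _)]
  exact mul_le_mul_of_nonneg_left (hf t) (Real.exp_pos _).le

lemma aux_exp_cos_integral (x a : ℝ) (hx : 0 < x) :
    ∫ t in Ioi (0:ℝ), Real.exp (-x * t) * Real.cos (a * t) = x / (x ^ 2 + a ^ 2) := by
  have hpos : 0 < x ^ 2 + a ^ 2 := by positivity
  have hd : ∀ t ∈ Ici (0:ℝ), HasDerivAt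
      (fun t : ℝ => Real.exp (-x * t) * ((a * Real.sin (a * t) - x * Real.cos (a * t)) / (x ^ 2 + a ^ 2)))
      (Real.exp (-x * t) * Real.cos (a * t)) t := by
    intro t _
    have h1 : HasDerivAt (fun t : ℝ => a * t) a t := by simpa using (hasDerivAt_id t).const_mul a
    have h2 : HasDerivAt (fun t : ℝ => -x * t) (-x) t := by simpa using (hasDerivAt_id t).const_mul (-x)
    have := h2.exp.mul (((h1.sin.const_mul a).sub (h1.cos.const_mul x)).div_const (x ^ 2 + a ^ 2))
    refine this.congr_deriv ?_
    simp only [Pi.sub_apply]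
    field_simp
    ring
  rw [integral_Ioi_of_hasDerivAt_of_tendsto' hd (aux_exp_cos_integrable x a hx)
    (aux_tendsto x hx _ ((|a| + x) / (x ^ 2 + a ^ 2)) ?_)]
  · simp; ring
  · intro t
    rw [abs_div, abs_of_pos hpos]
    gcongr
    calc _ ≤ |a * Real.sin (a * t)| + |x * Real.cos (a * t)| := abs_sub _ _
      _ ≤ |a| * 1 + x * 1 := by
        rw [abs_mul, abs_mul, abs_of_pos hx]
        gcongr
        · exact Real.abs_sin_le_one _
        · exact Real.abs_cos_le_one _
      _ = _ := by ring

/-- Laplace transform of `sin t sin (l t)`. -/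
lemma aux_exp_sin_sin (x l : ℝ) (hx : 0 < x) :
    IntegrableOn (fun t : ℝ => Real.exp (-x * t) * Real.sin t * Real.sin (l * t)) (Ioi 0) ∧
    ∫ t in Ioi (0:ℝ), Real.exp (-x * t) * Real.sin t * Real.sin (l * t)
      = (x / (x ^ 2 + (l - 1) ^ 2) - x / (x ^ 2 + (l + 1) ^ 2)) / 2 := by
  have h : (fun t : ℝ => Real.exp (-x * t) * Real.sin t * Real.sin (l * t)) =
      fun t => (Real.exp (-x * t) * Real.cos ((l - 1) * t) - Real.exp (-x * t) * Real.cos ((l + 1) * t)) / 2 := by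
    ext t
    rw [sub_mul, add_mul, Real.cos_sub, Real.cos_add, one_mul]
    ring
  rw [h]
  constructor
  · exact ((aux_exp_cos_integrable x (l-1) hx).sub (aux_exp_cos_integrable x (l+1) hx)).div_const 2
  · rw [integral_div, integral_sub (aux_exp_cos_integrable x (l-1) hx) (aux_exp_cos_integrable x (l+1) hx),
      aux_exp_cos_integral _ _ hx, aux_exp_cos_integral _ _ hx]

lemma aux_exp_abs_sin_integrable (x : ℝ) (hx : 0 < x) :
    IntegrableOn (fun t : ℝ => Real.exp (-x * t) * |Real.sin t|) (Ioi 0) := by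
  refine Integrable.mono' (exp_neg_integrableOn_Ioi 0 hx) ?_ ?_
  · exact (by fun_prop : Continuous (fun t : ℝ => Real.exp (-x * t) * |Real.sin t|)).aestronglyMeasurable
  · refine Eventually.of_forall fun t => ?_
    rw [Real.norm_eq_abs, abs_mul, abs_of_pos (Real.exp_pos _), abs_abs]
    exact mul_le_of_le_one_right (Real.exp_pos _).le (Real.abs_sin_le_one _)

lemma aux_exp_abs_sin (x : ℝ) (hx : 0 < x) :
    ∫ t in Ioi (0:ℝ), Real.exp (-x * t) * |Real.sin t|
      = (1 + Real.exp (-x * Real.pi)) / ((1 - Real.exp (-x * Real.pi)) * (1 + x ^ 2)) := by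
  have hitg := aux_exp_abs_sin_integrable x hx
  set J := ∫ t in Ioi (0:ℝ), Real.exp (-x * t) * |Real.sin t| with hJ
  have hsplit : J = (∫ t in (0:ℝ)..Real.pi, Real.exp (-x * t) * |Real.sin t|) +
      ∫ t in Ioi Real.pi, Real.exp (-x * t) * |Real.sin t| := by
    rw [intervalIntegral.integral_of_le Real.pi_pos.le, hJ, ← setIntegral_union]
    · rw [Ioc_union_Ioi_eq_Ioi Real.pi_pos.le]
    · exact Ioc_disjoint_Ioi le_rfl
    · exact measurableSet_Ioi
    · exact hitg.mono_set Ioc_subset_Ioi_self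
    · exact hitg.mono_set (Ioi_subset_Ioi Real.pi_pos.le)
  have h2 : ∫ t in Ioi Real.pi, Real.exp (-x * t) * |Real.sin t| = Real.exp (-x * Real.pi) * J := by
    have := (measurePreserving_add_right volume Real.pi).setIntegral_preimage_emb
      (measurableEmbedding_addRight Real.pi) (fun t => Real.exp (-x * t) * |Real.sin t|) (Ioi Real.pi)
    rw [preimage_add_const_Ioi, sub_self] at this
    rw [← this, hJ, ← integral_const_mul]
    congr 1
    ext t
    rw [Real.sin_add_pi, abs_neg, mul_add, Real.exp_add]
    ring
  have h1 : ∫ t in (0:ℝ)..Real.pi, Real.exp (-x * t) * |Real.sin t| =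
      (1 + Real.exp (-x * Real.pi)) / (1 + x ^ 2) := by
    have e1 : ∫ t in (0:ℝ)..Real.pi, Real.exp (-x * t) * |Real.sin t| =
        ∫ t in (0:ℝ)..Real.pi, Real.exp (-x * t) * Real.sin t := by
      apply intervalIntegral.integral_congr
      intro t ht
      rw [uIcc_of_le Real.pi_pos.le] at ht
      simp only
      rw [abs_of_nonneg (Real.sin_nonneg_of_nonneg_of_le_pi ht.1 ht.2)]
    have hd : ∀ t ∈ uIcc (0:ℝ) Real.pi, HasDerivAt
        (fun t : ℝ => Real.exp (-x * t) * (-(x * Real.sin t + Real.cos t) / (1 + x ^ 2)))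
        (Real.exp (-x * t) * Real.sin t) t := by
      intro t _
      have h2 : HasDerivAt (fun t : ℝ => -x * t) (-x) t := by simpa using (hasDerivAt_id t).const_mul (-x)
      have := h2.exp.mul ((((Real.hasDerivAt_sin t).const_mul x).add (Real.hasDerivAt_cos t)).neg.div_const (1 + x ^ 2))
      refine this.congr_deriv ?_
      simp only [Pi.add_apply, Pi.neg_apply]
      field_simp
      ring
    rw [e1, intervalIntegral.integral_eq_sub_of_hasDerivAt hd]
    · simp; ring
    · apply Continuous.intervalIntegrable; fun_prop
  rw [h1, h2] at hsplit
  have hlt : Real.exp (-x * Real.pi) < 1 := by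
    rw [Real.exp_lt_one_iff]; nlinarith [Real.pi_pos]
  have : 1 - Real.exp (-x * Real.pi) ≠ 0 := by linarith
  have : J * (1 - Real.exp (-x * Real.pi)) = (1 + Real.exp (-x * Real.pi)) / (1 + x ^ 2) := by linarith
  rw [eq_div_iff (by positivity)] at this
  rw [eq_div_iff (by positivity)]
  linarith

lemma aux_rat_integral (a b : ℝ) (ha : 0 < a) (hb : 0 < b) :
    IntegrableOn (fun x : ℝ => x ^ 2 / ((x ^ 2 + a ^ 2) * (x ^ 2 + b ^ 2))) (Ioi 0) ∧
    ∫ x in Ioi (0:ℝ), x ^ 2 / ((x ^ 2 + a ^ 2) * (x ^ 2 + b ^ 2)) = Real.pi / (2 * (a + b)) := by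
  have hnn : ∀ x ∈ Ioi (0:ℝ), 0 ≤ x ^ 2 / ((x ^ 2 + a ^ 2) * (x ^ 2 + b ^ 2)) := fun x _ => by positivity
  have hat : ∀ c : ℝ, 0 < c → ∀ x : ℝ, HasDerivAt (fun x : ℝ => Real.arctan (x / c)) (c / (x ^ 2 + c ^ 2)) x := by
    intro c hc x
    have := (((hasDerivAt_id x).div_const c).arctan)
    refine this.congr_deriv ?_
    simp only [id]
    field_simp
    ring
  have hlim : ∀ c : ℝ, 0 < c → Tendsto (fun x : ℝ => Real.arctan (x / c)) atTop (𝓝 (Real.pi / 2)) := by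
    intro c hc
    exact (tendsto_nhds_of_tendsto_nhdsWithin Real.tendsto_arctan_atTop).comp (tendsto_id.atTop_div_const hc)
  by_cases hab : a = b
  · subst hab
    have hd : ∀ x ∈ Ici (0:ℝ), HasDerivAt
        (fun x : ℝ => (Real.arctan (x / a) / a - x / (x ^ 2 + a ^ 2)) / 2)
        (x ^ 2 / ((x ^ 2 + a ^ 2) * (x ^ 2 + a ^ 2))) x := by
      intro x _
      have hne : x ^ 2 + a ^ 2 ≠ 0 := by positivity
      have h3 : HasDerivAt (fun x : ℝ => x ^ 2 + a ^ 2) (2 * x) x := by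
        simpa using (hasDerivAt_pow 2 x).add_const (a ^ 2)
      have := ((((hat a ha x).div_const a).sub ((hasDerivAt_id x).div h3 hne)).div_const 2)
      refine this.congr_deriv ?_
      simp only [id]
      field_simp
      ring
    have hl : Tendsto (fun x : ℝ => (Real.arctan (x / a) / a - x / (x ^ 2 + a ^ 2)) / 2) atTop
        (𝓝 ((Real.pi / 2 / a - 0) / 2)) := by
      refine Tendsto.div_const (((hlim a ha).div_const a).sub ?_) 2
      refine squeeze_zero' (g := fun x : ℝ => x⁻¹) ?_ ?_ tendsto_inv_atTop_zero
      · filter_upwards [eventually_gt_atTop 0] with x hx; positivity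
      · filter_upwards [eventually_gt_atTop 0] with x hx
        rw [div_le_iff₀ (by positivity)]
        field_simp
        nlinarith [sq_nonneg a]
    refine ⟨integrableOn_Ioi_deriv_of_nonneg' hd hnn hl, ?_⟩
    rw [integral_Ioi_of_hasDerivAt_of_nonneg' hd hnn hl]
    simp
    field_simp
    ring
  · have hne : a ^ 2 - b ^ 2 ≠ 0 := by
      have : a ^ 2 - b ^ 2 = (a - b) * (a + b) := by ring
      rw [this]
      exact mul_ne_zero (sub_ne_zero.2 hab) (by positivity)
    have hd : ∀ x ∈ Ici (0:ℝ), HasDerivAt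
        (fun x : ℝ => (a * Real.arctan (x / a) - b * Real.arctan (x / b)) / (a ^ 2 - b ^ 2))
        (x ^ 2 / ((x ^ 2 + a ^ 2) * (x ^ 2 + b ^ 2))) x := by
      intro x _
      have := ((((hat a ha x).const_mul a).sub ((hat b hb x).const_mul b)).div_const (a ^ 2 - b ^ 2))
      refine this.congr_deriv ?_
      have h1 : x ^ 2 + a ^ 2 ≠ 0 := by positivity
      have h2 : x ^ 2 + b ^ 2 ≠ 0 := by positivity
      field_simp
      ring
    have hl : Tendsto (fun x : ℝ => (a * Real.arctan (x / a) - b * Real.arctan (x / b)) / (a ^ 2 - b ^ 2)) atTop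
        (𝓝 ((a * (Real.pi / 2) - b * (Real.pi / 2)) / (a ^ 2 - b ^ 2))) :=
      Tendsto.div_const (((hlim a ha).const_mul a).sub ((hlim b hb).const_mul b)) _
    refine ⟨integrableOn_Ioi_deriv_of_nonneg' hd hnn hl, ?_⟩
    rw [integral_Ioi_of_hasDerivAt_of_nonneg' hd hnn hl]
    simp
    have : a + b ≠ 0 := by positivity
    field_simp
    ring

lemma aux_coth_series (x : ℝ) (hx : 0 < x) :
    Summable (fun n : ℕ => 1 / (x ^ 2 + ((n:ℝ) + 1) ^ 2)) ∧
    Real.pi * ((1 + Real.exp (-2 * Real.pi * x)) / (1 - Real.exp (-2 * Real.pi * x))) =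
      1 / x + 2 * x * ∑' n : ℕ, 1 / (x ^ 2 + ((n:ℝ) + 1) ^ 2) := by
  have hsum : Summable (fun n : ℕ => 1 / (x ^ 2 + ((n:ℝ) + 1) ^ 2)) := by
    have h := (summable_nat_add_iff 1).2 (Real.summable_one_div_nat_pow.2 (one_lt_two))
    refine Summable.of_nonneg_of_le (fun n => by positivity) (fun n => ?_) h
    push_cast
    exact one_div_le_one_div_of_le (by positivity) (by nlinarith [sq_nonneg x])
  refine ⟨hsum, ?_⟩
  have hz : (Complex.I * x : ℂ) ∈ Complex.integerComplement := by
    have := UpperHalfPlane.coe_mem_integerComplement ⟨Complex.I * x, by simpa using hx⟩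
    exact this
  have h := cot_series_rep' hz
  rw [Complex.cot_pi_eq_exp_ratio] at h
  have hx' : (x:ℂ) ≠ 0 := by exact_mod_cast hx.ne'
  have ht : ∀ n : ℕ, (1 / (Complex.I * x - (n + 1)) + 1 / (Complex.I * x + (n + 1)) : ℂ) =
      (-2 * Complex.I * x) * ((1 / (x ^ 2 + ((n:ℝ) + 1) ^ 2) : ℝ) : ℂ) := by
    intro n
    have hn : (x ^ 2 + ((n:ℝ) + 1) ^ 2 : ℂ) ≠ 0 := by
      have : (x ^ 2 + ((n:ℝ) + 1) ^ 2 : ℝ) ≠ 0 := by positivity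
      exact_mod_cast this
    have h1 : (Complex.I * x - (n + 1) : ℂ) ≠ 0 := fun h => by
      have := congrArg Complex.im h; simp at this; linarith
    have h2 : (Complex.I * x + (n + 1) : ℂ) ≠ 0 := fun h => by
      have := congrArg Complex.im h; simp at this; linarith
    push_cast at hn ⊢
    have h3 : (Complex.I * x - (n + 1) : ℂ) * (Complex.I * x + (n + 1)) = -(x ^ 2 + ((n:ℂ) + 1) ^ 2) := by
      linear_combination (x:ℂ)^2 * Complex.I_sq
    rw [div_add_div _ _ h1 h2, h3, div_eq_iff (neg_ne_zero.2 hn)]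
    field_simp
    ring
  simp_rw [ht] at h
  rw [tsum_mul_left, ← Complex.ofReal_tsum] at h
  have he : Complex.exp (2 * Real.pi * Complex.I * (Complex.I * x)) = ((Real.exp (-2 * Real.pi * x) : ℝ) : ℂ) := by
    push_cast
    congr 1
    linear_combination 2 * Real.pi * x * Complex.I_sq
  rw [he] at h
  set q := Real.exp (-2 * Real.pi * x) with hq
  have hq1 : q < 1 := by
    rw [hq, Real.exp_lt_one_iff]; nlinarith [Real.pi_pos, mul_pos Real.pi_pos hx]
  have hq1' : (1 - q : ℂ) ≠ 0 := by
    have : 1 - q ≠ 0 := by linarith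
    exact_mod_cast this
  apply Complex.ofReal_injective
  push_cast at h ⊢
  have hI : Complex.I * (1 - q : ℂ) ≠ 0 := mul_ne_zero Complex.I_ne_zero hq1'
  have e1 : ((q + 1) / (Complex.I * (1 - q)) : ℂ) = - Complex.I * ((1 + q) / (1 - q)) := by
    rw [div_eq_iff hI]
    field_simp
    linear_combination ((1 + q) : ℂ) * Complex.I_sq
  have e2 : (1 / (Complex.I * x) : ℂ) = - Complex.I * (1 / x) := by
    rw [div_eq_iff (mul_ne_zero Complex.I_ne_zero hx')]
    field_simp
    linear_combination (1:ℂ) * Complex.I_sq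
  rw [e1, e2] at h
  linear_combination Complex.I * h + (Real.pi * ((1 + q) / (1 - q)) - 1 / x - 2 * x * (∑' n : ℕ, 1 / ((x:ℂ) ^ 2 + ((n:ℂ) + 1) ^ 2))) * Complex.I_sq

lemma aux_tanh_alg (x : ℝ) (hx : 0 < x) (E : ℝ) (hpos : 0 < E) (hlt : E < 1) (S S2 O : ℝ)
    (h1 : Real.pi * ((1 + E ^ 2) / (1 - E ^ 2)) = 1 / x + 2 * x * S)
    (h2 : Real.pi * ((1 + E) / (1 - E)) = 1 / (x / 2) + 2 * (x / 2) * S2)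
    (heo : O + 1 / 4 * S2 = S) :
    4 / Real.pi * x * O = (1 - E) / (1 + E) := by
  have hO : O = S - 1 / 4 * S2 := by linarith
  have e1 : 2 * x * S = Real.pi * ((1 + E ^ 2) / (1 - E ^ 2)) - 1 / x := by linarith
  have e2 : x * S2 = Real.pi * ((1 + E) / (1 - E)) - 2 / x := by
    have : 1 / (x / 2) = 2 / x := by field_simp
    rw [this] at h2
    linarith
  have e3 : 4 / Real.pi * x * O = 1 / Real.pi * (2 * (2 * x * S) - x * S2) := by rw [hO]; ring
  rw [e3, e1, e2]
  have n1 : 1 - E ≠ 0 := by linarith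
  have n2 : 1 + E ≠ 0 := by linarith
  have n3 : 1 - E ^ 2 = (1 - E) * (1 + E) := by ring
  have hpi := Real.pi_pos.ne'
  rw [n3]
  field_simp
  ring

lemma aux_tanh_bound (x : ℝ) (hx : 0 < x) (N : ℕ) :
    4 / Real.pi * x * ∑ k ∈ Finset.range N, 1 / (x ^ 2 + (2 * (k:ℝ) + 1) ^ 2) ≤
      (1 - Real.exp (-x * Real.pi)) / (1 + Real.exp (-x * Real.pi)) := by
  obtain ⟨hs1, h1⟩ := aux_coth_series x hx
  obtain ⟨hs2, h2⟩ := aux_coth_series (x / 2) (by positivity)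
  have heven : ∀ k : ℕ, (1 / (x ^ 2 + (((2 * k + 1 : ℕ):ℝ) + 1) ^ 2)) =
      1 / 4 * (1 / ((x / 2) ^ 2 + ((k:ℝ) + 1) ^ 2)) := by
    intro k
    have : (x / 2) ^ 2 + ((k:ℝ) + 1) ^ 2 ≠ 0 := by positivity
    have : (x ^ 2 + (((2 * k + 1 : ℕ):ℝ) + 1) ^ 2) ≠ 0 := by positivity
    push_cast at *
    field_simp
    ring
  have hodd : Summable (fun k : ℕ => 1 / (x ^ 2 + (((2 * k : ℕ):ℝ) + 1) ^ 2)) :=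
    hs1.comp_injective (i := fun k : ℕ => 2 * k) (fun a b h => by simpa using h)
  have heven' : Summable (fun k : ℕ => 1 / (x ^ 2 + (((2 * k + 1 : ℕ):ℝ) + 1) ^ 2)) := by
    simp_rw [heven]; exact hs2.mul_left _
  have heo := tsum_even_add_odd (f := fun n : ℕ => 1 / (x ^ 2 + ((n:ℝ) + 1) ^ 2)) hodd heven'
  rw [tsum_congr heven, tsum_mul_left] at heo
  have hle : ∑ k ∈ Finset.range N, 1 / (x ^ 2 + (2 * (k:ℝ) + 1) ^ 2) ≤
      ∑' k : ℕ, 1 / (x ^ 2 + (((2 * k : ℕ):ℝ) + 1) ^ 2) := by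
    have := hodd.sum_le_tsum (Finset.range N) (fun k _ => by positivity)
    push_cast at this ⊢
    exact this
  have hq : Real.exp (-2 * Real.pi * x) = Real.exp (-x * Real.pi) ^ 2 := by
    rw [← Real.exp_nat_mul]; congr 1; push_cast; ring
  have hq2 : Real.exp (-2 * Real.pi * (x / 2)) = Real.exp (-x * Real.pi) := by
    congr 1; ring
  rw [hq] at h1
  rw [hq2] at h2
  have hlt : Real.exp (-x * Real.pi) < 1 := by
    rw [Real.exp_lt_one_iff]; nlinarith [Real.pi_pos, mul_pos hx Real.pi_pos]
  have hpos := Real.exp_pos (-x * Real.pi)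
  have key := aux_tanh_alg x hx _ hpos hlt _ _ _ h1 h2 heo
  rw [← key]
  have : 0 ≤ 4 / Real.pi * x := by positivity
  exact mul_le_mul_of_nonneg_left hle this

lemma aux_outer (l : ℝ) (hl : 1 < l) (N : ℕ) :
    IntegrableOn (fun x : ℝ => (4 / Real.pi * x * ∑ k ∈ Finset.range N, 1 / (x ^ 2 + (2 * (k:ℝ) + 1) ^ 2)) *
      ((x / (x ^ 2 + (l - 1) ^ 2) - x / (x ^ 2 + (l + 1) ^ 2)) / 2)) (Ioi 0) ∧
    ∫ x in Ioi (0:ℝ), (4 / Real.pi * x * ∑ k ∈ Finset.range N, 1 / (x ^ 2 + (2 * (k:ℝ) + 1) ^ 2)) *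
      ((x / (x ^ 2 + (l - 1) ^ 2) - x / (x ^ 2 + (l + 1) ^ 2)) / 2) = 1 / l - 1 / (l + 2 * N) := by
  have hrw : (fun x : ℝ => (4 / Real.pi * x * ∑ k ∈ Finset.range N, 1 / (x ^ 2 + (2 * (k:ℝ) + 1) ^ 2)) *
      ((x / (x ^ 2 + (l - 1) ^ 2) - x / (x ^ 2 + (l + 1) ^ 2)) / 2)) = fun x =>
      ∑ k ∈ Finset.range N, 2 / Real.pi * (x ^ 2 / ((x ^ 2 + (l - 1) ^ 2) * (x ^ 2 + (2 * (k:ℝ) + 1) ^ 2)) -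
        x ^ 2 / ((x ^ 2 + (l + 1) ^ 2) * (x ^ 2 + (2 * (k:ℝ) + 1) ^ 2))) := by
    ext x
    rw [Finset.mul_sum, Finset.sum_mul]
    refine Finset.sum_congr rfl fun k _ => ?_
    have hl1 : 0 < l - 1 := by linarith
    have n1 : x ^ 2 + (l - 1) ^ 2 ≠ 0 := by positivity
    have n2 : x ^ 2 + (l + 1) ^ 2 ≠ 0 := by positivity
    have n3 : x ^ 2 + (2 * (k:ℝ) + 1) ^ 2 ≠ 0 := by positivity
    have hpi := Real.pi_pos.ne'
    field_simp
    ring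
  have hI : ∀ k : ℕ, IntegrableOn (fun x : ℝ => 2 / Real.pi * (x ^ 2 / ((x ^ 2 + (l - 1) ^ 2) * (x ^ 2 + (2 * (k:ℝ) + 1) ^ 2)) -
        x ^ 2 / ((x ^ 2 + (l + 1) ^ 2) * (x ^ 2 + (2 * (k:ℝ) + 1) ^ 2)))) (Ioi 0) := fun k =>
    ((aux_rat_integral _ _ (by linarith) (by positivity)).1.sub
      (aux_rat_integral _ _ (by linarith) (by positivity)).1).const_mul _
  rw [hrw]
  refine ⟨integrable_finsetSum _ fun k _ => hI k, ?_⟩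
  rw [integral_finsetSum _ fun k _ => hI k]
  have hk : ∀ k : ℕ, ∫ x in Ioi (0:ℝ), 2 / Real.pi * (x ^ 2 / ((x ^ 2 + (l - 1) ^ 2) * (x ^ 2 + (2 * (k:ℝ) + 1) ^ 2)) -
        x ^ 2 / ((x ^ 2 + (l + 1) ^ 2) * (x ^ 2 + (2 * (k:ℝ) + 1) ^ 2))) =
        1 / (l + 2 * (k:ℝ)) - 1 / (l + 2 * ((k + 1 : ℕ):ℝ)) := by
    intro k
    have hl1 : 0 < l - 1 := by linarith
    have hl2 : 0 < l := by linarith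
    rw [integral_const_mul, integral_sub (aux_rat_integral _ _ (by linarith) (by positivity)).1
      (aux_rat_integral _ _ (by linarith) (by positivity)).1,
      (aux_rat_integral _ _ (by linarith) (by positivity)).2,
      (aux_rat_integral _ _ (by linarith) (by positivity)).2]
    have hpi := Real.pi_pos.ne'
    have n1 : l - 1 + (2 * (k:ℝ) + 1) = l + 2 * k := by ring
    have n2 : l + 1 + (2 * (k:ℝ) + 1) = l + 2 * ((k:ℝ) + 1) := by ring
    rw [n1, n2]
    push_cast
    field_simp
  simp_rw [hk]
  rw [Finset.sum_range_sub' (fun k : ℕ => 1 / (l + 2 * (k:ℝ)))]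
  simp

/-- Bohr-Favard inequality for finite sums, normalised. -/
lemma bohr_favard_one {ι : Type*} (s : Finset ι) (b l : ι → ℝ) (hl : ∀ i ∈ s, 1 < l i) (M : ℝ)
    (hM : ∀ t : ℝ, |∑ i ∈ s, b i * (l i * Real.sin (l i * t))| ≤ M) :
    |∑ i ∈ s, b i| ≤ Real.pi / 2 * M := by
  have hM0 : 0 ≤ M := (abs_nonneg _).trans (hM 0)
  have hN : ∀ N : ℕ, |∑ i ∈ s, b i * (l i * (1 / l i - 1 / (l i + 2 * N)))| ≤ Real.pi / 2 * M := by
    intro N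
    set w : ℝ → ℝ := fun x => 4 / Real.pi * x * ∑ k ∈ Finset.range N, 1 / (x ^ 2 + (2 * (k:ℝ) + 1) ^ 2) with hw
    set S : ℝ → ℝ → ℝ := fun x l => (x / (x ^ 2 + (l - 1) ^ 2) - x / (x ^ 2 + (l + 1) ^ 2)) / 2 with hS
    have hJ : ∀ x : ℝ, 0 < x → |∑ i ∈ s, b i * (l i * S x (l i))| ≤
        M * ((1 + Real.exp (-x * Real.pi)) / ((1 - Real.exp (-x * Real.pi)) * (1 + x ^ 2))) := by
      intro x hx
      have e : ∑ i ∈ s, b i * (l i * S x (l i)) =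
          ∫ t in Ioi (0:ℝ), ∑ i ∈ s, b i * (l i * (Real.exp (-x * t) * Real.sin t * Real.sin (l i * t))) := by
        rw [integral_finsetSum]
        · refine Finset.sum_congr rfl fun i _ => ?_
          rw [integral_const_mul, integral_const_mul, (aux_exp_sin_sin x (l i) hx).2]
        · intro i _
          exact ((aux_exp_sin_sin x (l i) hx).1.const_mul _).const_mul _
      rw [e, ← aux_exp_abs_sin x hx, ← integral_const_mul, ← Real.norm_eq_abs]
      refine norm_integral_le_of_norm_le ((aux_exp_abs_sin_integrable x hx).const_mul M) ?_
      refine Eventually.of_forall fun t => ?_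
      have e2 : ∑ i ∈ s, b i * (l i * (Real.exp (-x * t) * Real.sin t * Real.sin (l i * t))) =
          (Real.exp (-x * t) * Real.sin t) * ∑ i ∈ s, b i * (l i * Real.sin (l i * t)) := by
        rw [Finset.mul_sum]
        exact Finset.sum_congr rfl fun i _ => by ring
      rw [e2, Real.norm_eq_abs, abs_mul, abs_mul, abs_of_pos (Real.exp_pos _), mul_comm M]
      exact mul_le_mul_of_nonneg_left (hM t) (by positivity)
    have e : ∑ i ∈ s, b i * (l i * (1 / l i - 1 / (l i + 2 * N))) =
        ∫ x in Ioi (0:ℝ), ∑ i ∈ s, b i * (l i * (w x * S x (l i))) := by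
      rw [integral_finsetSum]
      · refine Finset.sum_congr rfl fun i hi => ?_
        rw [integral_const_mul, integral_const_mul, (aux_outer (l i) (hl i hi) N).2]
      · intro i hi
        exact ((aux_outer (l i) (hl i hi) N).1.const_mul _).const_mul _
    have hpi : Real.pi / 2 * M = ∫ x in Ioi (0:ℝ), M * (1 + x ^ 2)⁻¹ := by
      rw [integral_const_mul, integral_Ioi_inv_one_add_sq]
      simp; ring
    rw [e, hpi, ← Real.norm_eq_abs]
    refine norm_integral_le_of_norm_le (integrable_inv_one_add_sq.integrableOn.const_mul M) ?_
    refine (ae_restrict_iff' measurableSet_Ioi).2 (Eventually.of_forall fun x hx => ?_)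
    have hx : 0 < x := hx
    have e2 : ∑ i ∈ s, b i * (l i * (w x * S x (l i))) = w x * ∑ i ∈ s, b i * (l i * S x (l i)) := by
      rw [Finset.mul_sum]
      exact Finset.sum_congr rfl fun i _ => by ring
    have hw0 : 0 ≤ w x := by
      simp only [hw]; positivity
    rw [e2, Real.norm_eq_abs, abs_mul, abs_of_nonneg hw0]
    have hlt : Real.exp (-x * Real.pi) < 1 := by
      rw [Real.exp_lt_one_iff]; nlinarith [Real.pi_pos, mul_pos hx Real.pi_pos]
    have hpos := Real.exp_pos (-x * Real.pi)
    have hwb := aux_tanh_bound x hx N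
    have hJx := hJ x hx
    calc w x * |∑ i ∈ s, b i * (l i * S x (l i))| ≤
        ((1 - Real.exp (-x * Real.pi)) / (1 + Real.exp (-x * Real.pi))) *
          (M * ((1 + Real.exp (-x * Real.pi)) / ((1 - Real.exp (-x * Real.pi)) * (1 + x ^ 2)))) := by
          refine mul_le_mul hwb hJx (abs_nonneg _) (hw0.trans hwb)
      _ = M * (1 + x ^ 2)⁻¹ := by
          have n1 : 1 - Real.exp (-x * Real.pi) ≠ 0 := by linarith
          have n2 : 1 + Real.exp (-x * Real.pi) ≠ 0 := by linarith
          generalize Real.exp (-x * Real.pi) = E at *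
          field_simp
  have hlim : Tendsto (fun N : ℕ => |∑ i ∈ s, b i * (l i * (1 / l i - 1 / (l i + 2 * N)))|) atTop
      (𝓝 |∑ i ∈ s, b i * (l i * (1 / l i - 0))|) := by
    refine Tendsto.abs (tendsto_finsetSum _ fun i _ => ?_)
    refine ((tendsto_const_nhds.sub ?_).const_mul _).const_mul _
    simp_rw [one_div]
    refine tendsto_inv_atTop_zero.comp ?_
    exact tendsto_atTop_add_const_left _ _ (tendsto_natCast_atTop_atTop.const_mul_atTop (by norm_num))
  have h := le_of_tendsto' hlim hN
  have e : ∑ i ∈ s, b i * (l i * (1 / l i - 0)) = ∑ i ∈ s, b i := by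
    refine Finset.sum_congr rfl fun i hi => ?_
    have : l i ≠ 0 := by linarith [hl i hi]
    field_simp
    simp
  rwa [e] at h

/-- Bohr-Favard inequality for finite sums in a real normed space. -/
lemma bohr_favard {ι E : Type*} [NormedAddCommGroup E] [NormedSpace ℝ E]
    (s : Finset ι) (a : ι → E) (l : ι → ℝ) (σ : ℝ) (hσ : 0 < σ)
    (hl : ∀ i ∈ s, a i ≠ 0 → σ < |l i|) (M : ℝ)
    (hM : ∀ t : ℝ, ‖∑ i ∈ s, (l i * Real.sin (l i * t)) • a i‖ ≤ M) :
    ‖∑ i ∈ s, a i‖ ≤ Real.pi / 2 * M / σ := by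
  classical
  obtain ⟨f, hf1, hf2⟩ := exists_dual_vector'' ℝ (∑ i ∈ s, a i)
  have hsub : ∀ g : ι → ℝ, ∑ i ∈ s with a i ≠ 0, g i * f (a i) = ∑ i ∈ s, g i * f (a i) := by
    intro g
    rw [Finset.sum_filter]
    refine Finset.sum_congr rfl fun i _ => ?_
    split_ifs with h
    · rfl
    · rw [not_not] at h; simp [h]
  have key := bohr_favard_one (s.filter (fun i => a i ≠ 0)) (fun i => f (a i)) (fun i => |l i| / σ)
    (fun i hi => by
      rw [Finset.mem_filter] at hi
      rw [one_lt_div hσ]; exact hl i hi.1 hi.2) (M / σ) (fun t => by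
      have h := hM (t / σ)
      have e : ∑ i ∈ s with a i ≠ 0, f (a i) * (|l i| / σ * Real.sin (|l i| / σ * t)) =
          f (∑ i ∈ s, (l i * Real.sin (l i * (t / σ))) • a i) / σ := by
        rw [map_sum, Finset.sum_div]
        have := hsub (fun i => |l i| / σ * Real.sin (|l i| / σ * t))
        simp_rw [mul_comm (f _)]
        rw [this]
        refine Finset.sum_congr rfl fun i _ => ?_
        rw [map_smul, smul_eq_mul]
        rcases abs_cases (l i) with ⟨h, _⟩ | ⟨h, _⟩
        · rw [h, show l i / σ * t = l i * (t / σ) by ring]; ring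
        · rw [h, show -l i / σ * t = -(l i * (t / σ)) by ring, Real.sin_neg]; ring
      rw [e, abs_div, abs_of_pos hσ]
      gcongr
      calc |f (∑ i ∈ s, (l i * Real.sin (l i * (t / σ))) • a i)| ≤ ‖f‖ * _ := f.le_opNorm _
        _ ≤ 1 * M := mul_le_mul hf1 h (norm_nonneg _) zero_le_one
        _ = M := one_mul M)
  have e := hsub (fun _ => 1)
  simp only [one_mul] at e
  rw [e, ← map_sum, hf2] at key
  simp only [RCLike.ofReal_real_eq_id, id, abs_norm] at key
  rw [mul_div_assoc]
  exact key

end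

section
open MeasureTheory Set Filter Topology

lemma aux_partition (R ε : ℝ) (hε : 0 < ε) : ∃ (n : ℕ) (φ : ℕ → ℝ → ℝ) (c : ℕ → ℝ),
    (∀ j, Continuous (φ j)) ∧ (∀ j x, 0 ≤ φ j x) ∧
    (∀ x, |x| ≤ R → ∑ j ∈ Finset.range n, φ j x = 1) ∧
    (∀ j x, φ j x ≠ 0 → |x - c j| ≤ ε) := by
  obtain ⟨n, hn⟩ := exists_nat_ge ((R + R) / ε + 1)
  refine ⟨n, fun j x => max 0 (min 1 ((x + R) / ε + 1 - j)) - max 0 (min 1 ((x + R) / ε + 1 - (j + 1 : ℕ))),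
    fun j => j * ε - R, fun j => by fun_prop, fun j x => ?_, fun x hx => ?_, fun j x hx => ?_⟩
  · rw [sub_nonneg]
    gcongr
    simp
  · rw [Finset.sum_range_sub' (fun j : ℕ => max 0 (min 1 ((x + R) / ε + 1 - j)))]
    rw [abs_le] at hx
    have h1 : 0 ≤ (x + R) / ε := div_nonneg (by linarith) hε.le
    have h2 : (x + R) / ε ≤ (R + R) / ε := by gcongr; linarith
    rw [min_eq_left (by simpa using h1), min_eq_right (by linarith), max_eq_left (a := (0:ℝ)) (b := _ - (n:ℝ)) (by linarith)]
    simp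
  · have h1 : 0 < (x + R) / ε + 1 - j := by
      by_contra h
      push Not at h
      apply hx
      push_cast
      rw [min_eq_right (by linarith), min_eq_right (by linarith), max_eq_left h, max_eq_left (by linarith)]
      simp
    have h2 : (x + R) / ε + 1 - (j + 1) < 1 := by
      by_contra h
      push Not at h
      apply hx
      push_cast
      rw [min_eq_left (by linarith), min_eq_left (by linarith)]
      simp
    have h3 : (x + R) / ε * ε = x + R := by field_simp
    rw [abs_le]
    constructor <;> nlinarith

section
variable {H : Type*} [NormedAddCommGroup H] [InnerProductSpace ℂ H] [CompleteSpace H]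

lemma aux_cfc_comb (A : H →L[ℂ] H) (hA : IsSelfAdjoint A) (s : Finset ℕ) (f : ℕ → ℝ → ℝ)
    (hf : ∀ j, ContinuousOn (f j) (spectrum ℝ A)) (z : ℕ → ℂ) (C : ℝ) (hC : 0 ≤ C)
    (h : ∀ x ∈ spectrum ℝ A, ‖∑ j ∈ s, z j * (f j x : ℂ)‖ ≤ C) :
    ‖∑ j ∈ s, z j • cfc (f j) A‖ ≤ C := by
  have hre : ∀ w ∈ spectrum ℂ A, w.re ∈ spectrum ℝ A := by
    intro w hw
    have := hA.mem_spectrum_eq_re hw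
    rw [this] at hw
    exact (spectrum.algebraMap_mem_iff ℂ).1 hw
  have hc : ∀ j, ContinuousOn (fun w : ℂ => (f j w.re : ℂ)) (spectrum ℂ A) := fun j =>
    Complex.continuous_ofReal.comp_continuousOn ((hf j).comp Complex.continuous_re.continuousOn hre)
  have hn : IsStarNormal A := hA.isStarNormal
  have e : ∑ j ∈ s, z j • cfc (f j) A = cfc (∑ j ∈ s, fun w : ℂ => z j * (f j w.re : ℂ)) A := by
    rw [cfc_sum (fun j (w : ℂ) => z j * (f j w.re : ℂ)) A s (fun j _ => (continuousOn_const.mul (hc j)))]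
    refine Finset.sum_congr rfl fun j _ => ?_
    rw [cfc_real_eq_complex (f j) hA, cfc_const_mul (z j) _ A (hc j)]
  rw [e]
  refine norm_cfc_le hC fun w hw => ?_
  simpa using h w.re (hre w hw)

/-- contraction and commutator estimate for the discretised unitary group -/
lemma aux_U (A : H →L[ℂ] H) (hA : IsSelfAdjoint A) (R ε : ℝ) (hε : 0 < ε) (hR : ‖A‖ ≤ R)
    (p : ℝ → ℝ) (hp : ContinuousOn p (spectrum ℝ A)) (hp01 : ∀ x, 0 ≤ p x ∧ p x ≤ 1)
    (n : ℕ) (φ : ℕ → ℝ → ℝ) (c : ℕ → ℝ)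
    (h1 : ∀ j, Continuous (φ j)) (h2 : ∀ j x, 0 ≤ φ j x)
    (h3 : ∀ x, |x| ≤ R → ∑ j ∈ Finset.range n, φ j x = 1)
    (h4 : ∀ j x, φ j x ≠ 0 → |x - c j| ≤ ε) :
    (∑ j ∈ Finset.range n, cfc (fun x => φ j x * p x) A = cfc p A) ∧
    (∀ j, cfc (fun x => φ j x * p x) A ≠ 0 → ∃ x ∈ spectrum ℝ A, p x ≠ 0 ∧ |x - c j| ≤ ε) ∧
    (∀ z : ℕ → ℂ, (∀ j, ‖z j‖ ≤ 1) →
      ‖∑ j ∈ Finset.range n, z j • cfc (fun x => φ j x * p x) A‖ ≤ 1 ∧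
      ‖∑ j ∈ Finset.range n, (z j * c j) • cfc (fun x => φ j x * p x) A -
        A * ∑ j ∈ Finset.range n, z j • cfc (fun x => φ j x * p x) A‖ ≤ ε ∧
      ‖∑ j ∈ Finset.range n, (z j * c j) • cfc (fun x => φ j x * p x) A -
        (∑ j ∈ Finset.range n, z j • cfc (fun x => φ j x * p x) A) * A‖ ≤ ε) := by
  have hc : ∀ j, ContinuousOn (fun x => φ j x * p x) (spectrum ℝ A) := fun j =>
    (h1 j).continuousOn.mul hp
  have hspec : ∀ x ∈ spectrum ℝ A, |x| ≤ R := by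
    intro x hx
    rcases subsingleton_or_nontrivial (H →L[ℂ] H) with hs | hn
    · simp at hx
    · have := spectrum.norm_le_norm_of_mem hx
      exact this.trans hR
  refine ⟨?_, ?_, ?_⟩
  · rw [← cfc_sum (fun j x => φ j x * p x) A _ (fun j _ => hc j)]
    refine cfc_congr fun x hx => ?_
    simp only [Finset.sum_apply]
    rw [← Finset.sum_mul, h3 x (hspec x hx), one_mul]
  · intro j hj
    by_contra hcon
    push Not at hcon
    apply hj
    rw [← cfc_zero ℝ A]
    refine cfc_congr fun x hx => ?_
    simp only [Pi.zero_apply, mul_eq_zero]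
    by_contra hne
    push Not at hne
    exact absurd (h4 j x hne.1) (not_le.2 (hcon x hx hne.2))
  · intro z hz
    have hsum1 : ∀ x ∈ spectrum ℝ A, ∑ j ∈ Finset.range n, φ j x * p x ≤ 1 := by
      intro x hx
      rw [← Finset.sum_mul, h3 x (hspec x hx), one_mul]
      exact (hp01 x).2
    have hA1 : ∀ j, cfc (fun x => (c j - x) * (φ j x * p x)) A =
        (c j : ℂ) • cfc (fun x => φ j x * p x) A - A * cfc (fun x => φ j x * p x) A := by
      intro j
      simp_rw [sub_mul]
      rw [cfc_sub (fun x => c j * (φ j x * p x)) (fun x => x * (φ j x * p x)) A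
        (continuousOn_const.mul (hc j)) (continuousOn_id.mul (hc j)),
        cfc_const_mul (c j) _ A (hc j), cfc_mul (fun x => x) _ A continuousOn_id (hc j), cfc_id' ℝ A]
      rfl
    have hbound : ‖∑ j ∈ Finset.range n, z j • cfc (fun x => (c j - x) * (φ j x * p x)) A‖ ≤ ε := by
      refine aux_cfc_comb A hA _ _ (fun j => ((continuousOn_const.sub continuousOn_id).mul (hc j))) _ _ hε.le ?_
      intro x hx
      calc _ ≤ ∑ j ∈ Finset.range n, ‖z j * (((c j - x) * (φ j x * p x) : ℝ) : ℂ)‖ := norm_sum_le _ _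
        _ ≤ ∑ j ∈ Finset.range n, ε * (φ j x * p x) := by
          refine Finset.sum_le_sum fun j _ => ?_
          have hnn : 0 ≤ φ j x * p x := mul_nonneg (h2 j x) (hp01 x).1
          rw [norm_mul, Complex.norm_real, Real.norm_eq_abs, abs_mul, abs_of_nonneg hnn]
          by_cases h0 : φ j x = 0
          · simp [h0]
          · have := h4 j x h0
            rw [abs_sub_comm] at this
            calc ‖z j‖ * (|c j - x| * (φ j x * p x)) ≤ 1 * (ε * (φ j x * p x)) := by
                  gcongr
                  exact hz j
              _ = _ := one_mul _
        _ = ε * ∑ j ∈ Finset.range n, φ j x * p x := by rw [Finset.mul_sum]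
        _ ≤ ε * 1 := by gcongr; exact hsum1 x hx
        _ = ε := mul_one _
    have hcomm : ∀ j, A * cfc (fun x => φ j x * p x) A = cfc (fun x => φ j x * p x) A * A := fun j =>
      (cfc_commute_cfc (fun x => x) (fun x => φ j x * p x) A |> fun h => by
        rw [cfc_id' ℝ A] at h; exact h.eq)
    have e1 : ∑ j ∈ Finset.range n, (z j * c j) • cfc (fun x => φ j x * p x) A -
        A * ∑ j ∈ Finset.range n, z j • cfc (fun x => φ j x * p x) A =
        ∑ j ∈ Finset.range n, z j • cfc (fun x => (c j - x) * (φ j x * p x)) A := by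
      rw [Finset.mul_sum, ← Finset.sum_sub_distrib]
      refine Finset.sum_congr rfl fun j _ => ?_
      rw [hA1, smul_sub, smul_smul, mul_smul_comm]
    refine ⟨?_, ?_, ?_⟩
    · refine aux_cfc_comb A hA _ _ hc _ _ zero_le_one ?_
      intro x hx
      calc _ ≤ ∑ j ∈ Finset.range n, ‖z j * ((φ j x * p x : ℝ) : ℂ)‖ := norm_sum_le _ _
        _ ≤ ∑ j ∈ Finset.range n, (φ j x * p x) := by
          refine Finset.sum_le_sum fun j _ => ?_
          have hnn : 0 ≤ φ j x * p x := mul_nonneg (h2 j x) (hp01 x).1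
          rw [norm_mul, Complex.norm_real, Real.norm_eq_abs, abs_of_nonneg hnn]
          exact mul_le_of_le_one_left hnn (hz j)
        _ ≤ 1 := hsum1 x hx
    · rw [e1]; exact hbound
    · have e2 : (∑ j ∈ Finset.range n, z j • cfc (fun x => φ j x * p x) A) * A =
          A * ∑ j ∈ Finset.range n, z j • cfc (fun x => φ j x * p x) A := by
        rw [Finset.mul_sum, Finset.sum_mul]
        refine Finset.sum_congr rfl fun j _ => ?_
        rw [mul_smul_comm, hcomm, smul_mul_assoc]
      rw [e2, e1]; exact hbound

/-- The sin theta theorem with the sharp constant `π/2`. -/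
lemma aux_sin_theta (A B : H →L[ℂ] H) (hA : IsSelfAdjoint A) (hB : IsSelfAdjoint B)
    (p r : ℝ → ℝ) (hp : ContinuousOn p (spectrum ℝ A)) (hp01 : ∀ x, 0 ≤ p x ∧ p x ≤ 1)
    (hr : ContinuousOn r (spectrum ℝ B)) (hr01 : ∀ x, 0 ≤ r x ∧ r x ≤ 1)
    (δ : ℝ) (hδ : 0 < δ)
    (hsep : ∀ x ∈ spectrum ℝ A, ∀ y ∈ spectrum ℝ B, p x ≠ 0 → r y ≠ 0 → δ ≤ |x - y|) :
    ‖cfc r B * cfc p A‖ ≤ Real.pi / 2 * ‖A - B‖ / δ := by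
  have main : ∀ ε : ℝ, 0 < ε → 3 * ε < δ →
      ‖cfc r B * cfc p A‖ ≤ Real.pi / 2 * (‖A - B‖ + 2 * ε) / (δ - 3 * ε) := by
    intro ε hε hεδ
    obtain ⟨n, φ, c, h1, h2, h3, h4⟩ := aux_partition (max ‖A‖ ‖B‖) ε hε
    obtain ⟨a1, a2, a3⟩ := aux_U A hA _ ε hε (le_max_left _ _) p hp hp01 n φ c h1 h2 h3 h4
    obtain ⟨b1, b2, b3⟩ := aux_U B hB _ ε hε (le_max_right _ _) r hr hr01 n φ c h1 h2 h3 h4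
    set Pj : ℕ → (H →L[ℂ] H) := fun j => cfc (fun x => φ j x * p x) A with hPj
    set Rk : ℕ → (H →L[ℂ] H) := fun j => cfc (fun x => φ j x * r x) B with hRk
    have hG : ∀ t : ℝ, ‖∑ i ∈ Finset.range n ×ˢ Finset.range n,
        (((c i.1 - c i.2 : ℝ) : ℂ) * Complex.exp (((c i.1 - c i.2) * t : ℝ) * Complex.I)) • (Rk i.2 * Pj i.1)‖
        ≤ ‖A - B‖ + 2 * ε := by
      intro t
      set u : ℕ → ℂ := fun j => Complex.exp ((c j * t : ℝ) * Complex.I) with hu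
      set v : ℕ → ℂ := fun j => Complex.exp ((-(c j * t) : ℝ) * Complex.I) with hv
      obtain ⟨p1, p2, -⟩ := a3 u (fun j => (Complex.norm_exp_ofReal_mul_I _).le)
      obtain ⟨r1, -, r2⟩ := b3 v (fun j => (Complex.norm_exp_ofReal_mul_I _).le)
      set U := ∑ j ∈ Finset.range n, u j • cfc (fun x => φ j x * p x) A with hU
      set V := ∑ j ∈ Finset.range n, (u j * c j) • cfc (fun x => φ j x * p x) A with hV
      set U' := ∑ j ∈ Finset.range n, v j • cfc (fun x => φ j x * r x) B with hU'
      set V' := ∑ j ∈ Finset.range n, (v j * c j) • cfc (fun x => φ j x * r x) B with hV'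
      have e : ∑ i ∈ Finset.range n ×ˢ Finset.range n,
        (((c i.1 - c i.2 : ℝ) : ℂ) * Complex.exp (((c i.1 - c i.2) * t : ℝ) * Complex.I)) • (Rk i.2 * Pj i.1) =
          U' * V - V' * U := by
        rw [Finset.sum_product_right, hU', hV, hV', hU, Finset.sum_mul, Finset.sum_mul, ← Finset.sum_sub_distrib]
        refine Finset.sum_congr rfl fun k _ => ?_
        rw [Finset.mul_sum, Finset.mul_sum, ← Finset.sum_sub_distrib]
        refine Finset.sum_congr rfl fun j _ => ?_
        simp only [smul_mul_smul_comm]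
        rw [← sub_smul]
        congr 1
        simp only [hu, hv]
        rw [show (((c j - c k) * t : ℝ) : ℂ) * Complex.I = (c j * t : ℝ) * Complex.I + (-(c k * t) : ℝ) * Complex.I by push_cast; ring,
          Complex.exp_add]
        push_cast
        ring
      have e2 : U' * V - V' * U = U' * (A - B) * U + U' * (V - A * U) - (V' - U' * B) * U := by
        noncomm_ring
      rw [e, e2]
      have q1 : ‖U' * (A - B) * U‖ ≤ ‖A - B‖ := by
        calc _ ≤ ‖U'‖ * ‖A - B‖ * ‖U‖ := (norm_mul_le _ _).trans (by gcongr; exact norm_mul_le _ _)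
          _ ≤ 1 * ‖A - B‖ * 1 := by gcongr
          _ = _ := by ring
      have q2 : ‖U' * (V - A * U)‖ ≤ ε := by
        calc _ ≤ ‖U'‖ * ‖V - A * U‖ := norm_mul_le _ _
          _ ≤ 1 * ε := by gcongr
          _ = _ := by ring
      have q3 : ‖(V' - U' * B) * U‖ ≤ ε := by
        calc _ ≤ ‖V' - U' * B‖ * ‖U‖ := norm_mul_le _ _
          _ ≤ ε * 1 := by gcongr
          _ = _ := by ring
      calc _ ≤ ‖U' * (A - B) * U‖ + ‖U' * (V - A * U)‖ + ‖(V' - U' * B) * U‖ :=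
            (norm_sub_le _ _).trans (by gcongr; exact norm_add_le _ _)
        _ ≤ _ := by linarith
    have key := bohr_favard (Finset.range n ×ˢ Finset.range n) (fun i => Rk i.2 * Pj i.1)
      (fun i => c i.1 - c i.2) (δ - 3 * ε) (by linarith) (by
        intro i _ hne
        obtain ⟨x, hx, hpx, hxc⟩ := a2 i.1 (right_ne_zero_of_mul hne)
        obtain ⟨y, hy, hry, hyc⟩ := b2 i.2 (left_ne_zero_of_mul hne)
        have := hsep x hx y hy hpx hry
        have t1 : |x - y| ≤ |x - c i.1| + |c i.1 - c i.2| + |y - c i.2| := by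
          rw [show x - y = (x - c i.1) + (c i.1 - c i.2) - (y - c i.2) by ring]
          exact (abs_sub _ _).trans (by gcongr; exact abs_add_le _ _)
        linarith) (‖A - B‖ + 2 * ε) (by
        intro t
        have e : ∑ i ∈ Finset.range n ×ˢ Finset.range n,
            ((c i.1 - c i.2) * Real.sin ((c i.1 - c i.2) * t)) • (Rk i.2 * Pj i.1) =
            (1 / (2 * Complex.I)) • ((∑ i ∈ Finset.range n ×ˢ Finset.range n,
        (((c i.1 - c i.2 : ℝ) : ℂ) * Complex.exp (((c i.1 - c i.2) * t : ℝ) * Complex.I)) • (Rk i.2 * Pj i.1)) -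
            ∑ i ∈ Finset.range n ×ˢ Finset.range n,
        (((c i.1 - c i.2 : ℝ) : ℂ) * Complex.exp (((c i.1 - c i.2) * (-t) : ℝ) * Complex.I)) • (Rk i.2 * Pj i.1)) := by
          rw [← Finset.sum_sub_distrib, Finset.smul_sum]
          refine Finset.sum_congr rfl fun i _ => ?_
          rw [← sub_smul, smul_smul, ← Complex.coe_smul]
          congr 1
          push_cast
          rw [Complex.sin]
          have : (-((c i.1 - c i.2) * (t:ℂ)) * Complex.I) = ((c i.1 - c i.2) * (-t : ℂ)) * Complex.I := by ring
          rw [this]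
          generalize Complex.exp (((c i.1 - c i.2) * (-t : ℂ)) * Complex.I) = Y
          generalize Complex.exp ((c i.1 - c i.2) * (t:ℂ) * Complex.I) = X
          field_simp
          linear_combination (c i.1 - c i.2 : ℂ) * (Y - X) * Complex.I_sq
        rw [e, norm_smul]
        have hn : ‖(1 / (2 * Complex.I) : ℂ)‖ = 1 / 2 := by simp
        rw [hn]
        have := norm_sub_le (∑ i ∈ Finset.range n ×ˢ Finset.range n,
        (((c i.1 - c i.2 : ℝ) : ℂ) * Complex.exp (((c i.1 - c i.2) * t : ℝ) * Complex.I)) • (Rk i.2 * Pj i.1))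
            (∑ i ∈ Finset.range n ×ˢ Finset.range n,
        (((c i.1 - c i.2 : ℝ) : ℂ) * Complex.exp (((c i.1 - c i.2) * (-t) : ℝ) * Complex.I)) • (Rk i.2 * Pj i.1))
        have := hG t
        have := hG (-t)
        linarith)
    have e : ∑ i ∈ Finset.range n ×ˢ Finset.range n, Rk i.2 * Pj i.1 = cfc r B * cfc p A := by
      rw [← a1, ← b1, Finset.sum_product_right, Finset.sum_mul_sum]
    rwa [e] at key
  have hlim : Tendsto (fun ε : ℝ => Real.pi / 2 * (‖A - B‖ + 2 * ε) / (δ - 3 * ε)) (𝓝[>] 0)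
      (𝓝 (Real.pi / 2 * (‖A - B‖ + 2 * 0) / (δ - 3 * 0))) := by
    apply tendsto_nhdsWithin_of_tendsto_nhds
    apply ContinuousAt.tendsto (f := fun ε : ℝ => Real.pi / 2 * (‖A - B‖ + 2 * ε) / (δ - 3 * ε))
    apply ContinuousAt.div
    · fun_prop
    · fun_prop
    · simpa using hδ.ne'
  simp only [mul_zero, add_zero, sub_zero] at hlim
  refine ge_of_tendsto hlim ?_
  have hlt : ∀ᶠ ε : ℝ in 𝓝[>] 0, ε < δ / 3 := (eventually_lt_nhds (by positivity)).filter_mono nhdsWithin_le_nhds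
  filter_upwards [hlt, self_mem_nhdsWithin] with ε h1 h2
  exact main ε h2 (by linarith)

end

end

section
open MeasureTheory Set Filter Topology

lemma aux_angle {V : Type*} [NormedAddCommGroup V] [InnerProductSpace ℝ V] (u v w z : V)
    (θ₁ θ₂ : ℝ) (h1 : 0 ≤ θ₁) (h2 : 0 ≤ θ₂) (h12 : θ₁ + θ₂ < Real.pi / 2)
    (huv : inner ℝ v (u - v) = 0) (hvw : inner ℝ w (v - w) = 0)
    (huv' : ‖u - v‖ ≤ Real.sin θ₁ * ‖u‖) (hvw' : ‖v - w‖ ≤ Real.sin θ₂ * ‖v‖)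
    (hz : inner ℝ z (u - z) = 0) (hzw : inner ℝ (u - z) w = 0) :
    ‖u - z‖ ≤ Real.sin (θ₁ + θ₂) * ‖u‖ := by
  by_cases hu : u = 0
  · subst hu
    simp at hz
    simp [hz]
  have hun : 0 < ‖u‖ := norm_pos_iff.2 hu
  have lt1 : ∀ θ, 0 ≤ θ → θ < Real.pi / 2 → Real.sin θ < 1 := by
    intro θ hθ hθ2
    rw [← Real.sin_pi_div_two]
    exact Real.sin_lt_sin_of_lt_of_le_pi_div_two (by linarith) le_rfl hθ2
  have hs1 := lt1 θ₁ h1 (by linarith)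
  have hs2 := lt1 θ₂ h2 (by linarith)
  have hv : v ≠ 0 := by
    rintro rfl
    simp only [sub_zero] at huv'
    nlinarith
  have hvn : 0 < ‖v‖ := norm_pos_iff.2 hv
  have hw : w ≠ 0 := by
    rintro rfl
    simp only [sub_zero] at hvw'
    nlinarith
  have hwn : 0 < ‖w‖ := norm_pos_iff.2 hw
  have a1 : InnerProductGeometry.angle v u ≤ θ₁ := by
    have := InnerProductGeometry.angle_add_eq_arcsin_of_inner_eq_zero huv (Or.inl hv)
    rw [add_sub_cancel] at this
    rw [this, Real.arcsin_le_iff_le_sin' ⟨by linarith, by linarith⟩]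
    rwa [div_le_iff₀ hun]
  have a2 : InnerProductGeometry.angle w v ≤ θ₂ := by
    have := InnerProductGeometry.angle_add_eq_arcsin_of_inner_eq_zero hvw (Or.inl hw)
    rw [add_sub_cancel] at this
    rw [this, Real.arcsin_le_iff_le_sin' ⟨by linarith, by linarith⟩]
    rwa [div_le_iff₀ hvn]
  have a3 : InnerProductGeometry.angle w u ≤ θ₁ + θ₂ := by
    have := InnerProductGeometry.angle_le_angle_add_angle w v u
    linarith
  have hcos : Real.cos (θ₁ + θ₂) ≤ Real.cos (InnerProductGeometry.angle w u) :=
    Real.cos_le_cos_of_nonneg_of_le_pi (InnerProductGeometry.angle_nonneg _ _) (by linarith [Real.pi_pos]) a3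
  have e1 := InnerProductGeometry.cos_angle_mul_norm_mul_norm w u
  have e2 : inner ℝ w u = inner ℝ w z := by
    have : inner ℝ w (u - z) = 0 := by rw [real_inner_comm]; exact hzw
    rw [inner_sub_right] at this
    linarith
  have e3 : inner ℝ w z ≤ ‖w‖ * ‖z‖ := real_inner_le_norm _ _
  have hz1 : Real.cos (θ₁ + θ₂) * ‖u‖ ≤ ‖z‖ := by
    have : ‖w‖ * (Real.cos (θ₁ + θ₂) * ‖u‖) ≤ ‖w‖ * ‖z‖ := by
      calc _ = Real.cos (θ₁ + θ₂) * (‖w‖ * ‖u‖) := by ring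
        _ ≤ Real.cos (InnerProductGeometry.angle w u) * (‖w‖ * ‖u‖) := by gcongr
        _ ≤ _ := by linarith
    exact le_of_mul_le_mul_left this hwn
  have pyth : ‖u‖ * ‖u‖ = ‖z‖ * ‖z‖ + ‖u - z‖ * ‖u - z‖ := by
    have := norm_add_sq_eq_norm_sq_add_norm_sq_of_inner_eq_zero z (u - z) hz
    rwa [add_sub_cancel] at this
  have hc0 : 0 ≤ Real.cos (θ₁ + θ₂) := Real.cos_nonneg_of_neg_pi_div_two_le_of_le (by linarith [Real.pi_pos]) h12.le
  have hs0 : 0 ≤ Real.sin (θ₁ + θ₂) := Real.sin_nonneg_of_nonneg_of_le_pi (by linarith) (by linarith [Real.pi_pos])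
  apply abs_le_of_sq_le_sq' _ (by positivity) |>.2
  have := Real.sin_sq_add_cos_sq (θ₁ + θ₂)
  have hsq : (Real.cos (θ₁ + θ₂) * ‖u‖) ^ 2 ≤ ‖z‖ ^ 2 := by gcongr
  nlinarith

variable {H : Type*} [NormedAddCommGroup H] [InnerProductSpace ℂ H] [CompleteSpace H]

lemma aux_proj_inner (P : H →L[ℂ] H) (hP : IsStarProjection P) (x y : H) :
    inner ℂ (P x) (y - P y) = 0 := by
  have hs := hP.isSelfAdjoint
  have : inner ℂ (P x) (y - P y) = inner ℂ x (P (y - P y)) := by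
    rw [← ContinuousLinearMap.adjoint_inner_right, ← ContinuousLinearMap.star_eq_adjoint, hs.star_eq]
  rw [this]
  have h2 : P (P y) = P y := by
    have := hP.isIdempotentElem.eq
    exact congrArg (fun T : H →L[ℂ] H => T y) this
  simp [h2]

lemma aux_proj_pyth (P : H →L[ℂ] H) (hP : IsStarProjection P) (x : H) :
    ‖x‖ ^ 2 = ‖P x‖ ^ 2 + ‖x - P x‖ ^ 2 := by
  have := norm_add_sq_eq_norm_sq_add_norm_sq_of_inner_eq_zero (𝕜 := ℂ) (P x) (x - P x) (aux_proj_inner P hP x x)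
  rw [add_sub_cancel] at this
  nlinarith

lemma aux_proj_norm (P : H →L[ℂ] H) (hP : IsStarProjection P) (x : H) : ‖P x‖ ≤ ‖x‖ := by
  have := aux_proj_pyth P hP x
  exact abs_le_of_sq_le_sq' (by nlinarith [sq_nonneg ‖x - P x‖]) (norm_nonneg _) |>.2

/-- the norm of a difference of projections is controlled by the two corners -/
lemma aux_proj_sub (P Q : H →L[ℂ] H) (hP : IsStarProjection P) (hQ : IsStarProjection Q) (c : ℝ)
    (h1 : ‖(1 - Q) * P‖ ≤ c) (h2 : ‖(1 - P) * Q‖ ≤ c) : ‖P - Q‖ ≤ c := by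
  have hc : 0 ≤ c := (norm_nonneg _).trans h1
  have h3 : ‖Q * (1 - P)‖ ≤ c := by
    rw [← norm_star]
    simpa [hQ.isSelfAdjoint.star_eq, hP.isSelfAdjoint.star_eq] using h2
  refine ContinuousLinearMap.opNorm_le_bound _ hc fun x => ?_
  have hQQ : ∀ y, Q (Q y) = Q y := fun y =>
    congrArg (fun T : H →L[ℂ] H => T y) hQ.isIdempotentElem.eq
  have hPP : ∀ y, P (P y) = P y := fun y =>
    congrArg (fun T : H →L[ℂ] H => T y) hP.isIdempotentElem.eq
  have p1 := aux_proj_pyth Q hQ ((P - Q) x)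
  have e1 : Q ((P - Q) x) = - (Q * (1 - P)) (x - P x) := by
    simp [hQQ, hPP]
  have e2 : (P - Q) x - Q ((P - Q) x) = ((1 - Q) * P) (P x) := by
    simp [hQQ, hPP]
  rw [e2, e1, norm_neg] at p1
  have b1 : ‖(Q * (1 - P)) (x - P x)‖ ≤ c * ‖x - P x‖ := ContinuousLinearMap.le_of_opNorm_le _ h3 _
  have b2 : ‖((1 - Q) * P) (P x)‖ ≤ c * ‖P x‖ := ContinuousLinearMap.le_of_opNorm_le _ h1 _
  have p2 := aux_proj_pyth P hP x
  refine abs_le_of_sq_le_sq' ?_ (by positivity) |>.2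
  have b1' : ‖(Q * (1 - P)) (x - P x)‖ ^ 2 ≤ (c * ‖x - P x‖) ^ 2 := by gcongr
  have b2' : ‖((1 - Q) * P) (P x)‖ ^ 2 ≤ (c * ‖P x‖) ^ 2 := by gcongr
  rw [mul_pow] at b1' b2'
  rw [p1, mul_pow, p2]
  linarith

lemma aux_corner (P Q R : H →L[ℂ] H) (hP : IsStarProjection P) (hQ : IsStarProjection Q)
    (hR : IsStarProjection R) (θ₁ θ₂ : ℝ) (h1 : 0 ≤ θ₁) (h2 : 0 ≤ θ₂) (h12 : θ₁ + θ₂ < Real.pi / 2)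
    (hPQ : ‖P - Q‖ ≤ Real.sin θ₁) (hQR : ‖Q - R‖ ≤ Real.sin θ₂) :
    ‖(1 - R) * P‖ ≤ Real.sin (θ₁ + θ₂) := by
  have hs0 : 0 ≤ Real.sin (θ₁ + θ₂) := Real.sin_nonneg_of_nonneg_of_le_pi (by linarith) (by linarith [Real.pi_pos])
  refine ContinuousLinearMap.opNorm_le_bound _ hs0 fun x => ?_
  have hQQ : ∀ y, Q (Q y) = Q y := fun y =>
    congrArg (fun T : H →L[ℂ] H => T y) hQ.isIdempotentElem.eq
  have hPP : ∀ y, P (P y) = P y := fun y =>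
    congrArg (fun T : H →L[ℂ] H => T y) hP.isIdempotentElem.eq
  let _ := InnerProductSpace.rclikeToReal ℂ H
  have hre : ∀ a b : H, inner ℂ a b = 0 → inner ℝ a b = 0 := by
    intro a b h
    rw [real_inner_eq_re_inner ℂ, h]; simp
  have key := aux_angle (P x) (Q (P x)) (R (Q (P x))) (R (P x)) θ₁ θ₂ h1 h2 h12
    (hre _ _ (aux_proj_inner Q hQ _ _)) (hre _ _ (aux_proj_inner R hR _ _))
    (by
      have := ContinuousLinearMap.le_of_opNorm_le _ hPQ (P x)
      simpa [hPP] using this)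
    (by
      have := ContinuousLinearMap.le_of_opNorm_le _ hQR (Q (P x))
      simpa [hQQ] using this)
    (hre _ _ (aux_proj_inner R hR _ _))
    (by rw [real_inner_comm]; exact hre _ _ (aux_proj_inner R hR _ _))
  have e : ((1 - R) * P) x = P x - R (P x) := by simp
  rw [e]
  exact key.trans (by gcongr; exact aux_proj_norm P hP x)

lemma aux_proj_le_one (P Q : H →L[ℂ] H) (hP : IsStarProjection P) (hQ : IsStarProjection Q) :
    ‖P - Q‖ ≤ 1 := by
  have n1 : ∀ R : H →L[ℂ] H, IsStarProjection R → ‖R‖ ≤ 1 := fun R hR =>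
    ContinuousLinearMap.opNorm_le_bound _ zero_le_one fun x => by
      rw [one_mul]; exact aux_proj_norm R hR x
  have m : ∀ R S : H →L[ℂ] H, IsStarProjection R → IsStarProjection S → ‖(1 - R) * S‖ ≤ 1 := by
    intro R S hR hS
    calc _ ≤ ‖1 - R‖ * ‖S‖ := norm_mul_le _ _
      _ ≤ 1 * 1 := by gcongr; exacts [n1 _ hR.one_sub, n1 _ hS]
      _ = 1 := one_mul _
  exact aux_proj_sub P Q hP hQ 1 (m _ _ hQ hP) (m _ _ hP hQ)

/-- triangle inequality for the angular metric on projections -/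
lemma aux_arcsin_triangle (P Q R : H →L[ℂ] H) (hP : IsStarProjection P) (hQ : IsStarProjection Q)
    (hR : IsStarProjection R) :
    Real.arcsin ‖P - R‖ ≤ Real.arcsin ‖P - Q‖ + Real.arcsin ‖Q - R‖ := by
  have a1 : 0 ≤ Real.arcsin ‖P - Q‖ := Real.arcsin_nonneg.2 (norm_nonneg _)
  have a2 : 0 ≤ Real.arcsin ‖Q - R‖ := Real.arcsin_nonneg.2 (norm_nonneg _)
  rcases le_or_gt (Real.pi / 2) (Real.arcsin ‖P - Q‖ + Real.arcsin ‖Q - R‖) with h | h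
  · exact (Real.arcsin_le_pi_div_two _).trans h
  have s1 : Real.sin (Real.arcsin ‖P - Q‖) = ‖P - Q‖ :=
    Real.sin_arcsin (by linarith [norm_nonneg (P - Q)]) (aux_proj_le_one P Q hP hQ)
  have s2 : Real.sin (Real.arcsin ‖Q - R‖) = ‖Q - R‖ :=
    Real.sin_arcsin (by linarith [norm_nonneg (Q - R)]) (aux_proj_le_one Q R hQ hR)
  rw [Real.arcsin_le_iff_le_sin' ⟨by linarith [Real.pi_pos], h⟩]
  refine aux_proj_sub P R hP hR _ (aux_corner P Q R hP hQ hR _ _ a1 a2 h s1.ge s2.ge) ?_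
  rw [add_comm]
  refine aux_corner R Q P hR hQ hP _ _ a2 a1 (by linarith) ?_ ?_
  · rw [s2, norm_sub_rev]
  · rw [s1, norm_sub_rev]

end

section
open MeasureTheory Set Filter Topology

lemma aux_real (φ ψ : ℝ → ℝ) (a b M : ℝ) (hab : a ≤ b) (hψ : IntervalIntegrable ψ volume a b)
    (hψ0 : ∀ x ∈ Icc a b, 0 ≤ ψ x) (hψM : ∀ x ∈ Icc a b, ψ x ≤ M)
    (hφ : ContinuousOn φ (Icc a b))
    (hs : ∀ x ∈ Ico a b, ∀ r, ψ x < r → ∀ᶠ z in 𝓝[>] x, |φ z - φ x| ≤ r * (z - x)) :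
    φ b - φ a ≤ ∫ x in a..b, ψ x := by
  have hM0 : 0 ≤ M := (hψ0 a ⟨le_rfl, hab⟩).trans (hψM a ⟨le_rfl, hab⟩)
  have gen : ∀ g : ℝ → ℝ, ContinuousOn g (Icc a b) →
      (∀ x ∈ Ico a b, ∀ r, ψ x < r → ∀ᶠ z in 𝓝[>] x, |g z - g x| ≤ r * (z - x)) →
      ∀ x ∈ Icc a b, ∀ y ∈ Icc a b, x ≤ y → g y - g x ≤ M * (y - x) := by
    intro g hg hgs x hx y hy hxy
    have := image_le_of_liminf_slope_right_le_deriv_boundary (f := g) (a := x) (b := y)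
      (hg.mono (Icc_subset_Icc hx.1 hy.2)) (B := fun z => g x + M * (z - x)) (B' := fun _ => M)
      (by simp) (by fun_prop)
      (fun z _ => by
        have := ((hasDerivAt_id z).sub_const x).const_mul M |>.const_add (g x)
        simpa using this.hasDerivWithinAt)
      (fun z hz r hr => by
        have hz' : z ∈ Ico a b := ⟨hx.1.trans hz.1, hz.2.trans_le hy.2⟩
        have h1 := hgs z hz' ((M + r) / 2)
          ((hψM z (Ico_subset_Icc_self hz')).trans_lt (by linarith))
        refine Eventually.frequently ?_
        filter_upwards [h1, self_mem_nhdsWithin] with w hw hzw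
        have hzw' : 0 < w - z := sub_pos.2 hzw
        rw [slope_def_field, div_lt_iff₀ hzw']
        have := (abs_le.1 hw).2
        nlinarith) (right_mem_Icc.2 hxy)
    linarith
  have hlip : LipschitzOnWith ⟨M, hM0⟩ φ (uIcc a b) := by
    rw [uIcc_of_le hab]
    have g1 := gen φ hφ hs
    have g2 := gen (fun x => - φ x) hφ.neg (fun x hx r hr => by
      filter_upwards [hs x hx r hr] with z hz
      rwa [show -φ z - -φ x = -(φ z - φ x) by ring, abs_neg])
    have g3 : ∀ x ∈ Icc a b, ∀ y ∈ Icc a b, x ≤ y → |φ x - φ y| ≤ M * |x - y| := by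
      intro x hx y hy hxy
      have := g1 x hx y hy hxy
      have := g2 x hx y hy hxy
      rw [abs_of_nonpos (sub_nonpos.2 hxy), abs_le]
      constructor <;> linarith
    refine LipschitzOnWith.of_dist_le_mul fun x hx y hy => ?_
    rw [Real.dist_eq, Real.dist_eq]
    change _ ≤ M * _
    rcases le_total x y with h | h
    · exact g3 x hx y hy h
    · rw [abs_sub_comm, abs_sub_comm x y]; exact g3 y hy x hx h
  have hac := hlip.absolutelyContinuousOnInterval
  rw [← hac.integral_deriv_eq_sub]
  refine intervalIntegral.integral_mono_on_of_le_Ioo hab hac.intervalIntegrable_deriv hψ ?_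
  intro x hx
  by_cases hd : DifferentiableAt ℝ φ x
  · have ht := (hasDerivWithinAt_iff_tendsto_slope' self_notMem_Ioi).1
      (hd.hasDerivAt.hasDerivWithinAt (s := Ioi x))
    refine le_of_forall_gt_imp_ge_of_dense fun r hr => ?_
    refine le_of_tendsto ht ?_
    filter_upwards [hs x ⟨hx.1.le, hx.2⟩ r hr, self_mem_nhdsWithin] with z hz hxz
    rw [slope_def_field, div_le_iff₀ (sub_pos.2 hxz)]
    exact (abs_le.1 hz).2
  · rw [deriv_zero_of_not_differentiableAt hd]
    exact hψ0 x (Ioo_subset_Icc_self hx)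

lemma setDist_le {s t : Set ℝ} {x y : ℝ} (hx : x ∈ s) (hy : y ∈ t) : setDist s t ≤ |x - y| := by
  rw [← Real.dist_eq]
  refine csInf_le ⟨0, ?_⟩ (mem_image2_of_mem hx hy)
  rintro _ ⟨a, _, b, _, rfl⟩
  exact dist_nonneg

lemma aux_disj {s t : Set ℝ} (h : 0 < setDist s t) : Disjoint s t := by
  rw [Set.disjoint_left]
  intro x hx hy
  have := setDist_le hx hy
  simp at this
  linarith

lemma aux_ind {s t : Set ℝ} (hs : IsClosed s) (ht : IsClosed t) (h : Disjoint s t) :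
    ContinuousOn (Set.indicator s (fun _ => (1:ℝ))) (s ∪ t) := by
  refine ContinuousOn.union_of_isClosed ?_ ?_ hs ht
  · exact continuousOn_const.congr fun x hx => Set.indicator_of_mem hx _
  · exact (continuousOn_const (c := (0:ℝ))).congr fun x hx =>
      Set.indicator_of_notMem (Set.disjoint_right.1 h hx) _

lemma aux_ind01 (s : Set ℝ) (x : ℝ) : 0 ≤ Set.indicator s (fun _ => (1:ℝ)) x ∧
    Set.indicator s (fun _ => (1:ℝ)) x ≤ 1 := by
  by_cases h : x ∈ s <;> simp [h]

variable {H : Type*} [NormedAddCommGroup H] [InnerProductSpace ℂ H] [CompleteSpace H]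

lemma aux_isProj (A : H →L[ℂ] H) (s t : Set ℝ) (hs : IsClosed s)
    (ht : IsClosed t) (h : Disjoint s t) (hspec : spectrum ℝ A = s ∪ t) :
    IsStarProjection (spectralProj A s) := by
  have hc := aux_ind hs ht h
  rw [← hspec] at hc
  refine ⟨?_, IsSelfAdjoint.cfc⟩
  unfold IsIdempotentElem spectralProj
  rw [← cfc_mul _ _ A hc hc]
  congr 1
  ext x
  by_cases hx : x ∈ s <;> simp [hx]

lemma aux_compl (A : H →L[ℂ] H) (hA : IsSelfAdjoint A) (s t : Set ℝ) (hs : IsClosed s)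
    (ht : IsClosed t) (h : Disjoint s t) (hspec : spectrum ℝ A = s ∪ t) :
    1 - spectralProj A s = spectralProj A t := by
  have hc := aux_ind hs ht h
  rw [← hspec] at hc
  unfold spectralProj
  rw [← cfc_const_one ℝ A, ← cfc_sub _ _ A continuousOn_const hc]
  refine cfc_congr fun x hx => ?_
  rw [hspec] at hx
  rcases hx with hx | hx
  · simp [hx, Set.disjoint_left.1 h hx]
  · simp [hx, Set.disjoint_right.1 h hx]

lemma aux_static (A B : H →L[ℂ] H) (hA : IsSelfAdjoint A) (hB : IsSelfAdjoint B)
    (s t s' t' : Set ℝ) (hs : IsClosed s) (ht : IsClosed t) (h : Disjoint s t)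
    (hspec : spectrum ℝ A = s ∪ t) (hs' : IsClosed s') (ht' : IsClosed t') (h' : Disjoint s' t')
    (hspec' : spectrum ℝ B = s' ∪ t') (δ : ℝ) (hδ : 0 < δ)
    (h1 : ∀ x ∈ s, ∀ y ∈ t', δ ≤ |x - y|) (h2 : ∀ x ∈ t, ∀ y ∈ s', δ ≤ |x - y|) :
    ‖spectralProj A s - spectralProj B s'‖ ≤ Real.pi / 2 * ‖A - B‖ / δ := by
  have cs := aux_ind hs ht h
  have ct := aux_ind ht hs h.symm
  have cs' := aux_ind hs' ht' h'
  have ct' := aux_ind ht' hs' h'.symm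
  rw [union_comm] at ct ct'
  rw [← hspec] at cs ct
  rw [← hspec'] at cs' ct'
  refine aux_proj_sub _ _ (aux_isProj A s t hs ht h hspec) (aux_isProj B s' t' hs' ht' h' hspec') _ ?_ ?_
  · rw [aux_compl B hB s' t' hs' ht' h' hspec']
    refine aux_sin_theta A B hA hB _ _ cs (aux_ind01 _) ct' (aux_ind01 _) δ hδ ?_
    intro x _ y _ hx hy
    exact h1 x (Set.mem_of_indicator_ne_zero hx) y (Set.mem_of_indicator_ne_zero hy)
  · rw [aux_compl A hA s t hs ht h hspec, norm_sub_rev A B]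
    refine aux_sin_theta B A hB hA _ _ cs' (aux_ind01 _) ct (aux_ind01 _) δ hδ ?_
    intro x _ y _ hx hy
    rw [abs_sub_comm]
    exact h2 y (Set.mem_of_indicator_ne_zero hy) x (Set.mem_of_indicator_ne_zero hx)

end

section
open MeasureTheory Set Filter Topology

variable {H : Type*} [NormedAddCommGroup H] [InnerProductSpace ℂ H] [CompleteSpace H]

lemma aux_usc_ev {I : Set ℝ} {ω : ℝ → Set ℝ} (h : UpperSemicontinuousFamilyOn ω I) {t : ℝ}
    (ht : t ∈ I) {ε : ℝ} (hε : 0 < ε) : ∀ᶠ s in 𝓝[I] t, ω s ⊆ Metric.thickening ε (ω t) := by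
  obtain ⟨δ, hδ, h1⟩ := h t ht ε hε
  have : Metric.ball t δ ∈ 𝓝[I] t := mem_nhdsWithin_of_mem_nhds (Metric.ball_mem_nhds t hδ)
  filter_upwards [this, self_mem_nhdsWithin] with s hs hsI
  exact h1 s hsI (by simpa [Real.dist_eq] using hs)

lemma aux_dist_lsc (I : Set ℝ) (ω Ω : ℝ → Set ℝ)
    (hne : ∀ t ∈ I, (ω t).Nonempty ∧ (Ω t).Nonempty)
    (huscω : UpperSemicontinuousFamilyOn ω I)
    (huscΩ : UpperSemicontinuousFamilyOn Ω I) :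
    LowerSemicontinuousOn (fun t => setDist (ω t) (Ω t)) I := by
  intro t ht c hc
  set d := setDist (ω t) (Ω t) with hd
  have hε : 0 < (d - c) / 3 := by
    have : c < d := hc
    linarith
  filter_upwards [aux_usc_ev huscω ht hε, aux_usc_ev huscΩ ht hε, self_mem_nhdsWithin] with s h1 h2 hs
  have : c + (d - c) / 3 ≤ setDist (ω s) (Ω s) := by
    refine le_csInf ((hne s hs).1.image2 (hne s hs).2) ?_
    rintro _ ⟨x, hx, y, hy, rfl⟩
    obtain ⟨x', hx', hxx⟩ := Metric.mem_thickening_iff.1 (h1 hx)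
    obtain ⟨y', hy', hyy⟩ := Metric.mem_thickening_iff.1 (h2 hy)
    have h3 := setDist_le hx' hy'
    rw [← Real.dist_eq] at h3
    have h4 : dist x' y' ≤ dist x x' + dist x y + dist y y' := by
      have := dist_triangle4 x' x y y'
      rwa [dist_comm x' x] at this
    linarith
  change c < _
  linarith

lemma aux_loc (I : Set ℝ)
    (B : ℝ → (H →L[ℂ] H)) (hBsa : ∀ t ∈ I, IsSelfAdjoint (B t))
    (hB : ContDiffOn ℝ 1 B I)
    (ω Ω : ℝ → Set ℝ)
    (hcl : ∀ t ∈ I, IsClosed (ω t) ∧ IsClosed (Ω t))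
    (hspec : ∀ t ∈ I, spectrum ℝ (B t) = ω t ∪ Ω t)
    (hdist : ∀ t ∈ I, 0 < setDist (ω t) (Ω t))
    (huscω : UpperSemicontinuousFamilyOn ω I)
    (huscΩ : UpperSemicontinuousFamilyOn Ω I)
    (P : ℝ → (H →L[ℂ] H)) (hP : ∀ t ∈ I, P t = spectralProj (B t) (ω t)) :
    ∀ t ∈ I, ∀ r, Real.pi / 2 * (‖derivWithin B I t‖ / setDist (ω t) (Ω t)) < r →
      ∀ᶠ s in 𝓝[I] t, ‖P s - P t‖ ≤ r * |s - t| := by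
  intro t ht r hr
  set d := setDist (ω t) (Ω t) with hd
  have hd0 : 0 < d := hdist t ht
  set b := derivWithin B I t with hb
  obtain ⟨η, hη0, hηd, hηr⟩ : ∃ η : ℝ, 0 < η ∧ η < d ∧ Real.pi / 2 * ((‖b‖ + η) / (d - η)) < r := by
    have hc : ContinuousAt (fun η : ℝ => Real.pi / 2 * ((‖b‖ + η) / (d - η))) 0 := by
      apply ContinuousAt.mul continuousAt_const
      apply ContinuousAt.div
      · fun_prop
      · fun_prop
      · simpa using hd0.ne'
    have h1 : ∀ᶠ η in 𝓝 (0:ℝ), Real.pi / 2 * ((‖b‖ + η) / (d - η)) < r := by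
      refine hc.eventually_lt continuousAt_const ?_
      simpa using hr
    have h2 : ∀ᶠ η in 𝓝 (0:ℝ), η < d := eventually_lt_nhds hd0
    obtain ⟨η, ⟨h3, h4⟩, h5⟩ := (((h1.and h2).filter_mono (nhdsWithin_le_nhds (s := Ioi 0))).and
      self_mem_nhdsWithin).exists
    exact ⟨η, h5, h4, h3⟩
  have hder : HasDerivWithinAt B b I t := (hB.differentiableOn (by simp) t ht).hasDerivWithinAt
  have hlo : ∀ᶠ s in 𝓝[I] t, ‖B s - B t‖ ≤ (‖b‖ + η) * |s - t| := by
    have := (hasDerivWithinAt_iff_isLittleO.1 hder).def hη0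
    filter_upwards [this] with s hs
    calc ‖B s - B t‖ = ‖(B s - B t - (s - t) • b) + (s - t) • b‖ := by rw [sub_add_cancel]
      _ ≤ ‖B s - B t - (s - t) • b‖ + ‖(s - t) • b‖ := norm_add_le _ _
      _ ≤ η * |s - t| + |s - t| * ‖b‖ := by
        rw [norm_smul, Real.norm_eq_abs] at *
        gcongr
      _ = _ := by ring
  filter_upwards [hlo, aux_usc_ev huscω ht hη0, aux_usc_ev huscΩ ht hη0, self_mem_nhdsWithin]
    with s h1 h2 h3 hs
  rw [hP s hs, hP t ht]
  have hdη : 0 < d - η := sub_pos.2 hηd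
  have key := aux_static (B s) (B t) (hBsa s hs) (hBsa t ht) (ω s) (Ω s) (ω t) (Ω t)
    (hcl s hs).1 (hcl s hs).2 (aux_disj (hdist s hs)) (hspec s hs)
    (hcl t ht).1 (hcl t ht).2 (aux_disj (hdist t ht)) (hspec t ht) (d - η) hdη
    (by
      intro x hx y hy
      obtain ⟨x', hx', hxx⟩ := Metric.mem_thickening_iff.1 (h2 hx)
      have h4 := setDist_le hx' hy
      rw [← Real.dist_eq] at h4 ⊢
      have := dist_triangle_left x' y x
      linarith)
    (by
      intro x hx y hy
      obtain ⟨x', hx', hxx⟩ := Metric.mem_thickening_iff.1 (h3 hx)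
      have h4 := setDist_le hy hx'
      rw [← Real.dist_eq] at h4 ⊢
      have := dist_triangle_left x' y x
      rw [dist_comm y x'] at h4
      linarith)
  refine key.trans ?_
  have hpi : 0 < Real.pi / 2 := by positivity
  calc Real.pi / 2 * ‖B s - B t‖ / (d - η) ≤ Real.pi / 2 * ((‖b‖ + η) * |s - t|) / (d - η) := by gcongr
    _ = Real.pi / 2 * ((‖b‖ + η) / (d - η)) * |s - t| := by ring
    _ ≤ r * |s - t| := by gcongr

lemma aux_cont (I : Set ℝ) (P : ℝ → (H →L[ℂ] H)) (t : ℝ) {c : ℝ}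
    (h : ∀ r, c < r → ∀ᶠ s in 𝓝[I] t, ‖P s - P t‖ ≤ r * |s - t|) : ContinuousWithinAt P I t := by
  rw [ContinuousWithinAt, tendsto_iff_norm_sub_tendsto_zero]
  refine squeeze_zero' (Eventually.of_forall fun _ => norm_nonneg _) (h (c + 1) (by linarith)) ?_
  have : ContinuousAt (fun s : ℝ => (c + 1) * |s - t|) t := by fun_prop
  have h2 := this.tendsto
  simp only [sub_self, abs_zero, mul_zero] at h2
  exact h2.mono_left nhdsWithin_le_nhds

lemma aux_arcsin_loc (I : Set ℝ) (P : ℝ → (H →L[ℂ] H)) (t : ℝ) (c : ℝ) (hc : 0 ≤ c)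
    (h : ∀ r, c < r → ∀ᶠ s in 𝓝[I] t, ‖P s - P t‖ ≤ r * |s - t|) :
    ∀ r, c < r → ∀ᶠ s in 𝓝[I] t, Real.arcsin ‖P s - P t‖ ≤ r * |s - t| := by
  intro r hr
  set r' := (c + r) / 2 with hr'
  have hr1 : c < r' := by rw [hr']; linarith
  have hr2 : r' < r := by rw [hr']; linarith
  have hr0 : 0 < r' := hc.trans_lt hr1
  have hκ : 0 < r / r' - 1 := by
    rw [sub_pos, lt_div_iff₀ hr0]; linarith
  have hd : HasDerivAt Real.arcsin 1 0 := by
    simpa using Real.hasDerivAt_arcsin (x := 0) (by norm_num) (by norm_num)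
  have h1 := (hasDerivAt_iff_isLittleO.1 hd).def hκ
  have ht : Tendsto (fun s => ‖P s - P t‖) (𝓝[I] t) (𝓝 0) :=
    tendsto_iff_norm_sub_tendsto_zero.1 (aux_cont I P t h)
  filter_upwards [ht.eventually h1, h r' hr1] with s hs1 hs2
  simp only [Real.arcsin_zero, sub_zero, smul_eq_mul, mul_one, Real.norm_eq_abs, abs_norm] at hs1
  have h3 := (abs_le.1 hs1).2
  calc Real.arcsin ‖P s - P t‖ ≤ r / r' * ‖P s - P t‖ := by linarith
    _ ≤ r / r' * (r' * |s - t|) := by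
      gcongr
      linarith
    _ = r * |s - t| := by field_simp

end

/-- Let `t ↦ B_t` be a `C¹`-smooth path of bounded self-adjoint operators on
an interval `I ∋ 0`, whose spectra split as `ω_t ∪ Ω_t` into nonempty closed sets at positive
distance, depending upper semicontinuously on `t`, and let `P_t` be the spectral projection of
`B_t` associated with `ω_t`. Then for `0 ≤ t ∈ I`:
`arcsin ‖P_t − P_0‖ ≤ (π/2) ∫_0^t ‖B'_τ‖ / dist(ω_τ, Ω_τ) dτ`. -/
theorem arcsin_norm_spectralProj_sub_le {H : Type*} [NormedAddCommGroup H]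
    [InnerProductSpace ℂ H] [CompleteSpace H] [TopologicalSpace.SeparableSpace H]
    (I : Set ℝ) (hI : I.OrdConnected) (h0I : (0:ℝ) ∈ I)
    (B : ℝ → (H →L[ℂ] H)) (hBsa : ∀ t ∈ I, IsSelfAdjoint (B t))
    (hB : ContDiffOn ℝ 1 B I)
    (ω Ω : ℝ → Set ℝ)
    (hne : ∀ t ∈ I, (ω t).Nonempty ∧ (Ω t).Nonempty)
    (hcl : ∀ t ∈ I, IsClosed (ω t) ∧ IsClosed (Ω t))
    (hspec : ∀ t ∈ I, spectrum ℝ (B t) = ω t ∪ Ω t)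
    (hdist : ∀ t ∈ I, 0 < setDist (ω t) (Ω t))
    (huscω : UpperSemicontinuousFamilyOn ω I)
    (huscΩ : UpperSemicontinuousFamilyOn Ω I)
    (P : ℝ → (H →L[ℂ] H)) (hP : ∀ t ∈ I, P t = spectralProj (B t) (ω t)) :
    ∀ t ∈ I, 0 ≤ t →
      Real.arcsin ‖P t - P 0‖ ≤
        (Real.pi / 2) * ∫ τ in (0:ℝ)..t, ‖derivWithin B I τ‖ / setDist (ω τ) (Ω τ) := by
  have hdisj : ∀ t ∈ I, Disjoint (ω t) (Ω t) := fun t ht => aux_disj (hdist t ht)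
  have hproj : ∀ t ∈ I, IsStarProjection (P t) := fun t ht => by
    rw [hP t ht]
    exact aux_isProj (B t) (ω t) (Ω t) (hcl t ht).1 (hcl t ht).2 (hdisj t ht) (hspec t ht)
  have hlsc := aux_dist_lsc I ω Ω hne huscω huscΩ
  have hloc := aux_loc I B hBsa hB ω Ω hcl hspec hdist huscω huscΩ P hP
  intro t ht ht0
  have hsub : Set.Icc 0 t ⊆ I := hI.out h0I ht
  rcases ht0.eq_or_lt with rfl | htpos
  · simp
  have hcφ : ContinuousOn (fun s => Real.arcsin ‖P s - P 0‖) (Set.Icc 0 t) := by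
    have hcP : ContinuousOn P I := fun x hx => aux_cont I P x (hloc x hx)
    exact Real.continuous_arcsin.comp_continuousOn ((hcP.mono hsub).sub continuousOn_const).norm
  have hcvx : Convex ℝ I := hI.convex
  have hitg : (interior I).Nonempty := by
    refine Set.Nonempty.mono (interior_mono hsub) ?_
    rw [interior_Icc]
    exact Set.nonempty_Ioo.2 htpos
  have hcb : ContinuousOn (fun s => ‖derivWithin B I s‖) (Set.Icc 0 t) :=
    ((hB.continuousOn_derivWithin (uniqueDiffOn_convex hcvx hitg) le_rfl).mono hsub).norm
  obtain ⟨m, hm, hmin⟩ := (hlsc.mono hsub).exists_isMinOn (Set.nonempty_Icc.2 ht0) isCompact_Icc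
  obtain ⟨K, hK⟩ := (isCompact_Icc.image_of_continuousOn hcb).bddAbove
  have hdm := hdist m (hsub hm)
  have hbd : ∀ x ∈ Set.Icc 0 t, ‖derivWithin B I x‖ / setDist (ω x) (Ω x) ≤ K / setDist (ω m) (Ω m) := by
    intro x hx
    have h1 : ‖derivWithin B I x‖ ≤ K := hK ⟨x, hx, rfl⟩
    have h2 : setDist (ω m) (Ω m) ≤ setDist (ω x) (Ω x) := hmin hx
    have h3 : 0 ≤ K := (norm_nonneg _).trans h1
    gcongr
  have hnn : ∀ x ∈ Set.Icc 0 t, 0 ≤ ‖derivWithin B I x‖ / setDist (ω x) (Ω x) := fun x hx =>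
    div_nonneg (norm_nonneg _) (hdist x (hsub hx)).le
  have hpi : 0 < Real.pi / 2 := by positivity
  have hii : IntervalIntegrable (fun τ => ‖derivWithin B I τ‖ / setDist (ω τ) (Ω τ)) MeasureTheory.volume 0 t := by
    rw [intervalIntegrable_iff_integrableOn_Icc_of_le ht0]
    have hme : AEMeasurable (fun τ => ‖derivWithin B I τ‖ / setDist (ω τ) (Ω τ))
        (MeasureTheory.volume.restrict (Set.Icc 0 t)) := by
      refine (hcb.aemeasurable measurableSet_Icc).div ?_
      refine aemeasurable_restrict_of_measurable_subtype measurableSet_Icc ?_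
      exact (lowerSemicontinuous_restrict_iff.2 (hlsc.mono hsub)).measurable
    refine MeasureTheory.Integrable.of_bound hme.aestronglyMeasurable (K / setDist (ω m) (Ω m)) ?_
    refine (MeasureTheory.ae_restrict_iff' measurableSet_Icc).2 (Filter.Eventually.of_forall fun x hx => ?_)
    rw [Real.norm_eq_abs, abs_of_nonneg (hnn x hx)]
    exact hbd x hx
  have key := aux_real (fun s => Real.arcsin ‖P s - P 0‖)
    (fun τ => Real.pi / 2 * (‖derivWithin B I τ‖ / setDist (ω τ) (Ω τ))) 0 t
    (Real.pi / 2 * (K / setDist (ω m) (Ω m))) ht0 (hii.const_mul _)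
    (fun x hx => mul_nonneg hpi.le (hnn x hx))
    (fun x hx => mul_le_mul_of_nonneg_left (hbd x hx) hpi.le) hcφ (by
      intro x hx r hr
      have hxI : x ∈ I := hsub ⟨hx.1, hx.2.le⟩
      have hmem : I ∈ nhdsWithin x (Set.Ioi x) := Filter.mem_of_superset (Ioo_mem_nhdsGT hx.2)
        (fun y hy => hsub ⟨hx.1.trans hy.1.le, hy.2.le⟩)
      have h1 := (aux_arcsin_loc I P x (Real.pi / 2 * (‖derivWithin B I x‖ / setDist (ω x) (Ω x)))
        (mul_nonneg hpi.le (hnn x ⟨hx.1, hx.2.le⟩)) (hloc x hxI) r hr).filter_mono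
        (nhdsWithin_le_of_mem hmem)
      filter_upwards [h1, self_mem_nhdsWithin, hmem] with z hz hxz hzI
      rw [abs_of_pos (sub_pos.2 hxz)] at hz
      have t1 := aux_arcsin_triangle (P z) (P x) (P 0) (hproj z hzI) (hproj x hxI) (hproj 0 h0I)
      have t2 := aux_arcsin_triangle (P x) (P z) (P 0) (hproj x hxI) (hproj z hzI) (hproj 0 h0I)
      rw [norm_sub_rev (P x) (P z)] at t2
      rw [abs_le]
      constructor <;> linarith)
  simpa [intervalIntegral.integral_const_mul] using key
end

section
/- Let A and V be bounded self-adjoint operators on H. Suppose spectrum(A) = ω ∪ Ω for nonempty closed sets ω, Ω with d := dist(ω, Ω) > 0, and assume ‖V‖ < (sinh(1)/e) · d, where sinh(1)/e = (1 − e^{−2})/2. Let P be the spectral projection of A associated with ω, and let Q be the unique orthogonal projection commuting with A + V such that the spectrum of the restriction of A + V to Ran Q is contained in the open d/2-neighborhood O_{d/2}(ω) of ω and the spectrum of the restriction of A + V to ker Q is contained in O_{d/2}(Ω). Then ‖P − Q‖ ≤ sin( (π/4) · log( d / (d − 2‖V‖) ) ) < 1. -/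
open ContinuousLinearMap

section spmain

open MeasureTheory Set Real


lemma sp_coth_hasSum (u : ℝ) (hu : 0 < u) :
    HasSum (fun n : ℕ => 2 * u / (u ^ 2 + ((n : ℝ) + 1) ^ 2))
      (π * (cosh (π * u) / sinh (π * u)) - 1 / u) := by
  have hx : (Complex.I * (u : ℂ)) ∈ Complex.integerComplement := by
    rintro ⟨n, hn⟩
    have := congrArg Complex.im hn
    simp at this
    exact hu.ne this
  have h1 := cot_series_rep' hx
  have hs := summable_cotTerm hx
  have h2 : HasSum (fun n : ℕ => (1 / ((Complex.I * (u : ℂ)) - (n + 1)) + 1 / ((Complex.I * (u : ℂ)) + (n + 1)))) (π * Complex.cot (π * (Complex.I * (u : ℂ))) - 1 / (Complex.I * (u : ℂ))) := by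
    rw [h1]; exact hs.hasSum
  have h3 := h2.mul_left Complex.I
  have key : ∀ n : ℕ, Complex.I * (1 / ((Complex.I * (u : ℂ)) - (n + 1)) + 1 / ((Complex.I * (u : ℂ)) + (n + 1)))
      = ((2 * u / (u ^ 2 + ((n : ℝ) + 1) ^ 2) : ℝ) : ℂ) := by
    intro n
    have e1 : Complex.I * (u:ℂ) - (n + 1) ≠ 0 := by
      intro h; have := congrArg Complex.im h; simp at this; exact hu.ne' this
    have e2 : Complex.I * (u:ℂ) + (n + 1) ≠ 0 := by
      intro h; have := congrArg Complex.im h; simp at this; exact hu.ne' this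
    have e3 : ((u:ℂ) ^ 2 + ((n : ℂ) + 1) ^ 2) ≠ 0 := by
      have : (0:ℝ) < u ^ 2 + ((n : ℝ) + 1) ^ 2 := by positivity
      exact_mod_cast this.ne'
    push_cast
    field_simp
    ring_nf
    simp only [Complex.I_sq]
    ring
  simp_rw [key] at h3
  have key2 : Complex.I * (π * Complex.cot (π * (Complex.I * (u : ℂ))) - 1 / (Complex.I * (u : ℂ)))
     = ((π * (cosh (π * u) / sinh (π * u)) - 1 / u : ℝ) : ℂ) := by
    have hs0 : (Complex.sinh (π * u)) ≠ 0 := by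
      have : sinh (π * u) ≠ 0 := (sinh_pos_iff.2 (by positivity)).ne'
      exact_mod_cast this
    have hu' : (u:ℂ) ≠ 0 := by exact_mod_cast hu.ne'
    rw [Complex.cot, show (π * (Complex.I * (u : ℂ))) = (π * u) * Complex.I by ring, Complex.cos_mul_I, Complex.sin_mul_I]
    push_cast
    field_simp
  rw [key2] at h3
  exact Complex.hasSum_ofReal.1 h3

lemma sp_tanh_hasSum (u : ℝ) (hu : 0 < u) :
    HasSum (fun k : ℕ => (4 * u / π) / (u ^ 2 + (2 * (k : ℝ) + 1) ^ 2)) (tanh (π * u / 2)) := by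
  have h1 := (sp_coth_hasSum u hu).mul_left 2
  have h2 := sp_coth_hasSum (u / 2) (by positivity)
  have hodd : HasSum (fun k : ℕ => 2 * (2 * u / (u ^ 2 + (((2 * k + 1 : ℕ) : ℝ) + 1) ^ 2)))
     (π * (cosh (π * (u / 2)) / sinh (π * (u / 2))) - 1 / (u / 2)) := by
    convert h2 using 2 with k
    push_cast
    field_simp
    ring
  have hev : Summable (fun k : ℕ => 2 * (2 * u / (u ^ 2 + (((2 * k : ℕ) : ℝ) + 1) ^ 2))) :=
    h1.summable.comp_injective (i := fun k : ℕ => 2 * k) (fun a b h => by simpa using h)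
  have h3 := HasSum.even_add_odd (f := fun n : ℕ => 2 * (2 * u / (u ^ 2 + ((n : ℝ) + 1) ^ 2))) hev.hasSum hodd
  have h4 := h3.unique h1
  have h5 := (hev.hasSum).mul_left (1 / π)
  have e1 : (fun k : ℕ => (4 * u / π) / (u ^ 2 + (2 * (k : ℝ) + 1) ^ 2)) =
      fun i : ℕ => 1 / π * (2 * (2 * u / (u ^ 2 + (((2 * i : ℕ) : ℝ) + 1) ^ 2))) := by
    ext k
    push_cast
    field_simp
    try ring
  have e2 : tanh (π * u / 2) = 1 / π * ∑' b : ℕ, 2 * (2 * u / (u ^ 2 + (((2 * b : ℕ) : ℝ) + 1) ^ 2)) := by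
    rw [eq_sub_of_add_eq h4]
    have e : π * u = 2 * (π * (u / 2)) := by ring
    have e' : π * u / 2 = π * (u / 2) := by ring
    have hs0 : sinh (π * (u / 2)) ≠ 0 := (sinh_pos_iff.2 (by positivity)).ne'
    have hc0 : cosh (π * (u / 2)) ≠ 0 := (cosh_pos _).ne'
    rw [e', e, sinh_two_mul, cosh_two_mul, tanh_eq_sinh_div_cosh]
    field_simp
    ring
  rw [e1, e2]
  exact h5

lemma sp_rat_integral (m a : ℝ) (hm : 0 < m) (ha : 0 ≤ a) :
    IntegrableOn (fun u : ℝ => u ^ 2 / ((u ^ 2 + m ^ 2) * (u ^ 2 + a ^ 2))) (Ioi 0) ∧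
    ∫ u in Ioi (0:ℝ), u ^ 2 / ((u ^ 2 + m ^ 2) * (u ^ 2 + a ^ 2)) = (π / 2) / (m + a) := by
  have hat : ∀ c : ℝ, 0 < c → Filter.Tendsto (fun u : ℝ => arctan (u / c)) Filter.atTop (nhds (π / 2)) := by
    intro c hc
    exact (tendsto_nhds_of_tendsto_nhdsWithin tendsto_arctan_atTop).comp (Filter.tendsto_id.atTop_div_const hc)
  have hda : ∀ c : ℝ, 0 < c → ∀ x : ℝ, HasDerivAt (fun u : ℝ => arctan (u / c)) (c / (x ^ 2 + c ^ 2)) x := by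
    intro c hc x
    have := ((hasDerivAt_id x).div_const c).arctan
    refine this.congr_deriv ?_
    simp only [id]
    field_simp
    ring
  rcases ha.eq_or_lt with rfl | ha
  · have hd : ∀ x : ℝ, HasDerivAt (fun u : ℝ => arctan (u / m) / m) (1 / (x ^ 2 + m ^ 2)) x := by
      intro x
      refine ((hda m hm x).div_const m).congr_deriv ?_
      field_simp
    have hl : Filter.Tendsto (fun u : ℝ => arctan (u / m) / m) Filter.atTop (nhds ((π / 2) / m)) := (hat m hm).div_const m
    have hn : ∀ x ∈ Ioi (0:ℝ), (0:ℝ) ≤ 1 / (x ^ 2 + m ^ 2) := fun x _ => by positivity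
    have e : EqOn (fun u : ℝ => 1 / (u ^ 2 + m ^ 2)) (fun u : ℝ => u ^ 2 / ((u ^ 2 + m ^ 2) * (u ^ 2 + 0 ^ 2))) (Ioi 0) := by
      intro u hu
      have : u ≠ 0 := (ne_of_gt hu)
      field_simp
      ring
    constructor
    · exact (integrableOn_Ioi_deriv_of_nonneg' (fun x _ => hd x) hn hl).congr_fun e measurableSet_Ioi
    · rw [← setIntegral_congr_fun measurableSet_Ioi e, integral_Ioi_of_hasDerivAt_of_nonneg' (fun x _ => hd x) hn hl]
      simp
  have hn : ∀ x ∈ Ioi (0:ℝ), (0:ℝ) ≤ x ^ 2 / ((x ^ 2 + m ^ 2) * (x ^ 2 + a ^ 2)) := fun x _ => by positivity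
  by_cases hma : m = a
  · subst hma
    have hd : ∀ x : ℝ, HasDerivAt (fun u : ℝ => (arctan (u / m) / m - u / (u ^ 2 + m ^ 2)) / 2) (x ^ 2 / ((x ^ 2 + m ^ 2) * (x ^ 2 + m ^ 2))) x := by
      intro x
      have h0 : x ^ 2 + m ^ 2 ≠ 0 := by positivity
      have := (((hda m hm x).div_const m).sub ((hasDerivAt_id x).div (((hasDerivAt_pow 2 x)).add_const (m ^ 2)) h0)).div_const 2
      refine this.congr_deriv ?_
      simp only [id]
      field_simp
      ring
    have hl : Filter.Tendsto (fun u : ℝ => (arctan (u / m) / m - u / (u ^ 2 + m ^ 2)) / 2) Filter.atTop (nhds ((π / 2 / m - 0) / 2)) := by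
      refine (((hat m hm).div_const m).sub ?_).div_const 2
      have : Filter.Tendsto (fun u : ℝ => u⁻¹) Filter.atTop (nhds 0) := tendsto_inv_atTop_zero
      refine squeeze_zero' ?_ ?_ this
      · filter_upwards [Filter.eventually_gt_atTop 0] with u hu
        positivity
      · filter_upwards [Filter.eventually_gt_atTop 0] with u hu
        rw [inv_eq_one_div, div_le_div_iff₀ (by positivity) hu]
        nlinarith [sq_nonneg m]
    refine ⟨integrableOn_Ioi_deriv_of_nonneg' (fun x _ => hd x) hn hl, ?_⟩
    rw [integral_Ioi_of_hasDerivAt_of_nonneg' (fun x _ => hd x) hn hl]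
    simp
    field_simp
    ring
  · have hma' : m ^ 2 - a ^ 2 ≠ 0 := by
      intro h
      have : (m - a) * (m + a) = 0 := by linarith [h]
      rcases mul_eq_zero.1 this with h | h
      · exact hma (by linarith)
      · linarith
    have hd : ∀ x : ℝ, HasDerivAt (fun u : ℝ => (m * arctan (u / m) - a * arctan (u / a)) / (m ^ 2 - a ^ 2)) (x ^ 2 / ((x ^ 2 + m ^ 2) * (x ^ 2 + a ^ 2))) x := by
      intro x
      have := (((hda m hm x).const_mul m).sub ((hda a ha x).const_mul a)).div_const (m ^ 2 - a ^ 2)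
      refine this.congr_deriv ?_
      have h0 : x ^ 2 + m ^ 2 ≠ 0 := by positivity
      have h0 : x ^ 2 + a ^ 2 ≠ 0 := by positivity
      field_simp
      ring
    have hl : Filter.Tendsto (fun u : ℝ => (m * arctan (u / m) - a * arctan (u / a)) / (m ^ 2 - a ^ 2)) Filter.atTop (nhds ((m * (π / 2) - a * (π / 2)) / (m ^ 2 - a ^ 2))) :=
      (((hat m hm).const_mul m).sub ((hat a ha).const_mul a)).div_const _
    refine ⟨integrableOn_Ioi_deriv_of_nonneg' (fun x _ => hd x) hn hl, ?_⟩
    rw [integral_Ioi_of_hasDerivAt_of_nonneg' (fun x _ => hd x) hn hl]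
    have : m + a ≠ 0 := by positivity
    simp
    field_simp
    ring

/-- the key scalar integral -/
lemma sp_tanh_integral (a : ℝ) (ha : 0 ≤ a) :
    ∫ u in Ioi (0:ℝ), tanh (π * u / 2) * (u / (u ^ 2 + a ^ 2) - u / (u ^ 2 + (a + 2) ^ 2)) = 2 / (a + 1) := by
  set F : ℕ → ℝ → ℝ := fun k u => (4 / π) * (u ^ 2 / ((u ^ 2 + (2 * (k:ℝ) + 1) ^ 2) * (u ^ 2 + a ^ 2))
     - u ^ 2 / ((u ^ 2 + (2 * (k:ℝ) + 1) ^ 2) * (u ^ 2 + (a + 2) ^ 2))) with hF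
  have hI1 := fun k : ℕ => sp_rat_integral (2 * (k:ℝ) + 1) a (by positivity) ha
  have hI2 := fun k : ℕ => sp_rat_integral (2 * (k:ℝ) + 1) (a + 2) (by positivity) (by positivity)
  have hitg : ∀ k, IntegrableOn (F k) (Ioi 0) := fun k => ((hI1 k).1.sub (hI2 k).1).const_mul _
  have hval : ∀ k : ℕ, ∫ u in Ioi (0:ℝ), F k u = 2 / (2 * (k:ℝ) + 1 + a) - 2 / (2 * ((k + 1 : ℕ):ℝ) + 1 + a) := by
    intro k
    simp only [hF]
    rw [integral_const_mul, integral_sub (hI1 k).1 (hI2 k).1, (hI1 k).2, (hI2 k).2]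
    have h1 : (2 * (k:ℝ) + 1 + a) ≠ 0 := by positivity
    have h2 : (2 * (k:ℝ) + 1 + (a + 2)) ≠ 0 := by positivity
    have h3 : (2 * ((k:ℝ) + 1) + 1 + a) ≠ 0 := by positivity
    push_cast
    rw [show (2 * ((k:ℝ) + 1) + 1 + a) = (2 * (k:ℝ) + 1 + (a + 2)) by ring]
    field_simp
    ring
  have hnn : ∀ k, ∀ u ∈ Ioi (0:ℝ), 0 ≤ F k u := by
    intro k u hu
    have hu : 0 < u := hu
    simp only [hF]
    refine mul_nonneg (by positivity) (sub_nonneg.2 ?_)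
    gcongr
    linarith
  have hnorm : ∀ k, ∫ u in Ioi (0:ℝ), ‖F k u‖ = ∫ u in Ioi (0:ℝ), F k u := by
    intro k
    refine setIntegral_congr_fun measurableSet_Ioi fun u hu => ?_
    simp only [Real.norm_eq_abs, abs_of_nonneg (hnn k u hu)]
  have hsum : HasSum (fun k : ℕ => ∫ u in Ioi (0:ℝ), F k u) (2 / (a + 1)) := by
    simp_rw [hval]
    have hnn2 : ∀ k : ℕ, 0 ≤ 2 / (2 * (k:ℝ) + 1 + a) - 2 / (2 * ((k + 1 : ℕ):ℝ) + 1 + a) := by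
      intro k
      rw [← hval]
      exact setIntegral_nonneg measurableSet_Ioi (hnn k)
    rw [hasSum_iff_tendsto_nat_of_nonneg hnn2]
    have : ∀ n : ℕ, ∑ k ∈ Finset.range n, (2 / (2 * (k:ℝ) + 1 + a) - 2 / (2 * ((k + 1 : ℕ):ℝ) + 1 + a)) = 2 / (a + 1) - 2 / (2 * (n:ℝ) + 1 + a) := by
      intro n
      rw [Finset.sum_range_sub' (fun k : ℕ => 2 / (2 * (k:ℝ) + 1 + a))]
      simp [add_comm]
    simp_rw [this]
    have h0 : Filter.Tendsto (fun n : ℕ => 2 / (2 * (n:ℝ) + 1 + a)) Filter.atTop (nhds 0) := by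
      refine Filter.Tendsto.const_div_atTop ?_ 2
      refine Filter.tendsto_atTop_add_const_right _ _ (Filter.tendsto_atTop_add_const_right _ _ ?_)
      exact (tendsto_natCast_atTop_atTop).const_mul_atTop (by norm_num)
    simpa using h0.const_sub (2 / (a + 1))
  have h := hasSum_integral_of_summable_integral_norm hitg (by simp_rw [hnorm]; exact hsum.summable)
  have h2 := h.unique hsum
  rw [← h2]
  refine setIntegral_congr_fun measurableSet_Ioi fun u hu => ?_
  have hu : 0 < u := hu
  have h3 := (sp_tanh_hasSum u hu).mul_right (u / (u ^ 2 + a ^ 2) - u / (u ^ 2 + (a + 2) ^ 2))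
  rw [← h3.tsum_eq]
  congr 1
  ext k
  simp only [hF]
  field_simp


lemma sp_lap_integrable (u : ℝ) (hu : 0 < u) :
    Integrable (fun t : ℝ => rexp (-(u * |t|))) := by
  rw [← integrableOn_univ, ← Iic_union_Ioi (a := (0:ℝ)), integrableOn_union]
  constructor
  · refine (integrableOn_exp_mul_Iic hu 0).congr_fun ?_ measurableSet_Iic
    intro t ht
    simp [abs_of_nonpos (show t ≤ 0 from ht)]
  · refine (integrableOn_exp_mul_Ioi (neg_lt_zero.2 hu) 0).congr_fun ?_ measurableSet_Ioi
    intro t ht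
    simp [abs_of_pos (show 0 < t from ht)]

lemma sp_lap_exp_integrable (u a : ℝ) (hu : 0 < u) :
    Integrable (fun t : ℝ => (rexp (-(u * |t|)) : ℂ) * Complex.exp (Complex.I * a * t)) := by
  refine (sp_lap_integrable u hu).ofReal.mul_bdd (c := 1) ?_ ?_
  · exact Continuous.aestronglyMeasurable (by fun_prop)
  · refine Filter.Eventually.of_forall fun t => ?_
    rw [show Complex.I * a * t = ((a * t : ℝ) : ℂ) * Complex.I by push_cast; ring,
      Complex.norm_exp_ofReal_mul_I]

lemma sp_lap_exp_integral (u a : ℝ) (hu : 0 < u) :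
    ∫ t : ℝ, (rexp (-(u * |t|)) : ℂ) * Complex.exp (Complex.I * a * t)
      = ((2 * u / (u ^ 2 + a ^ 2) : ℝ) : ℂ) := by
  have hitg := sp_lap_exp_integrable u a hu
  rw [← intervalIntegral.integral_Iic_add_Ioi (b := 0) hitg.integrableOn hitg.integrableOn]
  have e1 : ∫ t in Iic (0:ℝ), (rexp (-(u * |t|)) : ℂ) * Complex.exp (Complex.I * a * t)
      = ∫ t in Iic (0:ℝ), Complex.exp ((u + Complex.I * a) * t) := by
    refine setIntegral_congr_fun measurableSet_Iic fun t ht => ?_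
    simp only [abs_of_nonpos (show t ≤ 0 from ht)]
    push_cast
    rw [← Complex.exp_add]
    ring_nf
  have e2 : ∫ t in Ioi (0:ℝ), (rexp (-(u * |t|)) : ℂ) * Complex.exp (Complex.I * a * t)
      = ∫ t in Ioi (0:ℝ), Complex.exp ((-u + Complex.I * a) * t) := by
    refine setIntegral_congr_fun measurableSet_Ioi fun t ht => ?_
    simp only [abs_of_pos (show 0 < t from ht)]
    push_cast
    rw [← Complex.exp_add]
    ring_nf
  rw [e1, e2, integral_exp_mul_complex_Iic (by simpa using hu), integral_exp_mul_complex_Ioi (by simpa using hu)]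
  have h1 : (u + Complex.I * a : ℂ) ≠ 0 := by
    intro h; have := congrArg Complex.re h; simp at this; exact hu.ne' this
  have h2 : (-u + Complex.I * a : ℂ) ≠ 0 := by
    intro h; have := congrArg Complex.re h; simp at this; exact hu.ne' this
  have h3 : ((u:ℂ) ^ 2 + (a:ℂ) ^ 2) ≠ 0 := by
    have : (0:ℝ) < u ^ 2 + a ^ 2 := by positivity
    exact_mod_cast this.ne'
  simp
  field_simp
  ring_nf
  simp only [Complex.I_sq]
  ring

lemma sp_abs_sin_integral (u : ℝ) (hu : 0 < u) :
    ∫ t : ℝ, |sin t| * rexp (-(u * |t|)) = 2 * ((cosh (π * u / 2) / sinh (π * u / 2)) / (1 + u ^ 2)) := by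
  have hitg : Integrable (fun t : ℝ => |sin t| * rexp (-(u * |t|))) := by
    refine (sp_lap_integrable u hu).bdd_mul (c := 1) ?_ ?_
    · exact Continuous.aestronglyMeasurable (by fun_prop)
    · exact Filter.Eventually.of_forall fun t => by simpa using abs_sin_le_one t
  have e0 : ∫ t : ℝ, |sin t| * rexp (-(u * |t|)) = 2 * ∫ t in Ioi (0:ℝ), |sin t| * rexp (-(u * t)) := by
    rw [← integral_comp_abs (f := fun t => |sin t| * rexp (-(u * t)))]
    congr 1
    ext t
    congr 1
    rcases abs_cases t with ⟨h, _⟩ | ⟨h, _⟩ <;> simp [h]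
  rw [e0]
  congr 1
  set J := ∫ t in Ioi (0:ℝ), |sin t| * rexp (-(u * t)) with hJ
  have hitg0 : IntegrableOn (fun t : ℝ => |sin t| * rexp (-(u * t))) (Ioi 0) := by
    refine hitg.integrableOn.congr_fun ?_ measurableSet_Ioi
    intro t ht
    simp [abs_of_pos (show 0 < t from ht)]
  have hsplit : J = (∫ t in (0:ℝ)..π, |sin t| * rexp (-(u * t))) + ∫ t in Ioi π, |sin t| * rexp (-(u * t)) := by
    rw [hJ, intervalIntegral.integral_of_le pi_pos.le, ← setIntegral_union (Set.Ioc_disjoint_Ioi le_rfl) measurableSet_Ioi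
      (hitg0.mono_set Ioc_subset_Ioi_self) (hitg0.mono_set (Ioi_subset_Ioi pi_pos.le)), Ioc_union_Ioi_eq_Ioi pi_pos.le]
  have hshift : ∫ t in Ioi π, |sin t| * rexp (-(u * t)) = rexp (-(u * π)) * J := by
    have := (measurePreserving_add_right (volume : Measure ℝ) π).setIntegral_preimage_emb
      (measurableEmbedding_addRight π) (fun t => |sin t| * rexp (-(u * t))) (Ioi π)
    rw [show (fun x : ℝ => x + π) ⁻¹' (Ioi π) = Ioi 0 by ext x; simp] at this
    rw [← this, hJ, ← integral_const_mul]
    congr 1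
    ext t
    rw [sin_add_pi, abs_neg, mul_add, neg_add, Real.exp_add]
    ring
  have hfin : ∫ t in (0:ℝ)..π, |sin t| * rexp (-(u * t)) = (1 + rexp (-(u * π))) / (1 + u ^ 2) := by
    have hd : ∀ t ∈ Set.uIcc 0 π, HasDerivAt (fun t : ℝ => -(rexp (-(u * t)) * (cos t + u * sin t)) / (1 + u ^ 2)) (|sin t| * rexp (-(u * t))) t := by
      intro t ht
      rw [Set.uIcc_of_le pi_pos.le] at ht
      have h1 : HasDerivAt (fun t : ℝ => rexp (-(u * t))) (rexp (-(u * t)) * (-(u * 1))) t :=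
        (((hasDerivAt_id t).const_mul u).neg).exp
      have h2 := (hasDerivAt_cos t).add ((hasDerivAt_sin t).const_mul u)
      refine ((h1.mul h2).neg.div_const (1 + u ^ 2)).congr_deriv ?_
      rw [abs_of_nonneg (sin_nonneg_of_mem_Icc ht)]
      have : 1 + u ^ 2 ≠ 0 := by positivity
      simp only [Pi.add_apply]
      field_simp
      ring
    rw [intervalIntegral.integral_eq_sub_of_hasDerivAt hd (Continuous.intervalIntegrable (by fun_prop) _ _)]
    simp
    field_simp
    ring
  rw [hshift, hfin] at hsplit
  have hlt : rexp (-(u * π)) < 1 := by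
    rw [Real.exp_lt_one_iff]; have := mul_pos hu pi_pos; linarith
  have h1 : 1 - rexp (-(u * π)) ≠ 0 := by linarith
  have hJ2 : J = (1 + rexp (-(u * π))) / (1 + u ^ 2) / (1 - rexp (-(u * π))) := by
    rw [eq_div_iff h1]; linarith
  have hs0 : sinh (π * u / 2) ≠ 0 := (sinh_pos_iff.2 (by positivity)).ne'
  have hch : (1 + rexp (-(u * π))) / (1 - rexp (-(u * π))) = cosh (π * u / 2) / sinh (π * u / 2) := by
    rw [div_eq_div_iff h1 hs0, cosh_eq, sinh_eq]
    have : rexp (-(u * π)) = rexp (-(π * u / 2)) * rexp (-(π * u / 2)) := by rw [← Real.exp_add]; ring_nf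
    have h2 : rexp (π * u / 2) * rexp (-(π * u / 2)) = 1 := by rw [← Real.exp_add]; simp
    rw [this]
    linear_combination rexp (-(π * u / 2)) * h2
  rw [hJ2, ← hch]
  field_simp

/-- The kernel. -/
noncomputable def spKer (p : ℝ × ℝ) : ℝ := -(1 / 2) * (sin p.1 * rexp (-(p.2 * |p.1|)) * tanh (π * p.2 / 2))

/-- The measure on the parameter space. -/
noncomputable def spMeas : Measure (ℝ × ℝ) := (volume : Measure ℝ).prod (volume.restrict (Ioi (0:ℝ)))

lemma sp_tanh_continuous : Continuous Real.tanh := by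
  have : Real.tanh = fun x => Real.sinh x / Real.cosh x := funext Real.tanh_eq_sinh_div_cosh
  rw [this]
  exact Real.continuous_sinh.div Real.continuous_cosh fun x => (Real.cosh_pos x).ne'

lemma spKer_continuous : Continuous spKer := by
  unfold spKer
  have := sp_tanh_continuous
  fun_prop

lemma spKer_norm_section (u : ℝ) (hu : 0 < u) : ∫ t : ℝ, ‖spKer (t, u)‖ = (1 + u ^ 2)⁻¹ := by
  have hs0 : 0 < sinh (π * u / 2) := (sinh_pos_iff.2 (by positivity))
  have hc0 : 0 < cosh (π * u / 2) := (cosh_pos _)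
  have ht : 0 < tanh (π * u / 2) := by rw [tanh_eq_sinh_div_cosh]; positivity
  have : ∀ t : ℝ, ‖spKer (t, u)‖ = (1 / 2 * tanh (π * u / 2)) * (|sin t| * rexp (-(u * |t|))) := by
    intro t
    simp only [spKer, norm_mul, Real.norm_eq_abs, abs_of_pos ht, abs_of_pos (Real.exp_pos _)]
    norm_num
    ring
  simp_rw [this]
  rw [integral_const_mul, sp_abs_sin_integral u hu, tanh_eq_sinh_div_cosh]
  field_simp

lemma spKer_integrable : Integrable spKer spMeas := by
  unfold spMeas
  rw [integrable_prod_iff' spKer_continuous.aestronglyMeasurable]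
  constructor
  · rw [ae_restrict_iff' measurableSet_Ioi]
    refine Filter.Eventually.of_forall fun u hu => ?_
    simp only [spKer]
    refine Integrable.const_mul (Integrable.mul_const ?_ _) _
    refine (sp_lap_integrable u hu).bdd_mul (c := 1) ?_ ?_
    · exact Continuous.aestronglyMeasurable (by fun_prop)
    · exact Filter.Eventually.of_forall fun t => by simpa using abs_sin_le_one t
  · have : IntegrableOn (fun u : ℝ => (1 + u ^ 2)⁻¹) (Ioi 0) := integrable_inv_one_add_sq.integrableOn
    refine this.congr_fun ?_ measurableSet_Ioi
    intro u hu
    exact (spKer_norm_section u hu).symm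

lemma spKer_norm : ∫ p, ‖spKer p‖ ∂spMeas = π / 2 := by
  have h := spKer_integrable.norm
  unfold spMeas at h ⊢
  rw [integral_prod_symm _ h]
  have : ∫ u in Ioi (0:ℝ), ∫ t : ℝ, ‖spKer (t, u)‖ = ∫ u in Ioi (0:ℝ), (1 + u ^ 2)⁻¹ :=
    setIntegral_congr_fun measurableSet_Ioi fun u hu => spKer_norm_section u hu
  rw [this, integral_Ioi_inv_one_add_sq]
  simp

lemma spKer_exp_integrable (s : ℝ) :
    Integrable (fun p : ℝ × ℝ => (spKer p : ℂ) * Complex.exp (Complex.I * s * p.1)) spMeas := by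
  refine spKer_integrable.ofReal.mul_bdd (c := 1) ?_ ?_
  · exact Continuous.aestronglyMeasurable (by fun_prop)
  · refine Filter.Eventually.of_forall fun t => ?_
    rw [show Complex.I * s * (t.1 : ℂ) = ((s * t.1 : ℝ) : ℂ) * Complex.I by push_cast; ring,
      Complex.norm_exp_ofReal_mul_I]

lemma sp_tanh_integral' (s : ℝ) (hs : 1 ≤ |s|) :
    ∫ u in Ioi (0:ℝ), tanh (π * u / 2) * (u / (u ^ 2 + (s - 1) ^ 2) - u / (u ^ 2 + (s + 1) ^ 2)) = 2 / s := by
  rcases le_abs.1 hs with h | h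
  · have := sp_tanh_integral (s - 1) (by linarith)
    rw [show s - 1 + 2 = s + 1 by ring, show s - 1 + 1 = s by ring] at this
    exact this
  · have := sp_tanh_integral (-s - 1) (by linarith)
    rw [show -s - 1 + 2 = -s + 1 by ring, show -s - 1 + 1 = -s by ring] at this
    rw [show 2 / s = -(2 / (-s)) by rw [div_neg, neg_neg], ← this, ← integral_neg]
    congr 1
    ext u
    ring

lemma spKer_exp (s : ℝ) (hs : 1 ≤ |s|) :
    ∫ p, (spKer p : ℂ) * Complex.exp (Complex.I * s * p.1) ∂spMeas = 1 / (Complex.I * s) := by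
  have h := spKer_exp_integrable s
  unfold spMeas at h ⊢
  rw [integral_prod_symm _ h]
  have hs0 : s ≠ 0 := by rintro rfl; norm_num at hs
  have key : ∀ u ∈ Ioi (0:ℝ), ∫ t : ℝ, (spKer (t, u) : ℂ) * Complex.exp (Complex.I * s * t)
     = (-(Complex.I) / 2) * ((tanh (π * u / 2) * (u / (u ^ 2 + (s - 1) ^ 2) - u / (u ^ 2 + (s + 1) ^ 2)) : ℝ) : ℂ) := by
    intro u hu
    have hu : 0 < u := hu
    have e : ∀ t : ℝ, (spKer (t, u) : ℂ) * Complex.exp (Complex.I * s * t) =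
      (Complex.I / 4 * (tanh (π * u / 2) : ℝ)) * ((rexp (-(u * |t|)) : ℂ) * Complex.exp (Complex.I * ((s + 1 : ℝ) : ℂ) * t)
        - (rexp (-(u * |t|)) : ℂ) * Complex.exp (Complex.I * ((s - 1 : ℝ) : ℂ) * t)) := by
      intro t
      have e1 : Complex.exp (Complex.I * ((s + 1 : ℝ) : ℂ) * t) = Complex.exp (Complex.I * s * t) * Complex.exp (t * Complex.I) := by
        rw [← Complex.exp_add]; push_cast; ring_nf
      have e2 : Complex.exp (Complex.I * ((s - 1 : ℝ) : ℂ) * t) = Complex.exp (Complex.I * s * t) * Complex.exp (-t * Complex.I) := by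
        rw [← Complex.exp_add]; push_cast; ring_nf
      rw [e1, e2]
      simp only [spKer]
      push_cast
      rw [Complex.sin]
      ring
    simp_rw [e]
    rw [integral_const_mul, integral_sub (sp_lap_exp_integrable u _ hu) (sp_lap_exp_integrable u _ hu),
      sp_lap_exp_integral u _ hu, sp_lap_exp_integral u _ hu]
    push_cast
    ring
  rw [setIntegral_congr_fun measurableSet_Ioi key, integral_const_mul, integral_complex_ofReal, sp_tanh_integral' s hs]
  have : (s:ℂ) ≠ 0 := by exact_mod_cast hs0
  push_cast
  field_simp
  simp


section operators

variable {H : Type*} [NormedAddCommGroup H] [InnerProductSpace ℂ H] [CompleteSpace H]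

lemma sp_norm_exp (θ : ℝ) (z : ℂ) (hz : z.im = 0) : ‖Complex.exp (Complex.I * θ * z)‖ = 1 := by
  have : z = (z.re : ℂ) := by apply Complex.ext <;> simp [hz]
  rw [this, show Complex.I * θ * (z.re : ℂ) = ((θ * z.re : ℝ) : ℂ) * Complex.I by push_cast; ring,
      Complex.norm_exp_ofReal_mul_I]

lemma sp_norm_exp_sub (θ θ' : ℝ) (z : ℂ) (hz : z.im = 0) :
    ‖Complex.exp (Complex.I * θ * z) - Complex.exp (Complex.I * θ' * z)‖ ≤ |θ - θ'| * ‖z‖ := by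
  have e : Complex.exp (Complex.I * θ * z) - Complex.exp (Complex.I * θ' * z)
     = Complex.exp (Complex.I * θ' * z) * (Complex.exp (Complex.I * (((θ - θ') * z.re : ℝ) : ℂ)) - 1) := by
    have : z = (z.re : ℂ) := by apply Complex.ext <;> simp [hz]
    rw [mul_sub, ← Complex.exp_add, mul_one]
    congr 2
    conv_lhs => rw [this]
    conv_rhs => rw [this]
    push_cast
    simp
    ring
  rw [e, norm_mul, sp_norm_exp θ' z hz, one_mul]
  refine (Real.norm_exp_I_mul_ofReal_sub_one_le).trans ?_
  rw [Real.norm_eq_abs, abs_mul]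
  exact mul_le_mul_of_nonneg_left (Complex.abs_re_le_norm z) (abs_nonneg _)

lemma sp_im_zero {B : H →L[ℂ] H} (hB : IsSelfAdjoint B) {z : ℂ} (hz : z ∈ spectrum ℂ B) : z.im = 0 :=
  hB.im_eq_zero_of_mem_spectrum hz

/-- the twisted functional calculus -/
noncomputable def spW (B : H →L[ℂ] H) (h : ℂ → ℂ) (θ : ℝ) : H →L[ℂ] H :=
  cfc (fun z : ℂ => Complex.exp (Complex.I * θ * z) * h z) B

lemma spW_norm {B : H →L[ℂ] H} (hB : IsSelfAdjoint B) (h : ℂ → ℂ) (M : ℝ) (hM : 0 ≤ M)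
    (hb : ∀ z ∈ spectrum ℂ B, ‖h z‖ ≤ M) (θ : ℝ) : ‖spW B h θ‖ ≤ M := by
  refine norm_cfc_le hM fun z hz => ?_
  rw [norm_mul, sp_norm_exp θ z (sp_im_zero hB hz), one_mul]
  exact hb z hz

lemma spW_continuous {B : H →L[ℂ] H} (hB : IsSelfAdjoint B) (h : ℂ → ℂ) (M : ℝ) (hM : 0 ≤ M)
    (hc : ContinuousOn h (spectrum ℂ B))
    (hb : ∀ z ∈ spectrum ℂ B, ‖h z‖ ≤ M) : Continuous (spW B h) := by
  have := hB.isStarNormal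
  have hl : LipschitzWith (Real.toNNReal (‖B‖ * ‖(1 : H →L[ℂ] H)‖ * M)) (spW B h) := by
    refine LipschitzWith.of_dist_le_mul fun θ θ' => ?_
    rw [Real.coe_toNNReal _ (by positivity), dist_eq_norm, Real.dist_eq]
    unfold spW
    rw [← cfc_sub ..]
    refine norm_cfc_le (by positivity) fun z hz => ?_
    rw [← sub_mul, norm_mul]
    have h1 := sp_norm_exp_sub θ θ' z (sp_im_zero hB hz)
    have h2 := spectrum.norm_le_norm_mul_of_mem hz
    calc _ ≤ (|θ - θ'| * ‖z‖) * M := by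
            exact mul_le_mul h1 (hb z hz) (norm_nonneg _) (by positivity)
      _ ≤ (|θ - θ'| * (‖B‖ * ‖(1 : H →L[ℂ] H)‖)) * M := by gcongr
      _ = _ := by ring
  exact hl.continuous

lemma sp_generic {B : H →L[ℂ] H} (hB : IsSelfAdjoint B) (χ : ℂ → ℂ)
    (hc : ContinuousOn χ (spectrum ℂ B)) (hb : ∀ z ∈ spectrum ℂ B, ‖χ z‖ ≤ 1)
    (c0 c1 : ℝ × ℝ → ℂ) (hc0 : Continuous c0) (hc1 : Continuous c1) (M : ℝ)
    (hM0 : ∀ p, ‖c0 p‖ ≤ M) (hM1 : ∀ p, ‖c1 p‖ ≤ M) (θ : ℝ × ℝ → ℝ) (hθ : Continuous θ)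
    (L : (H →L[ℂ] H) →L[ℂ] ℂ) (C : ℂ)
    (hC : ∀ z ∈ spectrum ℂ B, χ z ≠ 0 → ∫ p, (spKer p : ℂ) * (c1 p * (Complex.I * z * Complex.exp (Complex.I * θ p * z))
      + c0 p * Complex.exp (Complex.I * θ p * z)) ∂spMeas = C) :
    ∫ p, (spKer p : ℂ) * (c1 p * L (spW B (fun z => Complex.I * z * χ z) (θ p)) + c0 p * L (spW B χ (θ p))) ∂spMeas
      = C * L (cfc χ B) := by
  have := hB.isStarNormal
  have hM : 0 ≤ M := (norm_nonneg _).trans (hM0 0)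
  set N := ‖B‖ * ‖(1 : H →L[ℂ] H)‖ with hN
  set F : ℝ × ℝ → ℂ → ℂ := fun p z => (spKer p : ℂ) * (c1 p * (Complex.exp (Complex.I * θ p * z) * (Complex.I * z * χ z))
      + c0 p * (Complex.exp (Complex.I * θ p * z) * χ z)) with hF
  have hχ : ContinuousOn (fun q : (ℝ × ℝ) × ℂ => χ q.2) (univ ×ˢ spectrum ℂ B) :=
    hc.comp continuous_snd.continuousOn fun q hq => hq.2
  have hk := spKer_continuous
  have hcont : ContinuousOn (Function.uncurry F) (univ ×ˢ spectrum ℂ B) := by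
    simp only [hF, Function.uncurry_def]
    have e1 : Continuous (fun q : (ℝ × ℝ) × ℂ => (spKer q.1 : ℂ)) := by fun_prop
    have e2 : Continuous (fun q : (ℝ × ℝ) × ℂ => Complex.exp (Complex.I * θ q.1 * q.2)) := by fun_prop
    have e3 : Continuous (fun q : (ℝ × ℝ) × ℂ => c1 q.1) := by fun_prop
    have e4 : Continuous (fun q : (ℝ × ℝ) × ℂ => c0 q.1) := by fun_prop
    have e5 : Continuous (fun q : (ℝ × ℝ) × ℂ => Complex.I * q.2) := by fun_prop
    exact e1.continuousOn.mul ((e3.continuousOn.mul (e2.continuousOn.mul (e5.continuousOn.mul hχ))).add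
      (e4.continuousOn.mul (e2.continuousOn.mul hχ)))
  have hbound : ∀ᵐ p ∂spMeas, ∀ z ∈ spectrum ℂ B, ‖F p z‖ ≤ ‖spKer p‖ * (M * N + M) := by
    refine Filter.Eventually.of_forall fun p z hz => ?_
    simp only [hF]
    rw [norm_mul, Complex.norm_real]
    refine mul_le_mul_of_nonneg_left ?_ (norm_nonneg _)
    have h2 := spectrum.norm_le_norm_mul_of_mem hz
    refine (norm_add_le _ _).trans (add_le_add ?_ ?_)
    · rw [norm_mul, norm_mul, sp_norm_exp _ z (sp_im_zero hB hz), norm_mul, norm_mul, Complex.norm_I]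
      have := mul_le_mul h2 (hb z hz) (norm_nonneg _) (by positivity)
      have := mul_le_mul (hM1 p) this (by positivity) hM
      simpa using this
    · rw [norm_mul, norm_mul, sp_norm_exp _ z (sp_im_zero hB hz)]
      have := mul_le_mul (hM0 p) (hb z hz) (norm_nonneg _) hM
      simpa using this
  have hbi : HasFiniteIntegral (fun p => ‖spKer p‖ * (M * N + M)) spMeas :=
    (spKer_integrable.norm.mul_const _).2
  have h1 := cfc_integral F _ B hcont hbound hbi
  have h2 := integrable_cfc F _ B hcont hbound hbi
  have hcfc : ∀ p, cfc (F p) B = (spKer p : ℂ) • (c1 p • spW B (fun z => Complex.I * z * χ z) (θ p) + c0 p • spW B χ (θ p)) := by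
    intro p
    unfold spW
    have k1 : ContinuousOn (fun z => Complex.exp (Complex.I * θ p * z) * (Complex.I * z * χ z)) (spectrum ℂ B) := by fun_prop
    have k2 : ContinuousOn (fun z => Complex.exp (Complex.I * θ p * z) * (χ z)) (spectrum ℂ B) := by fun_prop
    rw [← cfc_const_mul _ _ B k1, ← cfc_const_mul _ _ B k2, ← cfc_add .., ← cfc_const_mul ..]
  have hR : cfc (fun z => ∫ p, F p z ∂spMeas) B = C • cfc χ B := by
    rw [← cfc_const_mul _ _ B hc]
    refine cfc_congr fun z hz => ?_
    by_cases h0 : χ z = 0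
    · simp [hF, h0]
    · rw [← hC z hz h0, ← integral_mul_const]
      congr 1
      ext p
      simp only [hF]
      ring
  rw [hR] at h1
  have h3 := congrArg L h1
  rw [← L.integral_comp_comm h2] at h3
  simp only [hcfc, map_smul, map_add, smul_eq_mul] at h3
  exact h3.symm

/-- complex indicator -/
noncomputable def spChi (S : Set ℝ) (z : ℂ) : ℂ := ((Set.indicator S (fun _ => (1:ℝ)) z.re : ℝ) : ℂ)

lemma spChi_norm (S : Set ℝ) (z : ℂ) : ‖spChi S z‖ ≤ 1 := by
  unfold spChi
  by_cases h : z.re ∈ S <;> simp [h]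

lemma spKer_scaled (δ s : ℝ) (hδ : 0 < δ) (hs : δ ≤ |s|) :
    ∫ p, (spKer p : ℂ) * (Complex.I * s * Complex.exp (Complex.I * (p.1 / δ : ℝ) * s)) ∂spMeas = δ := by
  have hs' : 1 ≤ |s / δ| := by rw [abs_div, abs_of_pos hδ, le_div_iff₀ hδ]; linarith
  have h := spKer_exp (s / δ) hs'
  have hs0 : s ≠ 0 := by rintro rfl; simp at hs; linarith
  have e : ∀ p : ℝ × ℝ, (spKer p : ℂ) * (Complex.I * s * Complex.exp (Complex.I * (p.1 / δ : ℝ) * s)) =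
     (Complex.I * s) * ((spKer p : ℂ) * Complex.exp (Complex.I * (s / δ : ℝ) * p.1)) := by
    intro p
    rw [show Complex.I * ((p.1 / δ : ℝ) : ℂ) * s = Complex.I * ((s / δ : ℝ) : ℂ) * p.1 by push_cast; ring]
    ring
  simp_rw [e]
  rw [integral_const_mul, h]
  have h1 : (s:ℂ) ≠ 0 := by exact_mod_cast hs0
  have h2 : (δ:ℂ) ≠ 0 := by exact_mod_cast hδ.ne'
  push_cast
  field_simp

lemma sp_rank_one {A B : H →L[ℂ] H} (hA : IsSelfAdjoint A) (hB : IsSelfAdjoint B) (S T : Set ℝ)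
    (hcS : ContinuousOn (spChi S) (spectrum ℂ A)) (hcT : ContinuousOn (spChi T) (spectrum ℂ B))
    (δ : ℝ) (hδ : 0 < δ)
    (hsep : ∀ z ∈ spectrum ℂ A, ∀ w ∈ spectrum ℂ B, z.re ∈ S → w.re ∈ T → δ ≤ |z.re - w.re|)
    (LA LB : (H →L[ℂ] H) →L[ℂ] ℂ) :
    ∫ p, (spKer p : ℂ) * (LB (spW B (spChi T) (-(p.1 / δ))) * LA (spW A (fun z => Complex.I * z * spChi S z) (p.1 / δ))
      + (-LB (spW B (fun z => Complex.I * z * spChi T z) (-(p.1 / δ)))) * LA (spW A (spChi S) (p.1 / δ))) ∂spMeas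
      = (δ * LB (cfc (spChi T) B)) * LA (cfc (spChi S) A) := by
  set N := ‖B‖ * ‖(1 : H →L[ℂ] H)‖ with hN
  have hb1 : ∀ z ∈ spectrum ℂ B, ‖Complex.I * z * spChi T z‖ ≤ N := by
    intro z hz
    rw [norm_mul, norm_mul, Complex.norm_I, one_mul]
    have := mul_le_mul (spectrum.norm_le_norm_mul_of_mem hz) (spChi_norm T z) (norm_nonneg _) (by positivity)
    simpa using this
  have hN0 : 0 ≤ N := by positivity
  have hcT1 : ContinuousOn (fun z => Complex.I * z * spChi T z) (spectrum ℂ B) := by fun_prop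
  have hb0 : ∀ z ∈ spectrum ℂ B, ‖spChi T z‖ ≤ 1 := fun z _ => spChi_norm T z
  have w0 := spW_continuous hB _ 1 zero_le_one hcT hb0
  have w1 := spW_continuous hB _ N hN0 hcT1 hb1
  have m0 : Continuous (fun p : ℝ × ℝ => LB (spW B (spChi T) (-(p.1 / δ)))) := by fun_prop
  have m1 : Continuous (fun p : ℝ × ℝ => -LB (spW B (fun z => Complex.I * z * spChi T z) (-(p.1 / δ)))) := by fun_prop
  refine sp_generic hA (spChi S) hcS (fun z _ => spChi_norm S z) _ _ m1 m0 (‖LB‖ * (N + 1)) ?_ ?_ (fun p => p.1 / δ) (by fun_prop) LA _ ?_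
  · intro p
    rw [norm_neg]
    refine (LB.le_opNorm _).trans (mul_le_mul_of_nonneg_left ?_ (norm_nonneg _))
    have := spW_norm hB _ N hN0 hb1 (-(p.1 / δ))
    linarith
  · intro p
    refine (LB.le_opNorm _).trans (mul_le_mul_of_nonneg_left ?_ (norm_nonneg _))
    have := spW_norm hB _ 1 zero_le_one hb0 (-(p.1 / δ))
    linarith
  · intro z hz hz0
    have hzim := sp_im_zero hA hz
    have hzre : z = (z.re : ℂ) := by apply Complex.ext <;> simp [hzim]
    have hzS : z.re ∈ S := by
      by_contra h; exact hz0 (by simp [spChi, h])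
    have hE : ∀ p : ℝ × ℝ, ‖Complex.exp (Complex.I * (p.1 / δ : ℝ) * z)‖ = 1 := fun p => sp_norm_exp _ z hzim
    have key := sp_generic hB (spChi T) hcT hb0
      (fun p => Complex.I * z * Complex.exp (Complex.I * (p.1 / δ : ℝ) * z))
      (fun p => -Complex.exp (Complex.I * (p.1 / δ : ℝ) * z)) (by fun_prop) (by fun_prop) (‖z‖ + 1) ?_ ?_
      (fun p => -(p.1 / δ)) (by fun_prop) LB δ ?_
    · rw [← key]
      congr 1
      ext p
      ring
    · intro p
      rw [norm_mul, norm_mul, hE, Complex.norm_I]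
      simp
    · intro p
      rw [norm_neg, hE]
      linarith [norm_nonneg z]
    · intro w hw hw0
      have hwim := sp_im_zero hB hw
      have hwre : w = (w.re : ℂ) := by apply Complex.ext <;> simp [hwim]
      have hwT : w.re ∈ T := by
        by_contra h; exact hw0 (by simp [spChi, h])
      have h := spKer_scaled δ (z.re - w.re) hδ (hsep z hz w hw hzS hwT)
      rw [← h]
      congr 1
      ext p
      have : Complex.exp (Complex.I * (p.1 / δ : ℝ) * ((z.re - w.re : ℝ) : ℂ)) =
         Complex.exp (Complex.I * (p.1 / δ : ℝ) * z) * Complex.exp (Complex.I * (-(p.1 / δ) : ℝ) * w) := by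
        rw [← Complex.exp_add]
        congr 1
        push_cast
        rw [← hzre, ← hwre]
        ring
      rw [this]
      push_cast
      rw [← hzre, ← hwre]
      ring

end operators


section sintheta

variable {H : Type*} [NormedAddCommGroup H] [InnerProductSpace ℂ H] [CompleteSpace H]

lemma sp_sum_bound {ι : Type*} (b : HilbertBasis ι ℂ H) (X Y : H →L[ℂ] H) (x y : H) (s : Finset ι) :
    ‖∑ i ∈ s, inner ℂ (b i) (Y y) * inner ℂ x (X (b i))‖ ≤ (‖X‖ * ‖x‖) * (‖Y‖ * ‖y‖) := by
  have e : ∀ i, inner ℂ x (X (b i)) = inner ℂ (ContinuousLinearMap.adjoint X x) (b i) := fun i =>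
    (ContinuousLinearMap.adjoint_inner_left X (b i) x).symm
  have h1 := b.orthonormal.sum_inner_products_le (x := Y y) (s := s)
  have h2 := b.orthonormal.sum_inner_products_le (x := ContinuousLinearMap.adjoint X x) (s := s)
  have h3 : ‖Y y‖ ≤ ‖Y‖ * ‖y‖ := Y.le_opNorm y
  have h4 : ‖ContinuousLinearMap.adjoint X x‖ ≤ ‖X‖ * ‖x‖ := by
    have := (ContinuousLinearMap.adjoint X).le_opNorm x
    rwa [LinearIsometryEquiv.norm_map] at this
  refine (norm_sum_le _ _).trans ?_
  refine abs_le_of_sq_le_sq' ?_ (by positivity) |>.2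
  simp_rw [norm_mul]
  refine (Finset.sum_mul_sq_le_sq_mul_sq s _ _).trans ?_
  rw [mul_comm (‖X‖ * ‖x‖), mul_pow]
  refine mul_le_mul (h1.trans (by gcongr)) ?_ (by positivity) (by positivity)
  refine le_trans ?_ (h2.trans (by gcongr))
  refine le_of_eq (Finset.sum_congr rfl fun i _ => ?_)
  rw [e, norm_inner_symm]

lemma sp_sum_tendsto {ι : Type*} (b : HilbertBasis ι ℂ H) (X Y : H →L[ℂ] H) (x y : H) :
    Filter.Tendsto (fun s : Finset ι => ∑ i ∈ s, inner ℂ (b i) (Y y) * inner ℂ x (X (b i))) Filter.atTop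
      (nhds (inner ℂ x ((X * Y) y))) := by
  have e : ∀ i, inner ℂ x (X (b i)) = inner ℂ (ContinuousLinearMap.adjoint X x) (b i) := fun i =>
    (ContinuousLinearMap.adjoint_inner_left X (b i) x).symm
  have h := b.hasSum_inner_mul_inner (ContinuousLinearMap.adjoint X x) (Y y)
  rw [ContinuousLinearMap.adjoint_inner_left] at h
  simp_rw [← e, mul_comm (inner ℂ x _)] at h
  exact h

lemma sp_basis_countable [TopologicalSpace.SeparableSpace H] {ι : Type*} (b : HilbertBasis ι ℂ H) : Countable ι := by
  refine Pairwise.countable_of_isOpen_disjoint (s := fun i => Metric.ball (b i) (1/2)) ?_ (fun i => Metric.isOpen_ball)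
    (fun i => ⟨b i, by simp⟩)
  intro i j hij
  refine Metric.ball_disjoint_ball ?_
  have h0 : inner ℂ (b i) (b j) = 0 := b.orthonormal.2 hij
  have h1 := b.orthonormal.1 i
  have h2 := b.orthonormal.1 j
  have h3 := @norm_sub_sq ℂ H _ _ _ (b i) (b j)
  rw [h0, h1, h2] at h3
  simp at h3
  rw [dist_eq_norm]
  nlinarith [norm_nonneg (b i - b j)]

lemma sp_sintheta [TopologicalSpace.SeparableSpace H] {A B : H →L[ℂ] H} (hA : IsSelfAdjoint A) (hB : IsSelfAdjoint B) (S T : Set ℝ)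
    (hcS : ContinuousOn (spChi S) (spectrum ℂ A)) (hcT : ContinuousOn (spChi T) (spectrum ℂ B))
    (δ : ℝ) (hδ : 0 < δ)
    (hsep : ∀ z ∈ spectrum ℂ A, ∀ w ∈ spectrum ℂ B, z.re ∈ S → w.re ∈ T → δ ≤ |z.re - w.re|) :
    δ * ‖cfc (spChi S) A * cfc (spChi T) B‖ ≤ (π / 2) * ‖A - B‖ := by
  have hAn := hA.isStarNormal
  have hBn := hB.isStarNormal
  obtain ⟨w, b, hb⟩ := exists_hilbertBasis ℂ H
  have := sp_basis_countable b
  have hA0 := spW_continuous hA _ 1 zero_le_one hcS (fun z _ => spChi_norm S z)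
  have hB0 := spW_continuous hB _ 1 zero_le_one hcT (fun z _ => spChi_norm T z)
  have nA0 := spW_norm hA (spChi S) 1 zero_le_one (fun z _ => spChi_norm S z)
  have nB0 := spW_norm hB (spChi T) 1 zero_le_one (fun z _ => spChi_norm T z)
  have eA : ∀ θ, spW A (fun z => Complex.I * z * spChi S z) θ = Complex.I • (spW A (spChi S) θ * A) := by
    intro θ
    unfold spW
    have k1 : ContinuousOn (fun z => Complex.exp (Complex.I * θ * z) * spChi S z) (spectrum ℂ A) := by fun_prop
    conv_rhs => rw [show A = cfc (fun z : ℂ => z) A from (cfc_id' ℂ A).symm]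
    rw [cfc_id' ℂ A, show cfc (fun z => Complex.exp (Complex.I * θ * z) * spChi S z) A * A = cfc (fun z => Complex.exp (Complex.I * θ * z) * spChi S z) A * cfc (fun z : ℂ => z) A by rw [cfc_id' ℂ A],
      ← cfc_mul _ _ A k1 (by fun_prop), ← cfc_const_mul _ _ A (by fun_prop)]
    congr 1
    ext z
    ring
  have eB : ∀ θ, spW B (fun z => Complex.I * z * spChi T z) θ = Complex.I • (B * spW B (spChi T) θ) := by
    intro θ
    unfold spW
    have k1 : ContinuousOn (fun z => Complex.exp (Complex.I * θ * z) * spChi T z) (spectrum ℂ B) := by fun_prop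
    rw [show B * cfc (fun z => Complex.exp (Complex.I * θ * z) * spChi T z) B = cfc (fun z : ℂ => z) B * cfc (fun z => Complex.exp (Complex.I * θ * z) * spChi T z) B by rw [cfc_id' ℂ B],
      ← cfc_mul _ _ B (by fun_prop) k1, ← cfc_const_mul _ _ B (by fun_prop)]
    congr 1
    ext z
    ring
  have main : ∀ x y : H, ∫ p, (spKer p : ℂ) * (inner ℂ x ((spW A (fun z => Complex.I * z * spChi S z) (p.1 / δ) * spW B (spChi T) (-(p.1 / δ))) y)
      - inner ℂ x ((spW A (spChi S) (p.1 / δ) * spW B (fun z => Complex.I * z * spChi T z) (-(p.1 / δ))) y)) ∂spMeas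
      = δ * inner ℂ x ((cfc (spChi S) A * cfc (spChi T) B) y) := by
    intro x y
    have L := (sp_sum_tendsto b (cfc (spChi S) A) (cfc (spChi T) B) x y).const_mul (δ : ℂ)
    refine tendsto_nhds_unique ?_ L
    have hs : ∀ s : Finset w, (δ : ℂ) * ∑ i ∈ s, inner ℂ (b i) (cfc (spChi T) B y) * inner ℂ x (cfc (spChi S) A (b i))
       = ∫ p, (spKer p : ℂ) * ((∑ i ∈ s, inner ℂ (b i) (spW B (spChi T) (-(p.1 / δ)) y) * inner ℂ x (spW A (fun z => Complex.I * z * spChi S z) (p.1 / δ) (b i)))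
         - ∑ i ∈ s, inner ℂ (b i) (spW B (fun z => Complex.I * z * spChi T z) (-(p.1 / δ)) y) * inner ℂ x (spW A (spChi S) (p.1 / δ) (b i))) ∂spMeas := by
      intro s
      have hterm : ∀ i, Integrable (fun p => (spKer p : ℂ) * ((inner ℂ (b i) (spW B (spChi T) (-(p.1 / δ)) y) * inner ℂ x (spW A (fun z => Complex.I * z * spChi S z) (p.1 / δ) (b i)))
         + (-inner ℂ (b i) (spW B (fun z => Complex.I * z * spChi T z) (-(p.1 / δ)) y)) * inner ℂ x (spW A (spChi S) (p.1 / δ) (b i)))) spMeas := by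
        intro i
        refine Integrable.mono' (spKer_integrable.norm.mul_const ((‖A‖ * ‖x‖) * (1 * ‖y‖) + (1 * ‖x‖) * (‖B‖ * ‖y‖))) ?_ ?_
        · refine Continuous.aestronglyMeasurable ?_
          have := spKer_continuous
          simp_rw [eA, eB]
          fun_prop
        · refine Filter.Eventually.of_forall fun p => ?_
          rw [norm_mul, Complex.norm_real]
          refine mul_le_mul_of_nonneg_left ?_ (norm_nonneg _)
          refine (norm_add_le _ _).trans (add_le_add ?_ ?_)
          · refine le_trans (by simpa using sp_sum_bound b (spW A (fun z => Complex.I * z * spChi S z) (p.1 / δ)) (spW B (spChi T) (-(p.1 / δ))) x y {i}) ?_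
            rw [eA, norm_smul, Complex.norm_I, one_mul]
            gcongr
            · exact (norm_mul_le _ _).trans (by simpa using mul_le_mul_of_nonneg_right (nA0 _) (norm_nonneg A))
            · exact nB0 _
          · refine le_trans (by simpa using sp_sum_bound b (spW A (spChi S) (p.1 / δ)) (spW B (fun z => Complex.I * z * spChi T z) (-(p.1 / δ))) x y {i}) ?_
            rw [eB, norm_smul, Complex.norm_I, one_mul]
            gcongr
            · exact nA0 _
            · exact (norm_mul_le _ _).trans (by simpa using mul_le_mul_of_nonneg_left (nB0 _) (norm_nonneg B))
      have hr : ∀ i : w, _ := fun i => sp_rank_one hA hB S T hcS hcT δ hδ hsep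
        ((innerSL ℂ x) ∘L (ContinuousLinearMap.apply ℂ H (b i))) ((innerSL ℂ (b i)) ∘L (ContinuousLinearMap.apply ℂ H y))
      simp only [ContinuousLinearMap.comp_apply, ContinuousLinearMap.apply_apply, innerSL_apply_apply] at hr
      have : ∀ p : ℝ × ℝ, (spKer p : ℂ) * ((∑ i ∈ s, inner ℂ (b i) (spW B (spChi T) (-(p.1 / δ)) y) * inner ℂ x (spW A (fun z => Complex.I * z * spChi S z) (p.1 / δ) (b i)))
         - ∑ i ∈ s, inner ℂ (b i) (spW B (fun z => Complex.I * z * spChi T z) (-(p.1 / δ)) y) * inner ℂ x (spW A (spChi S) (p.1 / δ) (b i)))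
         = ∑ i ∈ s, (spKer p : ℂ) * ((inner ℂ (b i) (spW B (spChi T) (-(p.1 / δ)) y) * inner ℂ x (spW A (fun z => Complex.I * z * spChi S z) (p.1 / δ) (b i)))
         + (-inner ℂ (b i) (spW B (fun z => Complex.I * z * spChi T z) (-(p.1 / δ)) y)) * inner ℂ x (spW A (spChi S) (p.1 / δ) (b i))) := by
        intro p
        rw [← Finset.sum_sub_distrib, Finset.mul_sum]
        refine Finset.sum_congr rfl fun i _ => ?_
        ring
      simp_rw [this]
      rw [integral_finsetSum _ fun i _ => hterm i, Finset.mul_sum]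
      refine Finset.sum_congr rfl fun i _ => ?_
      rw [hr i]
      ring
    simp_rw [hs]
    refine tendsto_integral_filter_of_dominated_convergence
      (fun p => ‖spKer p‖ * ((‖A‖ * ‖x‖) * (1 * ‖y‖) + (1 * ‖x‖) * (‖B‖ * ‖y‖))) ?_ ?_ (spKer_integrable.norm.mul_const _) ?_
    · refine Filter.Eventually.of_forall fun s => Continuous.aestronglyMeasurable ?_
      have := spKer_continuous
      simp_rw [eA, eB]
      fun_prop
    · refine Filter.Eventually.of_forall fun s => Filter.Eventually.of_forall fun p => ?_
      rw [norm_mul, Complex.norm_real]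
      refine mul_le_mul_of_nonneg_left ?_ (norm_nonneg _)
      refine (norm_sub_le _ _).trans (add_le_add ?_ ?_)
      · refine (sp_sum_bound b _ _ x y s).trans ?_
        rw [eA, norm_smul, Complex.norm_I, one_mul]
        gcongr
        · exact (norm_mul_le _ _).trans (by simpa using mul_le_mul_of_nonneg_right (nA0 _) (norm_nonneg A))
        · exact nB0 _
      · refine (sp_sum_bound b _ _ x y s).trans ?_
        rw [eB, norm_smul, Complex.norm_I, one_mul]
        gcongr
        · exact nA0 _
        · exact (norm_mul_le _ _).trans (by simpa using mul_le_mul_of_nonneg_left (nB0 _) (norm_nonneg B))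
    · refine Filter.Eventually.of_forall fun p => ?_
      exact ((sp_sum_tendsto b _ _ x y).sub (sp_sum_tendsto b _ _ x y)).const_mul _
  have hb : ∀ x y : H, δ * ‖inner ℂ x ((cfc (spChi S) A * cfc (spChi T) B) y)‖ ≤ (π / 2) * ‖A - B‖ * (‖x‖ * ‖y‖) := by
    intro x y
    have h1 : δ * ‖inner ℂ x ((cfc (spChi S) A * cfc (spChi T) B) y)‖ = ‖(δ : ℂ) * inner ℂ x ((cfc (spChi S) A * cfc (spChi T) B) y)‖ := by
      rw [norm_mul, Complex.norm_real, Real.norm_of_nonneg hδ.le]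
    rw [h1, ← main x y, ← spKer_norm, mul_assoc, ← integral_mul_const]
    refine norm_integral_le_of_norm_le (spKer_integrable.norm.mul_const _) (Filter.Eventually.of_forall fun p => ?_)
    rw [norm_mul, Complex.norm_real]
    refine mul_le_mul_of_nonneg_left ?_ (norm_nonneg _)
    rw [← inner_sub_right, ← _root_.sub_apply, eA, eB]
    have e : (Complex.I • (spW A (spChi S) (p.1 / δ) * A)) * spW B (spChi T) (-(p.1 / δ)) - spW A (spChi S) (p.1 / δ) * (Complex.I • (B * spW B (spChi T) (-(p.1 / δ))))
      = Complex.I • (spW A (spChi S) (p.1 / δ) * (A - B) * spW B (spChi T) (-(p.1 / δ))) := by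
      rw [smul_mul_assoc, mul_smul_comm, ← smul_sub, mul_sub, sub_mul, mul_assoc, mul_assoc]
    rw [e]
    refine (norm_inner_le_norm _ _).trans ?_
    have h2 : ‖Complex.I • (spW A (spChi S) (p.1 / δ) * (A - B) * spW B (spChi T) (-(p.1 / δ)))‖ ≤ ‖A - B‖ := by
      rw [norm_smul, Complex.norm_I, one_mul]
      calc _ ≤ ‖spW A (spChi S) (p.1 / δ)‖ * ‖A - B‖ * ‖spW B (spChi T) (-(p.1 / δ))‖ :=
            (norm_mul_le _ _).trans (mul_le_mul_of_nonneg_right (norm_mul_le _ _) (norm_nonneg _))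
        _ ≤ 1 * ‖A - B‖ * 1 := by gcongr; exact nA0 _; exact nB0 _
        _ = _ := by ring
    have h3 := (ContinuousLinearMap.le_of_opNorm_le _ h2 y)
    calc _ ≤ ‖x‖ * (‖A - B‖ * ‖y‖) := by gcongr
      _ = _ := by ring
  rw [← le_div_iff₀' hδ]
  refine ContinuousLinearMap.opNorm_le_bound _ (by positivity) fun y => ?_
  set u := (cfc (spChi S) A * cfc (spChi T) B) y with hu
  by_cases h0 : ‖u‖ = 0
  · rw [h0]; positivity
  have h := hb u y
  rw [← hu, inner_self_eq_norm_sq_to_K] at h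
  have hup : 0 < ‖u‖ := lt_of_le_of_ne (norm_nonneg _) (Ne.symm h0)
  simp only [norm_pow, RCLike.norm_ofReal, abs_norm] at h
  rw [div_mul_eq_mul_div, le_div_iff₀ hδ]
  refine le_of_mul_le_mul_right ?_ hup
  nlinarith

end sintheta


section projections

variable {H : Type*} [NormedAddCommGroup H] [InnerProductSpace ℂ H] [CompleteSpace H]

/-- orthogonal projections, as operators -/
def spIsProj (P : H →L[ℂ] H) : Prop := IsSelfAdjoint P ∧ P * P = P

lemma spIsProj.compl {P : H →L[ℂ] H} (h : spIsProj P) : spIsProj (1 - P) := by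
  refine ⟨(IsSelfAdjoint.one _).sub h.1, ?_⟩
  rw [mul_sub, sub_mul, sub_mul, h.2]; simp

lemma spIsProj.app {P : H →L[ℂ] H} (h : spIsProj P) (x : H) : P (P x) = P x := by
  rw [← mul_apply_eq_comp, h.2]

lemma spIsProj.symm {P : H →L[ℂ] H} (h : spIsProj P) (x y : H) : inner ℂ (P x) y = inner ℂ x (P y) := by
  have h1 := ContinuousLinearMap.adjoint_inner_left P y x
  rwa [ContinuousLinearMap.isSelfAdjoint_iff'.1 h.1] at h1

lemma spIsProj.orth {P : H →L[ℂ] H} (h : spIsProj P) (x y : H) : inner ℂ (P x) (y - P y) = 0 := by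
  rw [h.symm, map_sub, h.app, sub_self, inner_zero_right]

lemma sp_pyth (x y : H) (h : inner ℂ x y = 0) : ‖x + y‖ ^ 2 = ‖x‖ ^ 2 + ‖y‖ ^ 2 := by
  have := norm_add_sq_eq_norm_sq_add_norm_sq_of_inner_eq_zero x y h
  nlinarith

lemma spIsProj.pyth {P : H →L[ℂ] H} (h : spIsProj P) (x : H) : ‖x‖ ^ 2 = ‖P x‖ ^ 2 + ‖x - P x‖ ^ 2 := by
  have := sp_pyth _ _ (h.orth x x)
  rw [← this]; simp

lemma spIsProj.le {P : H →L[ℂ] H} (h : spIsProj P) (x : H) : ‖P x‖ ≤ ‖x‖ := by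
  have := h.pyth x
  nlinarith [norm_nonneg x, norm_nonneg (P x), sq_nonneg ‖x - P x‖]

lemma sp_diff_le {P R : H →L[ℂ] H} (hP : spIsProj P) (hR : spIsProj R) (c : ℝ) (hc : 0 ≤ c)
    (h1 : ‖P * (1 - R)‖ ≤ c) (h2 : ‖(1 - P) * R‖ ≤ c) : ‖P - R‖ ≤ c := by
  refine ContinuousLinearMap.opNorm_le_bound _ hc fun x => ?_
  refine abs_le_of_sq_le_sq' ?_ (by positivity) |>.2
  have e : (P - R) x = P (x - R x) + (-(R x - P (R x))) := by
    simp
  have o : inner ℂ (P (x - R x)) (-(R x - P (R x))) = 0 := by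
    rw [inner_neg_right, hP.orth, neg_zero]
  rw [e, sp_pyth _ _ o, norm_neg]
  have k1 : ‖P (x - R x)‖ ≤ c * ‖x - R x‖ := by
    have := ContinuousLinearMap.le_of_opNorm_le _ h1 (x - R x)
    simpa [hR.app] using this
  have k2 : ‖R x - P (R x)‖ ≤ c * ‖R x‖ := by
    have := ContinuousLinearMap.le_of_opNorm_le _ h2 (R x)
    simpa [hR.app] using this
  have k3 := hR.pyth x
  have k1' := pow_le_pow_left₀ (norm_nonneg _) k1 2
  have k2' := pow_le_pow_left₀ (norm_nonneg _) k2 2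
  rw [mul_pow, k3]
  nlinarith

lemma sp_angle_le {Q : H →L[ℂ] H} (hQ : spIsProj Q) (x : H) (hx : x ≠ 0) (θ : ℝ) (h0 : 0 ≤ θ) (h1 : θ ≤ π / 2)
    (h : ‖x - Q x‖ ≤ Real.sin θ * ‖x‖) : Real.cos θ * ‖x‖ ≤ ‖Q x‖ ∧
    letI := InnerProductSpace.rclikeToReal ℂ H
    InnerProductGeometry.angle x (Q x) ≤ θ := by
  letI := InnerProductSpace.rclikeToReal ℂ H
  have hc : 0 ≤ Real.cos θ := Real.cos_nonneg_of_neg_pi_div_two_le_of_le (by linarith) h1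
  have hA : Real.cos θ * ‖x‖ ≤ ‖Q x‖ := by
    refine abs_le_of_sq_le_sq' ?_ (by positivity) |>.2
    have h2 := pow_le_pow_left₀ (norm_nonneg _) h 2
    have h3 := hQ.pyth x
    have h4 := Real.sin_sq_add_cos_sq θ
    have h5 : Real.cos θ ^ 2 = 1 - Real.sin θ ^ 2 := by linarith
    rw [mul_pow] at h2 ⊢
    rw [h5]
    nlinarith
  refine ⟨hA, ?_⟩
  have hxp : 0 < ‖x‖ := norm_pos_iff.2 hx
  have hin : inner ℝ x (Q x) = ‖Q x‖ * ‖Q x‖ := by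
    rw [real_inner_eq_re_inner ℂ, ← hQ.app x, ← hQ.symm, hQ.app, inner_self_eq_norm_mul_norm]
  rw [InnerProductGeometry.angle, ← Real.arccos_cos h0 (by linarith [Real.pi_pos])]
  refine Real.arccos_le_arccos ?_
  rw [hin]
  by_cases hq : ‖Q x‖ = 0
  · rw [hq]
    rw [hq] at hA
    have : Real.cos θ ≤ 0 := by nlinarith
    simpa using this
  · have hqp : 0 < ‖Q x‖ := lt_of_le_of_ne (norm_nonneg _) (Ne.symm hq)
    rw [le_div_iff₀ (by positivity)]
    nlinarith

lemma sp_triangle_half {P Q R : H →L[ℂ] H} (hP : spIsProj P) (hQ : spIsProj Q) (hR : spIsProj R)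
    (θ₁ θ₂ : ℝ) (h1 : 0 ≤ θ₁) (h2 : 0 ≤ θ₂) (h : θ₁ + θ₂ ≤ π / 2)
    (hPQ : ‖P - Q‖ ≤ Real.sin θ₁) (hQR : ‖Q - R‖ ≤ Real.sin θ₂) : ‖(1 - P) * R‖ ≤ Real.sin (θ₁ + θ₂) := by
  have hs : 0 ≤ Real.sin (θ₁ + θ₂) := Real.sin_nonneg_of_nonneg_of_le_pi (by linarith) (by linarith [Real.pi_pos])
  refine ContinuousLinearMap.opNorm_le_bound _ hs fun x => ?_
  refine le_trans ?_ (mul_le_mul_of_nonneg_left (hR.le x) hs)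
  set r := R x with hr
  have hrr : R r = r := hR.app x
  have e : ((1 - P) * R) x = r - P r := by simp [hr]
  rw [e]
  rcases h.eq_or_lt with h | h
  · rw [h, Real.sin_pi_div_two, one_mul]
    have := hP.compl.le r
    simpa using this
  by_cases hr0 : r = 0
  · rw [hr0]; simp
  letI := InnerProductSpace.rclikeToReal ℂ H
  have b1 : ‖r - Q r‖ ≤ Real.sin θ₂ * ‖r‖ := by
    have := ContinuousLinearMap.le_of_opNorm_le _ hQR r
    rw [_root_.sub_apply, hrr, norm_sub_rev] at this
    exact this
  obtain ⟨c1, a1⟩ := sp_angle_le hQ r hr0 θ₂ h2 (by linarith) b1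
  have hrp : 0 < ‖r‖ := norm_pos_iff.2 hr0
  have hq0 : Q r ≠ 0 := by
    intro h0
    rw [h0, norm_zero] at c1
    have : 0 < Real.cos θ₂ := Real.cos_pos_of_mem_Ioo ⟨by linarith, by linarith⟩
    nlinarith
  have b2 : ‖Q r - P (Q r)‖ ≤ Real.sin θ₁ * ‖Q r‖ := by
    have := ContinuousLinearMap.le_of_opNorm_le _ hPQ (Q r)
    rw [_root_.sub_apply, hQ.app, norm_sub_rev] at this
    exact this
  obtain ⟨c2, a2⟩ := sp_angle_le hP (Q r) hq0 θ₁ h1 (by linarith) b2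
  have hqp : 0 < ‖Q r‖ := norm_pos_iff.2 hq0
  have hpp : 0 < ‖P (Q r)‖ := by
    have : 0 < Real.cos θ₁ := Real.cos_pos_of_mem_Ioo ⟨by linarith, by linarith⟩
    have := mul_pos this hqp
    linarith
  have a3 : InnerProductGeometry.angle r (P (Q r)) ≤ θ₁ + θ₂ := by
    have := InnerProductGeometry.angle_le_angle_add_angle r (Q r) (P (Q r))
    linarith
  have c3 : Real.cos (θ₁ + θ₂) ≤ Real.cos (InnerProductGeometry.angle r (P (Q r))) :=
    Real.cos_le_cos_of_nonneg_of_le_pi (InnerProductGeometry.angle_nonneg _ _) (by linarith [Real.pi_pos]) a3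
  have c4 : Real.cos (θ₁ + θ₂) * (‖r‖ * ‖P (Q r)‖) ≤ ‖P r‖ * ‖P (Q r)‖ := by
    calc _ ≤ Real.cos (InnerProductGeometry.angle r (P (Q r))) * (‖r‖ * ‖P (Q r)‖) := by gcongr
      _ = inner ℝ r (P (Q r)) := InnerProductGeometry.cos_angle_mul_norm_mul_norm _ _
      _ = inner ℝ (P r) (P (Q r)) := by
          rw [real_inner_eq_re_inner ℂ, real_inner_eq_re_inner ℂ, hP.symm, hP.app]
      _ ≤ _ := real_inner_le_norm _ _
  have c5 : Real.cos (θ₁ + θ₂) * ‖r‖ ≤ ‖P r‖ := by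
    refine le_of_mul_le_mul_right ?_ hpp
    linarith
  refine abs_le_of_sq_le_sq' ?_ (by positivity) |>.2
  have hc : 0 ≤ Real.cos (θ₁ + θ₂) := Real.cos_nonneg_of_neg_pi_div_two_le_of_le (by linarith) (by linarith)
  have k1 := pow_le_pow_left₀ (by positivity) c5 2
  have k2 := hP.pyth r
  have k3 := Real.sin_sq_add_cos_sq (θ₁ + θ₂)
  have k4 : Real.sin (θ₁ + θ₂) ^ 2 = 1 - Real.cos (θ₁ + θ₂) ^ 2 := by linarith
  rw [mul_pow] at k1 ⊢
  rw [k4]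
  nlinarith

lemma sp_triangle {P Q R : H →L[ℂ] H} (hP : spIsProj P) (hQ : spIsProj Q) (hR : spIsProj R)
    (θ₁ θ₂ : ℝ) (h1 : 0 ≤ θ₁) (h2 : 0 ≤ θ₂) (h : θ₁ + θ₂ ≤ π / 2)
    (hPQ : ‖P - Q‖ ≤ Real.sin θ₁) (hQR : ‖Q - R‖ ≤ Real.sin θ₂) : ‖P - R‖ ≤ Real.sin (θ₁ + θ₂) := by
  have hs : 0 ≤ Real.sin (θ₁ + θ₂) := Real.sin_nonneg_of_nonneg_of_le_pi (by linarith) (by linarith [Real.pi_pos])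
  refine sp_diff_le hP hR _ hs ?_ (sp_triangle_half hP hQ hR θ₁ θ₂ h1 h2 h hPQ hQR)
  have h3 := sp_triangle_half hR hQ hP θ₂ θ₁ h2 h1 (by linarith) (by rwa [norm_sub_rev]) (by rwa [norm_sub_rev])
  rw [add_comm] at h3
  rw [← norm_star, star_mul, hR.compl.1.star_eq, hP.1.star_eq]
  exact h3

lemma sp_disc (P : ℝ → H →L[ℂ] H) (hP : ∀ t ∈ Icc (0:ℝ) 1, spIsProj (P t)) (f : ℝ → ℝ) (hf0 : f 0 = 0)
    (K : ℝ) (hK : 0 ≤ K)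
    (hstep : ∀ s t : ℝ, 0 ≤ s → s ≤ t → t ≤ 1 → ‖P s - P t‖ ≤ f t - f s)
    (hlip : ∀ s t : ℝ, 0 ≤ s → s ≤ t → t ≤ 1 → f t - f s ≤ K * (t - s))
    (hf1 : f 1 < π / 2) : ‖P 0 - P 1‖ ≤ Real.sin (f 1) := by
  have hmono : ∀ s t : ℝ, 0 ≤ s → s ≤ t → t ≤ 1 → f s ≤ f t := fun s t a b c => by
    have := (norm_nonneg _).trans (hstep s t a b c); linarith
  have claim : ∀ ε : ℝ, 0 < ε → ε ≤ 1 → (1 + ε) * f 1 ≤ π / 2 → ‖P 0 - P 1‖ ≤ Real.sin ((1 + ε) * f 1) := by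
    intro ε hε hε1 hb
    have hsm : ∀ y : ℝ, 0 ≤ y → y ≤ ε / 2 → y ≤ Real.sin ((1 + ε) * y) := by
      intro y hy0 hy
      rcases hy0.eq_or_lt with rfl | hy0
      · simp
      have h1 := Real.sin_gt_sub_cube (x := (1 + ε) * y) (by positivity)
      have h3 : (1 + ε) ^ 3 ≤ 8 := by
        have := pow_le_pow_left₀ (by positivity) (show 1 + ε ≤ 2 by linarith) 3
        norm_num at this ⊢; exact this
      have h4 : y ^ 2 ≤ ε / 2 * (ε / 2) := by nlinarith
      have h5 : ((1 + ε) * y) ^ 3 ≤ 8 * (ε / 2 * (ε / 2)) * y := by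
        calc ((1 + ε) * y) ^ 3 = (1 + ε) ^ 3 * y ^ 2 * y := by ring
          _ ≤ _ := by gcongr
      nlinarith [mul_pos hε hy0]
    obtain ⟨n, hn⟩ := exists_nat_gt (max (K / (ε / 2)) 0)
    have hn0 : (0:ℝ) < n := (le_max_right _ _).trans_lt hn
    have hnK : K * (1 / n) ≤ ε / 2 := by
      have := (le_max_left _ _).trans_lt hn
      rw [div_lt_iff₀ (by positivity)] at this
      rw [mul_one_div, div_le_iff₀ hn0]
      linarith
    have ind : ∀ k : ℕ, k ≤ n → ‖P 0 - P (k / n)‖ ≤ Real.sin ((1 + ε) * f (k / n)) := by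
      intro k
      induction k with
      | zero => intro _; simp [hf0]
      | succ k ih =>
        intro hk
        have hk' : ((k + 1 : ℕ) : ℝ) ≤ n := by exact_mod_cast hk
        push_cast at hk' ⊢
        have t0 : (0:ℝ) ≤ k / n := by positivity
        have t1 : (k:ℝ) / n ≤ (k + 1) / n := by gcongr; linarith
        have t2 : ((k:ℝ) + 1) / n ≤ 1 := by rw [div_le_one hn0]; exact hk'
        have s1 := hstep _ _ t0 t1 t2
        have s2 := hlip _ _ t0 t1 t2
        have s3 := hmono _ _ t0 t1 t2
        have s4 : 0 ≤ f (k / n) := hf0 ▸ hmono 0 _ le_rfl t0 (t1.trans t2)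
        have s5 := hmono _ _ (t0.trans t1) t2 le_rfl
        have s6 : ((k:ℝ) + 1) / n - k / n = 1 / n := by ring
        rw [s6] at s2
        have s7 := hsm _ (sub_nonneg.2 s3) (s2.trans hnK)
        have key := sp_triangle (hP 0 (by simp)) (hP _ ⟨t0, t1.trans t2⟩) (hP _ ⟨t0.trans t1, t2⟩)
          ((1 + ε) * f (k / n)) ((1 + ε) * (f ((k + 1) / n) - f (k / n))) (by positivity)
          (mul_nonneg (by positivity) (sub_nonneg.2 s3)) (by nlinarith) (ih (by omega)) (s1.trans s7)
        convert key using 2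
        ring
    have := ind n le_rfl
    rwa [div_self hn0.ne'] at this
  have hlim : Filter.Tendsto (fun ε : ℝ => Real.sin ((1 + ε) * f 1)) (nhdsWithin 0 (Ioi 0)) (nhds (Real.sin (f 1))) := by
    have : Continuous (fun ε : ℝ => Real.sin ((1 + ε) * f 1)) := by fun_prop
    have := this.tendsto 0
    simp only [add_zero, one_mul] at this
    exact this.mono_left nhdsWithin_le_nhds
  refine ge_of_tendsto hlim ?_
  have e1 : ∀ᶠ ε : ℝ in nhds 0, (1 + ε) * f 1 < π / 2 := by
    have : Continuous (fun ε : ℝ => (1 + ε) * f 1) := by fun_prop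
    refine this.tendsto 0 |>.eventually_lt_const ?_
    simpa using hf1
  have e2 : ∀ᶠ ε : ℝ in nhds 0, ε < 1 := eventually_lt_nhds one_pos
  filter_upwards [self_mem_nhdsWithin, e1.filter_mono nhdsWithin_le_nhds, e2.filter_mono nhdsWithin_le_nhds] with ε h1 h2 h3
  exact claim ε h1 h3.le h2.le

end projections


section spectral

variable {H : Type*} [NormedAddCommGroup H] [InnerProductSpace ℂ H] [CompleteSpace H]

lemma sp_spec_re {B : H →L[ℂ] H} (hB : IsSelfAdjoint B) {z : ℂ} (hz : z ∈ spectrum ℂ B) : z.re ∈ spectrum ℝ B := by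
  rw [← spectrum.algebraMap_mem_iff ℂ]
  have := sp_im_zero hB hz
  convert hz
  apply Complex.ext <;> simp [this]

lemma sp_proj_eq {B : H →L[ℂ] H} (hB : IsSelfAdjoint B) (S : Set ℝ) : spectralProj B S = cfc (spChi S) B := by
  unfold spectralProj
  rw [cfc_real_eq_complex]
  rfl

lemma sp_chi_cont {B : H →L[ℂ] H} (hB : IsSelfAdjoint B) (S : Set ℝ)
    (h : ContinuousOn (Set.indicator S (fun _ => (1:ℝ))) (spectrum ℝ B)) : ContinuousOn (spChi S) (spectrum ℂ B) := by
  unfold spChi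
  refine Complex.continuous_ofReal.comp_continuousOn ?_
  exact h.comp Complex.continuous_re.continuousOn fun z hz => sp_spec_re hB hz

lemma sp_ind_cont (S σ : Set ℝ) (δ : ℝ) (hδ : 0 < δ) (h : ∀ x ∈ σ, ∀ y ∈ σ, x ∈ S → y ∉ S → δ ≤ |x - y|) :
    ContinuousOn (Set.indicator S (fun _ => (1:ℝ))) σ := by
  rw [Metric.continuousOn_iff]
  intro b hb ε hε
  refine ⟨δ, hδ, fun a ha hab => ?_⟩
  rw [Real.dist_eq] at hab
  by_cases h1 : a ∈ S <;> by_cases h2 : b ∈ S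
  · simpa [h1, h2] using hε
  · exact absurd (h a ha b hb h1 h2) (not_le.2 hab)
  · rw [abs_sub_comm] at hab
    exact absurd (h b hb a ha h2 h1) (not_le.2 hab)
  · simpa [h1, h2] using hε

lemma sp_compl {B : H →L[ℂ] H} (hB : IsSelfAdjoint B) (S : Set ℝ)
    (h : ContinuousOn (Set.indicator S (fun _ => (1:ℝ))) (spectrum ℝ B)) :
    1 - spectralProj B S = spectralProj B Sᶜ := by
  unfold spectralProj
  rw [← cfc_one ℝ B, ← cfc_sub _ _ B (by fun_prop) h]
  congr 1
  ext x
  by_cases hx : x ∈ S <;> simp [hx]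

lemma sp_isProj {B : H →L[ℂ] H} (hB : IsSelfAdjoint B) (S : Set ℝ)
    (h : ContinuousOn (Set.indicator S (fun _ => (1:ℝ))) (spectrum ℝ B)) : spIsProj (spectralProj B S) := by
  refine ⟨cfc_predicate _ _, ?_⟩
  unfold spectralProj
  rw [← cfc_mul _ _ B h h]
  congr 1
  ext x
  by_cases hx : x ∈ S <;> simp [hx]

lemma sp_spec_pert {A E : H →L[ℂ] H} (hA : IsSelfAdjoint A) (l : ℝ) (hl : l ∈ spectrum ℝ (A + E)) :
    ∃ m ∈ spectrum ℝ A, |l - m| ≤ ‖E‖ := by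
  by_contra! hcon
  by_cases hE : E = 0
  · rw [hE, add_zero] at hl
    have := hcon l hl
    simp [hE] at this
  have hEp : 0 < ‖E‖ := norm_pos_iff.2 hE
  have hne : ∀ m ∈ spectrum ℝ A, l - m ≠ 0 := fun m hm h0 => by
    have := hcon m hm
    rw [h0, abs_zero] at this
    linarith
  have hcR : ContinuousOn (fun m : ℝ => (l - m)⁻¹) (spectrum ℝ A) :=
    ContinuousOn.inv₀ (by fun_prop) hne
  set R := cfc (fun m : ℝ => (l - m)⁻¹) A with hR
  have hRn : ‖R‖ < ‖E‖⁻¹ := by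
    refine norm_cfc_lt (by positivity) fun m hm => ?_
    rw [Real.norm_eq_abs, abs_inv]
    exact inv_strictAnti₀ hEp (hcon m hm)
  have hLA : cfc (fun m : ℝ => l - m) A = algebraMap ℝ (H →L[ℂ] H) l - A := by
    rw [cfc_sub _ _ A (by fun_prop) (by fun_prop), cfc_const l A, cfc_id' ℝ A]
  have h1 : (algebraMap ℝ (H →L[ℂ] H) l - A) * R = 1 := by
    rw [← hLA, hR, ← cfc_mul _ _ A (by fun_prop) hcR, ← cfc_one ℝ A]
    exact cfc_congr fun m hm => mul_inv_cancel₀ (hne m hm)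
  have h2 : R * (algebraMap ℝ (H →L[ℂ] H) l - A) = 1 := by
    rw [← hLA, hR, ← cfc_mul _ _ A hcR (by fun_prop), ← cfc_one ℝ A]
    exact cfc_congr fun m hm => inv_mul_cancel₀ (hne m hm)
  have hu : IsUnit (algebraMap ℝ (H →L[ℂ] H) l - A) := ⟨⟨_, R, h1, h2⟩, rfl⟩
  have hRE : ‖R * E‖ < 1 := by
    refine (norm_mul_le _ _).trans_lt ?_
    calc ‖R‖ * ‖E‖ < ‖E‖⁻¹ * ‖E‖ := by gcongr
      _ = 1 := inv_mul_cancel₀ hEp.ne'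
  have hu2 : IsUnit (1 - R * E) := isUnit_one_sub_of_norm_lt_one hRE
  refine hl ?_
  have : algebraMap ℝ (H →L[ℂ] H) l - (A + E) = (algebraMap ℝ (H →L[ℂ] H) l - A) * (1 - R * E) := by
    rw [mul_sub, ← mul_assoc, h1]; simp [sub_sub]
  change IsUnit _
  rw [this]
  exact hu.mul hu2

lemma sp_step [TopologicalSpace.SeparableSpace H] {A B : H →L[ℂ] H} (hA : IsSelfAdjoint A) (hB : IsSelfAdjoint B) (S : Set ℝ)
    (hcA : ContinuousOn (Set.indicator S (fun _ => (1:ℝ))) (spectrum ℝ A))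
    (hcB : ContinuousOn (Set.indicator S (fun _ => (1:ℝ))) (spectrum ℝ B))
    (δ : ℝ) (hδ : 0 < δ)
    (h1 : ∀ x ∈ spectrum ℝ A, ∀ y ∈ spectrum ℝ B, x ∈ S → y ∉ S → δ ≤ |x - y|)
    (h2 : ∀ x ∈ spectrum ℝ A, ∀ y ∈ spectrum ℝ B, x ∉ S → y ∈ S → δ ≤ |x - y|) :
    ‖spectralProj A S - spectralProj B S‖ ≤ (π / 2) * ‖A - B‖ / δ := by
  have hcc : ∀ {C : H →L[ℂ] H}, ContinuousOn (Set.indicator S (fun _ => (1:ℝ))) (spectrum ℝ C) →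
      ContinuousOn (Set.indicator Sᶜ (fun _ => (1:ℝ))) (spectrum ℝ C) := by
    intro C hC
    have : (Set.indicator Sᶜ (fun _ => (1:ℝ))) = fun x => 1 - Set.indicator S (fun _ => (1:ℝ)) x := by
      ext x
      by_cases hx : x ∈ S <;> simp [hx]
    rw [this]
    exact continuousOn_const.sub hC
  refine sp_diff_le (sp_isProj hA S hcA) (sp_isProj hB S hcB) _ (by positivity) ?_ ?_
  · rw [sp_compl hB S hcB, le_div_iff₀' hδ, sp_proj_eq hA, sp_proj_eq hB]
    refine sp_sintheta hA hB S Sᶜ (sp_chi_cont hA _ hcA) (sp_chi_cont hB _ (hcc hcB)) δ hδ ?_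
    intro z hz w hw a b
    exact h1 _ (sp_spec_re hA hz) _ (sp_spec_re hB hw) a b
  · rw [sp_compl hA S hcA, le_div_iff₀' hδ, sp_proj_eq hA, sp_proj_eq hB]
    refine sp_sintheta hA hB Sᶜ S (sp_chi_cont hA _ (hcc hcA)) (sp_chi_cont hB _ hcB) δ hδ ?_
    intro z hz w hw a b
    exact h2 _ (sp_spec_re hA hz) _ (sp_spec_re hB hw) a b

end spectral


lemma sp_log_ineq (a b : ℝ) (hb : 0 < b) (hab : b ≤ a) : 2 * (a - b) / (a + b) ≤ Real.log (a / b) := by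
  have h := Real.le_log_one_add_of_nonneg (x := (a - b) / b) (div_nonneg (by linarith) hb.le)
  have e1 : 1 + (a - b) / b = a / b := by field_simp; ring
  have e2 : 2 * ((a - b) / b) / ((a - b) / b + 2) = 2 * (a - b) / (a + b) := by
    have : a + b ≠ 0 := by linarith
    have h2 : (a - b) / b + 2 = (a + b) / b := by field_simp; ring
    rw [h2]
    field_simp
  rwa [e1, e2] at h

lemma sp_log_lip (a b c : ℝ) (hc : 0 < c) (hcb : c ≤ b) (hab : b ≤ a) : Real.log (a / b) ≤ (a - b) / c := by
  have hb : 0 < b := by linarith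
  have h := Real.log_le_sub_one_of_pos (x := a / b) (div_pos (by linarith) hb)
  have e : a / b - 1 = (a - b) / b := by field_simp
  rw [e] at h
  exact h.trans (div_le_div_of_nonneg_left (by linarith) hc hcb)

lemma sp_main {H : Type*} [NormedAddCommGroup H]
    [InnerProductSpace ℂ H] [CompleteSpace H] [TopologicalSpace.SeparableSpace H]
    (A V : H →L[ℂ] H) (hA : IsSelfAdjoint A) (hV : IsSelfAdjoint V)
    (ω Ω : Set ℝ) (hspec : spectrum ℝ A = ω ∪ Ω)
    (d : ℝ) (hdist : ∀ x ∈ ω, ∀ y ∈ Ω, d ≤ |x - y|) (hdpos : 0 < d)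
    (h2v : 0 < d - 2 * ‖V‖)
    (hf1 : (π / 4) * Real.log (d / (d - 2 * ‖V‖)) < π / 2) :
    ‖spectralProj A ω - spectralProj (A + V) (Metric.thickening (d / 2) ω)‖ ≤
        Real.sin ((π / 4) * Real.log (d / (d - 2 * ‖V‖))) := by
  set v := ‖V‖ with hv
  have hv0 : 0 ≤ v := norm_nonneg _
  set U := Metric.thickening (d / 2) ω with hU
  have hUmem : ∀ x, x ∈ U ↔ ∃ m ∈ ω, |x - m| < d / 2 := fun x => by
    rw [hU, Metric.mem_thickening_iff]; simp [Real.dist_eq]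
  have e0 : spectralProj A ω = spectralProj A U := by
    unfold spectralProj
    refine cfc_congr fun x hx => ?_
    rw [hspec] at hx
    by_cases hxω : x ∈ ω
    · have : x ∈ U := (hUmem x).2 ⟨x, hxω, by simpa using hdpos⟩
      simp [hxω, this]
    · have hxΩ : x ∈ Ω := hx.resolve_left hxω
      have : x ∉ U := by
        rw [hUmem]
        rintro ⟨m, hm, h⟩
        have := hdist m hm x hxΩ
        rw [abs_sub_comm] at this
        linarith
      simp [hxω, this]
  set B : ℝ → H →L[ℂ] H := fun t => A + (t : ℂ) • V with hBdef
  have hBs : ∀ t, IsSelfAdjoint (B t) := fun t => hA.add (IsSelfAdjoint.smul (Complex.conj_ofReal t) hV)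
  have hnear : ∀ t, 0 ≤ t → t ≤ 1 → ∀ x ∈ spectrum ℝ (B t),
      (x ∈ U ∧ ∃ m ∈ ω, |x - m| ≤ t * v) ∨ (x ∉ U ∧ ∃ m ∈ Ω, |x - m| ≤ t * v) := by
    intro t ht0 ht1 x hx
    obtain ⟨m, hm, h⟩ := sp_spec_pert hA x hx
    rw [norm_smul, Complex.norm_real, Real.norm_of_nonneg ht0] at h
    have htv : t * v < d / 2 := by nlinarith
    rw [hspec] at hm
    rcases hm with hm | hm
    · exact Or.inl ⟨(hUmem x).2 ⟨m, hm, h.trans_lt htv⟩, m, hm, h⟩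
    · refine Or.inr ⟨?_, m, hm, h⟩
      rw [hUmem]
      rintro ⟨m', hm', h'⟩
      have h1 := hdist m' hm' m hm
      have h2 := abs_sub_le m' x m
      rw [abs_sub_comm m' x] at h2
      have : t * v < d / 2 := htv
      linarith [h.trans_lt htv]
  have hsep : ∀ s t, 0 ≤ s → s ≤ 1 → 0 ≤ t → t ≤ 1 → ∀ x ∈ spectrum ℝ (B s), ∀ y ∈ spectrum ℝ (B t),
      x ∈ U → y ∉ U → d - (s + t) * v ≤ |x - y| := by
    intro s t hs0 hs1 ht0 ht1 x hx y hy hxU hyU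
    rcases hnear s hs0 hs1 x hx with ⟨_, m, hm, h⟩ | ⟨h, _⟩
    swap
    · exact absurd hxU h
    rcases hnear t ht0 ht1 y hy with ⟨h', _⟩ | ⟨_, m', hm', h'⟩
    · exact absurd h' hyU
    have h1 := hdist m hm m' hm'
    have h2 := abs_sub_le m x m'
    have h3 := abs_sub_le x y m'
    rw [abs_sub_comm m x] at h2
    linarith
  have hpos : ∀ s t, 0 ≤ s → s ≤ 1 → 0 ≤ t → t ≤ 1 → 0 < d - (s + t) * v := by
    intro s t _ _ _ _
    nlinarith
  have hcont : ∀ t, 0 ≤ t → t ≤ 1 → ContinuousOn (Set.indicator U (fun _ => (1:ℝ))) (spectrum ℝ (B t)) :=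
    fun t h0 h1 => sp_ind_cont _ _ _ (hpos t t h0 h1 h0 h1) (hsep t t h0 h1 h0 h1)
  set f : ℝ → ℝ := fun t => (π / 4) * Real.log (d / (d - 2 * t * v)) with hf
  have hb : ∀ t, t ≤ 1 → d - 2 * v ≤ d - 2 * t * v := fun t ht => by nlinarith
  have hfd : ∀ s t, 0 ≤ s → s ≤ t → t ≤ 1 → f t - f s = (π / 4) * Real.log ((d - 2 * s * v) / (d - 2 * t * v)) := by
    intro s t hs hst ht
    have k1 := hb t ht
    have k2 := hb s (hst.trans ht)
    simp only [hf]
    rw [Real.log_div (by linarith) (by linarith), Real.log_div (by linarith) (by linarith), Real.log_div (by linarith) (by linarith)]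
    ring
  have key := sp_disc (fun t => spectralProj (B t) U) (fun t ht => sp_isProj (hBs t) U (hcont t ht.1 ht.2)) f
    (by simp [hf, hdpos.ne']) ((π / 4) * (2 * v / (d - 2 * v))) (by positivity) ?_ ?_ ?_
  · simp only [hBdef, hf] at key
    rw [e0]
    simpa using key
  · intro s t hs hst ht
    have hs1 := hst.trans ht
    have ht0 := hs.trans hst
    have hst' := hpos s t hs hs1 ht0 ht
    refine (sp_step (hBs s) (hBs t) U (hcont s hs hs1) (hcont t ht0 ht) _ hst' (hsep s t hs hs1 ht0 ht) ?_).trans ?_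
    · intro x hx y hy hxU hyU
      have := hsep t s ht0 ht hs hs1 y hy x hx hyU hxU
      rw [abs_sub_comm, add_comm s t]
      exact this
    · have en : ‖B s - B t‖ = (t - s) * v := by
        have : B s - B t = ((s - t : ℝ) : ℂ) • V := by
          simp only [hBdef]
          push_cast
          rw [sub_smul]; abel
        rw [this, norm_smul, Complex.norm_real, Real.norm_eq_abs, abs_sub_comm, abs_of_nonneg (by linarith)]
      rw [en, hfd s t hs hst ht]
      have := sp_log_ineq (d - 2 * s * v) (d - 2 * t * v) (by linarith [hb t ht]) (by nlinarith)
      refine le_trans (le_of_eq ?_) (mul_le_mul_of_nonneg_left this (by positivity))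
      have e3 : (d - 2 * s * v) + (d - 2 * t * v) = 2 * (d - (s + t) * v) := by ring
      rw [e3]
      field_simp
      ring
  · intro s t hs hst ht
    rw [hfd s t hs hst ht]
    have := sp_log_lip (d - 2 * s * v) (d - 2 * t * v) (d - 2 * v) h2v (hb t ht) (by nlinarith)
    refine (mul_le_mul_of_nonneg_left this (by positivity)).trans (le_of_eq ?_)
    ring
  · simpa [hf] using hf1


end spmain

/-- Let `A, V` be bounded self-adjoint operators, `spec(A) = ω ∪ Ω` with
`d := dist(ω,Ω) > 0`, and `‖V‖ < (sinh 1 / e)·d`. Then, with `P` the spectral projection of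
`A` associated with `ω` and `Q` the spectral projection of `A + V` associated with the part of
its spectrum in the open `d/2`-neighborhood `O_{d/2}(ω)` of `ω`,
`‖P − Q‖ ≤ sin((π/4)·log(d/(d − 2‖V‖))) < 1`. -/
theorem subspace_perturbation_general {H : Type*} [NormedAddCommGroup H]
    [InnerProductSpace ℂ H] [CompleteSpace H] [TopologicalSpace.SeparableSpace H]
    (A V : H →L[ℂ] H) (hA : IsSelfAdjoint A) (hV : IsSelfAdjoint V)
    (ω Ω : Set ℝ) (hω : ω.Nonempty) (hΩ : Ω.Nonempty)
    (hωc : IsClosed ω) (hΩc : IsClosed Ω)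
    (hspec : spectrum ℝ A = ω ∪ Ω)
    (d : ℝ) (hd : d = setDist ω Ω) (hdpos : 0 < d)
    (hVn : ‖V‖ < (Real.sinh 1 / Real.exp 1) * d) :
    ‖spectralProj A ω - spectralProj (A + V) (Metric.thickening (d / 2) ω)‖ ≤
        Real.sin ((Real.pi / 4) * Real.log (d / (d - 2 * ‖V‖))) ∧
      Real.sin ((Real.pi / 4) * Real.log (d / (d - 2 * ‖V‖))) < 1 := by
  have he : (Real.sinh 1 / Real.exp 1) * d = (d - Real.exp (-2) * d) / 2 := by
    rw [Real.sinh_eq, show (-2:ℝ) = -1 + -1 by norm_num, Real.exp_add, Real.exp_neg]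
    have := (Real.exp_pos 1).ne'
    field_simp
  rw [he] at hVn
  have hep : 0 < Real.exp (-2) * d := mul_pos (Real.exp_pos _) hdpos
  have h2v : 0 < d - 2 * ‖V‖ := by linarith
  have hdist : ∀ x ∈ ω, ∀ y ∈ Ω, d ≤ |x - y| := by
    intro x hx y hy
    rw [hd, ← Real.dist_eq]
    refine csInf_le ⟨0, ?_⟩ ⟨x, hx, y, hy, rfl⟩
    rintro _ ⟨a, _, b, _, rfl⟩
    exact dist_nonneg
  have hlog : Real.log (d / (d - 2 * ‖V‖)) < 2 := by
    rw [Real.log_lt_iff_lt_exp (by positivity), div_lt_iff₀ h2v]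
    have h1 : Real.exp 2 * (Real.exp (-2) * d) = d := by
      rw [← mul_assoc, ← Real.exp_add]; simp
    nlinarith [Real.exp_pos 2]
  have hlog0 : 0 ≤ Real.log (d / (d - 2 * ‖V‖)) := by
    refine Real.log_nonneg ?_
    rw [le_div_iff₀ h2v]
    linarith [norm_nonneg V]
  have hf1 : (Real.pi / 4) * Real.log (d / (d - 2 * ‖V‖)) < Real.pi / 2 := by
    nlinarith [Real.pi_pos]
  have hf0 : 0 ≤ (Real.pi / 4) * Real.log (d / (d - 2 * ‖V‖)) := by
    have := Real.pi_pos
    positivity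
  refine ⟨sp_main A V hA hV ω Ω hspec d hdist hdpos h2v hf1, ?_⟩
  rw [← Real.sin_pi_div_two]
  exact Real.sin_lt_sin_of_lt_of_le_pi_div_two (by linarith [Real.pi_pos]) le_rfl hf1
end
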